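/- Fix l ∈ {1,…,N}. Suppose y ∈ D satisfies y(a) = y^a and y_i(b) = y_i^b for all i ≠ l (with y_l(b) free), and y is a local minimizer (with respect to ‖·‖_{1,∞}) of J over all trajectories in D satisfying these conditions. Assume in addition that for each i = 1, …, N the function x ↦ ∂L/∂v_i(x, y(x), C D_γ^{α,β} y(x)) is absolutely continuous on [a,b] and its combined Riemann–Liouville derivative D_{1−γ}^{β,α} exists and is continuous on [a,b]. Then y satisfies the Euler–Lagrange equations ∂L/∂y_i(x, y(x), C D_γ^{α,β} y(x)) + D_{1−γ}^{β,α}( ∂L/∂v_i(·, y(·), C D_γ^{α,β} y(·)) )(x) = 0 for i = 1,…,N and all x ∈ [a,b], together with the transversality condition [ γ·(xI_b^{1−α}(∂L/∂v_l(·, y(·), C D_γ^{α,β} y(·))))(x) − (1−γ)·(aI_x^{1−β}(∂L/∂v_l(·, y(·), C D_γ^{α,β} y(·))))(x) ] evaluated at x = b equals 0. -/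

import Mathlib

open MeasureTheory Set Real

noncomputable section

/-- Left Riemann–Liouville fractional integral `(ₐIₓ^α f)(x)`. -/
def leftRLI (a α : ℝ) (f : ℝ → ℝ) (x : ℝ) : ℝ :=
  (1 / Real.Gamma α) * ∫ t in a..x, (x - t) ^ (α - 1) * f t

/-- Right Riemann–Liouville fractional integral `(ₓI_b^α f)(x)`. -/
def rightRLI (b α : ℝ) (f : ℝ → ℝ) (x : ℝ) : ℝ :=
  (1 / Real.Gamma α) * ∫ t in x..b, (t - x) ^ (α - 1) * f t

/-- A function is absolutely continuous on `[a, b]` iff it is the integral of its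
(almost everywhere defined) derivative. -/
def AbsolutelyContinuousOn (f : ℝ → ℝ) (a b : ℝ) : Prop :=
  IntervalIntegrable (deriv f) volume a b ∧
    ∀ x ∈ Icc a b, f x = f a + ∫ t in a..x, deriv f t

/-- Left Caputo fractional derivative `(ᶜₐDₓ^α f)(x)`. -/
def caputoLeft (a α : ℝ) (f : ℝ → ℝ) (x : ℝ) : ℝ :=
  (1 / Real.Gamma (1 - α)) * ∫ t in a..x, (x - t) ^ (-α) * deriv f t

/-- Right Caputo fractional derivative `(ᶜₓD_b^α f)(x)`. -/
def caputoRight (b α : ℝ) (f : ℝ → ℝ) (x : ℝ) : ℝ :=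
  -(1 / Real.Gamma (1 - α)) * ∫ t in x..b, (t - x) ^ (-α) * deriv f t

/-- Left Riemann–Liouville fractional derivative `(ₐDₓ^α g)(x) = d/dx (ₐIₓ^{1-α} g)(x)`. -/
def rlLeftD (a α : ℝ) (g : ℝ → ℝ) (x : ℝ) : ℝ :=
  deriv (leftRLI a (1 - α) g) x

/-- Right Riemann–Liouville fractional derivative `(ₓD_b^α g)(x) = -d/dx (ₓI_b^{1-α} g)(x)`. -/
def rlRightD (b α : ℝ) (g : ℝ → ℝ) (x : ℝ) : ℝ :=
  -deriv (rightRLI b (1 - α) g) x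

/-- Combined Caputo fractional derivative `ᶜD_γ^{α,β} f = γ ᶜₐDₓ^α f + (1-γ) ᶜₓD_b^β f`. -/
def combCaputo (a b α β γ : ℝ) (f : ℝ → ℝ) (x : ℝ) : ℝ :=
  γ * caputoLeft a α f x + (1 - γ) * caputoRight b β f x

/-- Combined Riemann–Liouville derivative `D_{1-γ}^{β,α} g = (1-γ) ₐDₓ^β g + γ ₓD_b^α g`. -/
def combRL (a b α β γ : ℝ) (g : ℝ → ℝ) (x : ℝ) : ℝ :=
  (1 - γ) * rlLeftD a β g x + γ * rlRightD b α g x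

/-- Componentwise combined Caputo derivative of a vector-valued function. -/
def combCaputoVec (a b α β γ : ℝ) {N : ℕ} (y : ℝ → Fin N → ℝ) (x : ℝ) : Fin N → ℝ :=
  fun i => combCaputo a b α β γ (fun t => y t i) x

/-- The class `𝐃` of trajectories: each component absolutely continuous on `[a,b]` and the
combined Caputo derivative exists and is continuous on `[a,b]`. -/
def memD (a b α β γ : ℝ) {N : ℕ} (y : ℝ → Fin N → ℝ) : Prop :=
  (∀ i, AbsolutelyContinuousOn (fun t => y t i) a b) ∧
    ∀ i, ContinuousOn (fun x => combCaputo a b α β γ (fun t => y t i) x) (Icc a b)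

/-- The norm `‖y‖_{1,∞} = max_{[a,b]} ‖y(x)‖ + max_{[a,b]} ‖ᶜD_γ^{α,β} y(x)‖`. -/
def norm1inf (a b α β γ : ℝ) {N : ℕ} (y : ℝ → Fin N → ℝ) : ℝ :=
  sSup ((fun x => ‖y x‖) '' Icc a b) +
    sSup ((fun x => ‖combCaputoVec a b α β γ y x‖) '' Icc a b)

/-- Partial derivative of a Lagrangian `L(x, y, v)` w.r.t. the `i`-th component of `y`. -/
def pdY {N : ℕ} (L : ℝ → (Fin N → ℝ) → (Fin N → ℝ) → ℝ) (i : Fin N) (x : ℝ)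
    (u v : Fin N → ℝ) : ℝ :=
  deriv (fun s => L x (Function.update u i s) v) (u i)

/-- Partial derivative of a Lagrangian `L(x, y, v)` w.r.t. the `i`-th component of `v`. -/
def pdV {N : ℕ} (L : ℝ → (Fin N → ℝ) → (Fin N → ℝ) → ℝ) (i : Fin N) (x : ℝ)
    (u v : Fin N → ℝ) : ℝ :=
  deriv (fun s => L x u (Function.update v i s)) (v i)

/-- Convolution `∫ k (x - t) q t dt` on the line. -/
def cv (k q : ℝ → ℝ) (x : ℝ) : ℝ := ∫ t, k (x - t) * q t

/-- The integrand of `cv k q x` is integrable. -/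
def CvAt (k q : ℝ → ℝ) (x : ℝ) : Prop := Integrable (fun t => k (x - t) * q t)

lemma cv_eq_convolution (k q : ℝ → ℝ) :
    cv k q = convolution k q (ContinuousLinearMap.mul ℝ ℝ) volume := by
  ext x
  rw [convolution_mul_swap]; rfl

lemma cvAt_iff_convolutionExistsAt (k q : ℝ → ℝ) (x : ℝ) :
    CvAt k q x ↔ ConvolutionExistsAt k q x (ContinuousLinearMap.mul ℝ ℝ) volume := by
  unfold CvAt ConvolutionExistsAt
  rw [← integrable_comp_sub_left (fun t => (ContinuousLinearMap.mul ℝ ℝ) (k t) (q (x - t))) x]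
  simp

lemma cvAt_ae {k q : ℝ → ℝ} (hk : Integrable k) (hq : Integrable q) : ∀ᵐ x, CvAt k q x := by
  simp only [cvAt_iff_convolutionExistsAt]
  exact hk.ae_convolution_exists _ hq

lemma integrable_cv {k q : ℝ → ℝ} (hk : Integrable k) (hq : Integrable q) :
    Integrable (cv k q) := by
  rw [cv_eq_convolution]
  exact hk.integrable_convolution _ hq

lemma abs_cv_le (k q : ℝ → ℝ) (x : ℝ) :
    |cv k q x| ≤ cv (fun s => |k s|) (fun s => |q s|) x := by
  unfold cv
  refine (abs_integral_le_integral_abs).trans_eq ?_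
  simp [abs_mul]

lemma integral_abs_cv_le {k q : ℝ → ℝ} (hk : Integrable k) (hq : Integrable q) :
    ∫ x, |cv k q x| ≤ (∫ s, |k s|) * ∫ s, |q s| := by
  have h := integral_convolution (ContinuousLinearMap.mul ℝ ℝ) hk.abs hq.abs
  rw [← cv_eq_convolution] at h
  refine (integral_mono (integrable_cv hk hq).abs (integrable_cv hk.abs hq.abs)
    (fun x => abs_cv_le k q x)).trans_eq h

lemma cvAt_of_continuous {k q : ℝ → ℝ} (hk : Integrable k) (hq : Continuous q)
    (hc : HasCompactSupport q) (x : ℝ) : CvAt k q x := by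
  rw [cvAt_iff_convolutionExistsAt]
  exact (hc.convolutionExists_right _ hk.locallyIntegrable hq) x

lemma continuous_cv {k q : ℝ → ℝ} (hk : Integrable k) (hq : Continuous q)
    (hc : HasCompactSupport q) : Continuous (cv k q) := by
  rw [cv_eq_convolution]
  exact hc.continuous_convolution_right _ hk.locallyIntegrable hq

lemma cv_comm (k q : ℝ → ℝ) : cv k q = cv q k := by
  ext x
  unfold cv
  rw [← integral_sub_left_eq_self _ volume x]
  simp [mul_comm]

lemma cv_congr_ae {k q q' : ℝ → ℝ} (h : q =ᵐ[volume] q') : cv k q = cv k q' := by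
  rw [cv_eq_convolution, cv_eq_convolution]
  exact convolution_congr _ (ae_eq_refl _) h

lemma cv_add {k q q' : ℝ → ℝ} {x : ℝ} (h : CvAt k q x) (h' : CvAt k q' x) :
    cv k (fun t => q t + q' t) x = cv k q x + cv k q' x := by
  unfold cv
  simp only [mul_add]
  exact integral_add h h'

lemma cv_sub {k q q' : ℝ → ℝ} {x : ℝ} (h : CvAt k q x) (h' : CvAt k q' x) :
    cv k (fun t => q t - q' t) x = cv k q x - cv k q' x := by
  unfold cv
  simp only [mul_sub]
  exact integral_sub h h'

lemma cv_const_mul (k q : ℝ → ℝ) (c x : ℝ) : cv k (fun t => c * q t) x = c * cv k q x := by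
  unfold cv
  rw [← integral_const_mul]
  congr 1; ext t; ring

lemma CvAt.add {k q q' : ℝ → ℝ} {x : ℝ} (h : CvAt k q x) (h' : CvAt k q' x) :
    CvAt k (fun t => q t + q' t) x := by
  unfold CvAt
  simp only [mul_add]
  exact Integrable.add h h'

lemma CvAt.sub {k q q' : ℝ → ℝ} {x : ℝ} (h : CvAt k q x) (h' : CvAt k q' x) :
    CvAt k (fun t => q t - q' t) x := by
  unfold CvAt
  simp only [mul_sub]
  exact Integrable.sub h h'

lemma CvAt.add_kernel {k k' q : ℝ → ℝ} {x : ℝ} (h : CvAt k q x) (h' : CvAt k' q x) :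
    CvAt (fun s => k s + k' s) q x := by
  unfold CvAt
  simp only [add_mul]
  exact Integrable.add h h'

lemma cv_add_kernel {k k' q : ℝ → ℝ} {x : ℝ} (h : CvAt k q x) (h' : CvAt k' q x) :
    cv (fun s => k s + k' s) q x = cv k q x + cv k' q x := by
  unfold cv
  simp only [add_mul]
  exact integral_add h h'

lemma cv_left_comm {k ρ q : ℝ → ℝ} (hk : Integrable k) (hρ : Continuous ρ)
    (hc : HasCompactSupport ρ) (hq : Integrable q) :
    cv k (cv ρ q) = cv ρ (cv k q) := by
  have key : ∀ x, cv (cv ρ q) k x = cv ρ (cv q k) x := by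
    intro x
    simp only [cv_eq_convolution]
    have hρi : Integrable ρ := hρ.integrable_of_hasCompactSupport hc
    refine convolution_assoc _ _ _ _ ?_ hρi.aestronglyMeasurable hq.aestronglyMeasurable
      hk.aestronglyMeasurable ?_ ?_ ?_
    · intro x y z; simp [mul_assoc]
    · exact hρi.ae_convolution_exists _ hq
    · exact hq.norm.ae_convolution_exists _ hk.norm
    · refine HasCompactSupport.convolutionExists_left _ hc.norm hρ.norm ?_ x
      exact (hq.norm.integrable_convolution _ hk.norm).locallyIntegrable
  rw [cv_comm k (cv ρ q), funext key, cv_comm q k]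

/-- Integrable, compactly supported kernels, continuous off a countable set, with at most a
`1 / |s|` singularity at the origin. -/
structure Ker (k : ℝ → ℝ) (C : ℝ) : Prop where
  meas : Measurable k
  integrable : Integrable k
  bound : ∀ s, |s * k s| ≤ C
  cont : ∃ Z : Set ℝ, Z.Countable ∧ ∀ s ∉ Z, ContinuousAt k s
  supp : ∃ B, ∀ s, B ≤ |s| → k s = 0

lemma Ker.nonneg {k : ℝ → ℝ} {C : ℝ} (hk : Ker k C) : 0 ≤ C := by
  simpa using hk.bound 0

lemma Ker.add {k k' : ℝ → ℝ} {C C' : ℝ} (hk : Ker k C) (hk' : Ker k' C') :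
    Ker (fun s => k s + k' s) (C + C') where
  meas := hk.meas.add hk'.meas
  integrable := hk.integrable.add hk'.integrable
  bound s := by
    rw [mul_add]
    exact (abs_add_le _ _).trans (add_le_add (hk.bound s) (hk'.bound s))
  cont := by
    obtain ⟨Z, hZ, h⟩ := hk.cont
    obtain ⟨Z', hZ', h'⟩ := hk'.cont
    refine ⟨Z ∪ Z', hZ.union hZ', fun s hs => ?_⟩
    simp only [mem_union, not_or] at hs
    exact (h s hs.1).add (h' s hs.2)
  supp := by
    obtain ⟨B, h⟩ := hk.supp
    obtain ⟨B', h'⟩ := hk'.supp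
    refine ⟨max B B', fun s hs => ?_⟩
    rw [h s ((le_max_left _ _).trans hs), h' s ((le_max_right _ _).trans hs), add_zero]

lemma Ker.const_mul {k : ℝ → ℝ} {C : ℝ} (hk : Ker k C) (c : ℝ) :
    Ker (fun s => c * k s) (|c| * C) where
  meas := hk.meas.const_mul c
  integrable := hk.integrable.const_mul c
  bound s := by
    rw [mul_left_comm, abs_mul]
    exact mul_le_mul_of_nonneg_left (hk.bound s) (abs_nonneg c)
  cont := by
    obtain ⟨Z, hZ, h⟩ := hk.cont
    exact ⟨Z, hZ, fun s hs => continuousAt_const.mul (h s hs)⟩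
  supp := by
    obtain ⟨B, h⟩ := hk.supp
    exact ⟨B, fun s hs => by rw [h s hs, mul_zero]⟩

lemma Ker.abs_le_div {k : ℝ → ℝ} {C d s : ℝ} (hk : Ker k C) (hd : 0 < d) (hs : d ≤ |s|) :
    |k s| ≤ C / d := by
  rw [le_div_iff₀ hd]
  have := hk.bound s
  rw [abs_mul, mul_comm] at this
  exact (mul_le_mul_of_nonneg_left hs (abs_nonneg _)).trans this

/-- The convolution at `x` exists when `x` is at distance at least `d` from the support of `q`. -/
lemma Ker.cvAt_of_far {k q : ℝ → ℝ} {C d x : ℝ} (hk : Ker k C) (hq : Integrable q) (hd : 0 < d)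
    (h : ∀ t, q t ≠ 0 → d ≤ |x - t|) :
    CvAt k q x ∧ ∫ t, |k (x - t) * q t| ≤ C / d * ∫ t, |q t| := by
  have hb : ∀ t, ‖k (x - t) * q t‖ ≤ C / d * |q t| := by
    intro t
    rw [Real.norm_eq_abs, abs_mul]
    by_cases hq0 : q t = 0
    · simp [hq0]
    · exact mul_le_mul_of_nonneg_right (hk.abs_le_div hd (h t hq0)) (abs_nonneg _)
  have hi : CvAt k q x := by
    refine Integrable.mono' (hq.abs.const_mul (C / d)) ?_ (Filter.Eventually.of_forall hb)
    exact (hk.meas.comp (measurable_const.sub measurable_id)).aestronglyMeasurable.mul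
      hq.aestronglyMeasurable
  refine ⟨hi, ?_⟩
  rw [← integral_const_mul]
  exact integral_mono hi.norm (hq.abs.const_mul _) hb

/-- The commutator of multiplication by `ψ` and convolution with `k`. -/
def cvComm (k ψ f : ℝ → ℝ) (x : ℝ) : ℝ := ∫ t, (ψ t - ψ x) * k (x - t) * f t

lemma continuous_of_lip {ψ : ℝ → ℝ} {Λ : ℝ} (hψ : ∀ s t, |ψ s - ψ t| ≤ Λ * |s - t|) :
    Continuous ψ := by
  refine (LipschitzWith.of_dist_le_mul (K := ⟨|Λ|, abs_nonneg Λ⟩) fun s t => ?_).continuous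
  simp only [Real.dist_eq]
  exact (hψ s t).trans (mul_le_mul_of_nonneg_right (le_abs_self _) (abs_nonneg _))

section
variable {k ψ f : ℝ → ℝ} {C Λ : ℝ}

lemma Ker.comm_bound (hk : Ker k C) (hΛ : 0 ≤ Λ) (hψ : ∀ s t, |ψ s - ψ t| ≤ Λ * |s - t|)
    (x t : ℝ) : ‖(ψ t - ψ x) * k (x - t) * f t‖ ≤ Λ * C * |f t| := by
  rw [norm_mul, Real.norm_eq_abs, Real.norm_eq_abs]
  refine mul_le_mul_of_nonneg_right ?_ (abs_nonneg _)
  rw [abs_mul]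
  calc |ψ t - ψ x| * |k (x - t)| ≤ (Λ * |t - x|) * |k (x - t)| :=
        mul_le_mul_of_nonneg_right (hψ t x) (abs_nonneg _)
    _ = Λ * |(x - t) * k (x - t)| := by rw [abs_mul, abs_sub_comm, mul_assoc]
    _ ≤ Λ * C := mul_le_mul_of_nonneg_left (hk.bound _) hΛ

lemma Ker.comm_meas (hk : Ker k C) (hψ : Continuous ψ) (hf : Integrable f) (x : ℝ) :
    AEStronglyMeasurable (fun t => (ψ t - ψ x) * k (x - t) * f t) :=
  ((hψ.measurable.sub measurable_const).mul
    (hk.meas.comp (measurable_const.sub measurable_id))).aestronglyMeasurable.mul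
      hf.aestronglyMeasurable

lemma Ker.comm_integrable (hk : Ker k C) (hΛ : 0 ≤ Λ)
    (hψ : ∀ s t, |ψ s - ψ t| ≤ Λ * |s - t|) (hf : Integrable f) (x : ℝ) :
    Integrable (fun t => (ψ t - ψ x) * k (x - t) * f t) :=
  Integrable.mono' (hf.abs.const_mul (Λ * C)) (hk.comm_meas (continuous_of_lip hψ) hf x)
    (Filter.Eventually.of_forall (hk.comm_bound hΛ hψ x))

lemma Ker.abs_comm_le (hk : Ker k C) (hΛ : 0 ≤ Λ)
    (hψ : ∀ s t, |ψ s - ψ t| ≤ Λ * |s - t|) (hf : Integrable f) (x : ℝ) :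
    |cvComm k ψ f x| ≤ Λ * C * ∫ t, |f t| := by
  rw [← integral_const_mul]
  exact norm_integral_le_of_norm_le (hf.abs.const_mul _)
    (Filter.Eventually.of_forall (hk.comm_bound hΛ hψ x))

lemma Ker.continuous_comm (hk : Ker k C) (hΛ : 0 ≤ Λ)
    (hψ : ∀ s t, |ψ s - ψ t| ≤ Λ * |s - t|) (hf : Integrable f) :
    Continuous (cvComm k ψ f) := by
  rw [continuous_iff_continuousAt]
  intro x₀
  obtain ⟨Z, hZ, hc⟩ := hk.cont
  have hψc := continuous_of_lip hψ
  refine continuousAt_of_dominated (bound := fun t => Λ * C * |f t|)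
    (Filter.Eventually.of_forall fun x => hk.comm_meas hψc hf x)
    (Filter.Eventually.of_forall fun x => Filter.Eventually.of_forall (hk.comm_bound hΛ hψ x))
    (hf.abs.const_mul _) ?_
  have hn : ∀ᵐ t : ℝ, t ∉ (fun s => x₀ - s) ⁻¹' Z := by
    have : ((fun s => x₀ - s) ⁻¹' Z).Countable :=
      hZ.preimage (fun a b h => by simpa using h)
    exact this.ae_notMem volume
  filter_upwards [hn] with t ht
  refine ContinuousAt.mul (ContinuousAt.mul ?_ ?_) continuousAt_const
  · exact continuousAt_const.sub hψc.continuousAt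
  · exact ContinuousAt.comp (f := fun x => x - t) (hc _ ht) (by fun_prop)

lemma Ker.cvAt_mul (hk : Ker k C) (hΛ : 0 ≤ Λ) (hψ : ∀ s t, |ψ s - ψ t| ≤ Λ * |s - t|)
    (hf : Integrable f) {x : ℝ} (h : CvAt k f x) :
    CvAt k (fun t => ψ t * f t) x ∧
      cv k (fun t => ψ t * f t) x = ψ x * cv k f x + cvComm k ψ f x := by
  have h1 := hk.comm_integrable hΛ hψ hf x
  have h2 := Integrable.const_mul h (ψ x)
  have e : (fun t => k (x - t) * (ψ t * f t)) =
      fun t => ψ x * (k (x - t) * f t) + (ψ t - ψ x) * k (x - t) * f t := by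
    ext t; ring
  constructor
  · unfold CvAt; rw [e]; exact h2.add h1
  · unfold cv cvComm; rw [e, integral_add h2 h1, integral_const_mul]

lemma Ker.cvAt_mul_of_eq_zero (hk : Ker k C) (hΛ : 0 ≤ Λ)
    (hψ : ∀ s t, |ψ s - ψ t| ≤ Λ * |s - t|)
    (hf : Integrable f) {x : ℝ} (h : ψ x = 0) :
    CvAt k (fun t => ψ t * f t) x ∧ cv k (fun t => ψ t * f t) x = cvComm k ψ f x := by
  have h1 := hk.comm_integrable hΛ hψ hf x
  have e : (fun t => k (x - t) * (ψ t * f t)) =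
      fun t => (ψ t - ψ x) * k (x - t) * f t := by
    ext t; rw [h]; ring
  constructor
  · unfold CvAt; rw [e]; exact h1
  · unfold cv cvComm; rw [e]

/-- The continuous representative of `cv k (ψ f)` when `cv k f = φ` where `ψ ≠ 0`. -/
lemma Ker.cv_mul_ae (hk : Ker k C) (hΛ : 0 ≤ Λ)
    (hψ : ∀ s t, |ψ s - ψ t| ≤ Λ * |s - t|) (hf : Integrable f) {φ : ℝ → ℝ}
    (hφ : ∀ᵐ x, ψ x ≠ 0 → cv k f x = φ x) :
    cv k (fun t => ψ t * f t) =ᵐ[volume] fun x => ψ x * φ x + cvComm k ψ f x := by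
  filter_upwards [hφ, cvAt_ae hk.integrable hf] with x hx h
  rw [(hk.cvAt_mul hΛ hψ hf h).2]
  by_cases h0 : ψ x = 0
  · simp [h0]
  · rw [hx h0]

lemma Ker.hasCompactSupport_comm (hk : Ker k C) {B : ℝ} (hψ0 : ∀ x, B ≤ |x| → ψ x = 0) :
    HasCompactSupport (cvComm k ψ f) := by
  obtain ⟨B', hB'⟩ := hk.supp
  refine HasCompactSupport.intro (isCompact_closedBall (0 : ℝ) (|B| + |B'|)) fun x hx => ?_
  simp only [Metric.mem_closedBall, dist_zero_right, Real.norm_eq_abs, not_le] at hx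
  unfold cvComm
  have : ∀ t, (ψ t - ψ x) * k (x - t) * f t = 0 := by
    intro t
    have hx0 : ψ x = 0 := hψ0 x (by linarith [le_abs_self B, abs_nonneg B'])
    rcases le_or_gt B |t| with h | h
    · rw [hx0, hψ0 t h]; simp
    · have : k (x - t) = 0 := by
        apply hB'
        have := abs_sub_abs_le_abs_sub x t
        linarith [le_abs_self B, le_abs_self B']
      rw [this]; simp
  simp [this]
end

/-- Standard mollifier of radius `r`. -/
def bump (r : ℝ) (hr : 0 < r) : ContDiffBump (0 : ℝ) :=
  ⟨r / 2, r, by positivity, by linarith⟩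

/-- Mollification. -/
def moll (r : ℝ) (hr : 0 < r) (q : ℝ → ℝ) : ℝ → ℝ := cv ((bump r hr).normed volume) q

section
variable {r : ℝ} (hr : 0 < r) {q : ℝ → ℝ}

lemma bump_integral : ∫ x, |(bump r hr).normed volume x| = 1 := by
  simp_rw [abs_of_nonneg ((bump r hr).nonneg_normed (μ := volume) _)]
  exact (bump r hr).integral_normed

lemma bump_integrable : Integrable ((bump r hr).normed volume) :=
  (bump r hr).integrable_normed

lemma continuous_moll (hq : Integrable q) : Continuous (moll r hr q) := by
  unfold moll
  rw [cv_comm]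
  exact continuous_cv hq (bump r hr).continuous_normed (bump r hr).hasCompactSupport_normed

lemma moll_eq_lsmul :
    moll r hr q = convolution ((bump r hr).normed volume) q (ContinuousLinearMap.lsmul ℝ ℝ)
      volume := by
  unfold moll; rw [cv_eq_convolution]; rfl

lemma integral_abs_moll_le (hq : Integrable q) : ∫ x, |moll r hr q x| ≤ ∫ x, |q x| := by
  have := integral_abs_cv_le (bump_integrable hr) hq
  rwa [bump_integral, one_mul] at this

lemma moll_support {x : ℝ} (h : moll r hr q x ≠ 0) : ∃ t, |x - t| < r ∧ q t ≠ 0 := by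
  by_contra! hc
  refine h ?_
  unfold moll cv
  have : ∀ t, (bump r hr).normed volume (x - t) * q t = 0 := by
    intro t
    rcases lt_or_ge |x - t| r with h1 | h1
    · rw [hc t h1, mul_zero]
    · have : x - t ∉ Function.support ((bump r hr).normed volume) := by
        rw [ContDiffBump.support_normed_eq]
        simpa [bump] using h1
      rw [Function.notMem_support.1 this, zero_mul]
  simp [this]

lemma abs_moll_sub_le {ε x : ℝ} (hm : AEStronglyMeasurable q)
    (h : ∀ t, |t - x| < r → |q t - q x| ≤ ε) : |moll r hr q x - q x| ≤ ε := by
  rw [moll_eq_lsmul, ← Real.dist_eq]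
  refine ContDiffBump.dist_normed_convolution_le hm fun t ht => ?_
  rw [Real.dist_eq]
  exact h t (by simpa [Real.dist_eq, bump] using ht)

lemma abs_moll_le {M : ℝ} (h : ∀ᵐ x, |q x| ≤ M) (x : ℝ) : |moll r hr q x| ≤ M := by
  have h1 : ∀ᵐ t, ‖q (x - t) * (bump r hr).normed volume t‖ ≤ M * (bump r hr).normed volume t := by
    have := (quasiMeasurePreserving_sub_left_of_right_invariant (volume : Measure ℝ) x).ae h
    filter_upwards [this] with t ht
    rw [norm_mul, Real.norm_eq_abs, Real.norm_eq_abs,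
      abs_of_nonneg ((bump r hr).nonneg_normed (μ := volume) t)]
    exact mul_le_mul_of_nonneg_right ht ((bump r hr).nonneg_normed _)
  have := norm_integral_le_of_norm_le ((bump_integrable hr).const_mul M) h1
  rw [integral_const_mul, ContDiffBump.integral_normed, mul_one] at this
  unfold moll
  rw [cv_comm]
  exact this

lemma moll_cv {k : ℝ → ℝ} (hk : Integrable k) (hq : Integrable q) :
    cv k (moll r hr q) = moll r hr (cv k q) :=
  cv_left_comm hk (bump r hr).continuous_normed (bump r hr).hasCompactSupport_normed hq

lemma moll_congr {q' : ℝ → ℝ} (h : q =ᵐ[volume] q') : moll r hr q = moll r hr q' :=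
  cv_congr_ae h

lemma moll_sub {q' : ℝ → ℝ} (hq : Integrable q) (hq' : Integrable q') (x : ℝ) :
    moll r hr (fun t => q t - q' t) x = moll r hr q x - moll r hr q' x := by
  have : ∀ {p : ℝ → ℝ}, Integrable p → CvAt ((bump r hr).normed volume) p x := by
    intro p hp
    rw [cvAt_iff_convolutionExistsAt]
    exact HasCompactSupport.convolutionExists_left _ (bump r hr).hasCompactSupport_normed
      (bump r hr).continuous_normed hp.locallyIntegrable x
  exact cv_sub (this hq) (this hq')
end

lemma exists_moll_uniform {Φ : ℝ → ℝ} (hΦ : Continuous Φ) (hc : HasCompactSupport Φ) {ε : ℝ}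
    (hε : 0 < ε) : ∃ r₀ > 0, ∀ r (hr : 0 < r), r ≤ r₀ → ∀ x, |moll r hr Φ x - Φ x| ≤ ε := by
  obtain ⟨δ, hδ, h⟩ := Metric.uniformContinuous_iff.1
    (hc.uniformContinuous_of_continuous hΦ) ε hε
  refine ⟨δ, hδ, fun r hr hrδ x => abs_moll_sub_le hr hΦ.aestronglyMeasurable fun t ht => ?_⟩
  have := h (a := t) (b := x) (by rw [Real.dist_eq]; linarith)
  rw [Real.dist_eq] at this
  exact this.le

lemma exists_moll_integral {q : ℝ → ℝ} (hq : Integrable q) {ε : ℝ} (hε : 0 < ε) :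
    ∃ r₀ > 0, ∀ r (hr : 0 < r), r ≤ r₀ → ∫ x, |moll r hr q x - q x| ≤ ε := by
  obtain ⟨c, hcc, hcε, hc, hci⟩ :=
    hq.exists_hasCompactSupport_integral_sub_le (show 0 < ε / 4 by positivity)
  obtain ⟨B, hB⟩ := hcc.isCompact.isBounded.subset_closedBall 0
  have hcB : ∀ t, c t ≠ 0 → |t| ≤ |B| := by
    intro t ht
    have := hB (subset_tsupport _ ht)
    simp only [Metric.mem_closedBall, dist_zero_right, Real.norm_eq_abs] at this
    exact this.trans (le_abs_self B)
  set V := 2 * (|B| + 1) with hV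
  have hVpos : 0 < V := by positivity
  obtain ⟨r₀, hr₀, h⟩ := exists_moll_uniform hc hcc (show 0 < ε / (2 * V) by positivity)
  refine ⟨min r₀ 1, by positivity, fun r hr hrr => ?_⟩
  have h3 : ∫ x, |moll r hr c x - c x| ≤ ε / 2 := by
    have hz : ∀ x, x ∉ Icc (-(|B| + 1)) (|B| + 1) → |moll r hr c x - c x| = 0 := by
      intro x hx
      have hx' : |B| + 1 < |x| := by
        by_contra! hle
        exact hx (abs_le.1 hle)
      have h1 : c x = 0 := by
        by_contra h0
        linarith [hcB x h0]
      have h2 : moll r hr c x = 0 := by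
        by_contra h0
        obtain ⟨t, ht, hct⟩ := moll_support hr h0
        have := abs_sub_abs_le_abs_sub x t
        linarith [hcB t hct, hrr.trans (min_le_right r₀ 1)]
      simp [h1, h2]
    rw [← setIntegral_eq_integral_of_forall_compl_eq_zero hz]
    have := norm_setIntegral_le_of_norm_le_const (μ := volume)
      (s := Icc (-(|B| + 1)) (|B| + 1)) (f := fun x => |moll r hr c x - c x|)
      (C := ε / (2 * V)) (by simp) (fun x _ => by
        rw [norm_eq_abs, abs_abs]; exact h r hr (hrr.trans (min_le_left _ _)) x)
    refine (le_abs_self _).trans (this.trans_eq ?_)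
    rw [Measure.real, Real.volume_Icc, ENNReal.toReal_ofReal (by linarith)]
    rw [show |B| + 1 - -(|B| + 1) = V by rw [hV]; ring]
    field_simp
  have hqc : ∫ x, |q x - c x| ≤ ε / 4 := hcε
  have hd : Integrable (fun t => q t - c t) := hq.sub hci
  have i1 : Integrable (fun x => |moll r hr (fun t => q t - c t) x|) :=
    (integrable_cv (bump_integrable hr) hd).abs
  have i2 : Integrable (fun x => |moll r hr c x - c x|) :=
    ((integrable_cv (bump_integrable hr) hci).sub hci).abs
  have i3 : Integrable (fun x => |q x - c x|) := hd.abs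
  have i4 : Integrable (fun x => |moll r hr q x - q x|) :=
    ((integrable_cv (bump_integrable hr) hq).sub hq).abs
  calc ∫ x, |moll r hr q x - q x|
      ≤ ∫ x, ((|moll r hr (fun t => q t - c t) x| + |moll r hr c x - c x|) + |q x - c x|) := by
        refine integral_mono i4 ((i1.add i2).add i3) fun x => ?_
        simp only
        rw [moll_sub hr hq hci x]
        have e : moll r hr q x - q x =
          (moll r hr q x - moll r hr c x) + (moll r hr c x - c x) - (q x - c x) := by ring
        rw [e]
        exact (abs_sub _ _).trans (add_le_add_left (abs_add_le _ _) _)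
    _ = ((∫ x, |moll r hr (fun t => q t - c t) x|) + ∫ x, |moll r hr c x - c x|)
          + ∫ x, |q x - c x| := by
        rw [← integral_add i1 i2]
        exact integral_add (i1.add i2) i3
    _ ≤ ε := by linarith [integral_abs_moll_le hr hd]

/-- Concentrated test functions with small mass and small `cv K`-norm may have large `cv k`. -/
def Unb (k K : ℝ → ℝ) : Prop :=
  ∀ η > 0, ∃ q : ℝ → ℝ, Continuous q ∧ (∀ t, η ≤ |t| → q t = 0) ∧ ∫ t, |q t| ≤ η ∧
    (∀ x, |cv K q x| ≤ η) ∧ cv k q 0 = 1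

lemma cv_translate (k q : ℝ → ℝ) (x s : ℝ) :
    cv k (fun t => q (t + x)) s = cv k q (s + x) := by
  unfold cv
  rw [← integral_add_right_eq_self (fun t => k (s + x - t) * q t) x]
  simp

lemma hasCompactSupport_of_abs {q : ℝ → ℝ} {B : ℝ} (h : ∀ t, B ≤ |t| → q t = 0) :
    HasCompactSupport q := by
  refine HasCompactSupport.intro (isCompact_closedBall (0 : ℝ) B) fun x hx => h x ?_
  simp only [Metric.mem_closedBall, dist_zero_right, Real.norm_eq_abs, not_le] at hx
  exact hx.le

lemma HasCompactSupport.exists_abs {q : ℝ → ℝ} (h : HasCompactSupport q) :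
    ∃ B, ∀ t, B ≤ |t| → q t = 0 := by
  obtain ⟨B, hB⟩ := h.isCompact.isBounded.subset_closedBall 0
  refine ⟨B + 1, fun t ht => ?_⟩
  by_contra h0
  have := hB (subset_tsupport _ h0)
  simp only [Metric.mem_closedBall, dist_zero_right, Real.norm_eq_abs] at this
  linarith

/-- The tent function of radius `η` at `x`. -/
def tent (x η t : ℝ) : ℝ := max 0 (1 - |t - x| / η)

lemma tent_lip {x η : ℝ} (hη : 0 < η) (s t : ℝ) :
    |tent x η s - tent x η t| ≤ 1 / η * |s - t| := by
  unfold tent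
  refine (abs_max_sub_max_le_max _ _ _ _).trans ?_
  refine max_le (by simp; positivity) ?_
  rw [show 1 - |s - x| / η - (1 - |t - x| / η) = 1 / η * (|t - x| - |s - x|) by ring, abs_mul,
    abs_of_pos (by positivity : 0 < 1 / η)]
  refine mul_le_mul_of_nonneg_left ?_ (by positivity)
  refine (abs_abs_sub_abs_le_abs_sub _ _).trans_eq ?_
  rw [abs_sub_comm]; congr 1; ring

lemma tent_nonneg (x η t : ℝ) : 0 ≤ tent x η t := le_max_left _ _

lemma tent_le_one {x η t : ℝ} (hη : 0 < η) : tent x η t ≤ 1 :=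
  max_le zero_le_one (by linarith [div_nonneg (abs_nonneg (t - x)) hη.le])

lemma tent_self {x η : ℝ} : tent x η x = 1 := by simp [tent]

lemma tent_far {x η t : ℝ} (hη : 0 < η) (h : η ≤ |t - x|) : tent x η t = 0 := by
  refine max_eq_left ?_
  have : 1 ≤ |t - x| / η := by rwa [le_div_iff₀ hη, one_mul]
  linarith

lemma exists_bound_of_not_unb {k K : ℝ → ℝ} {Ck CK : ℝ} (hk : Ker k Ck) (hK : Ker K CK)
    (h : ¬ Unb k K) :
    ∃ C' : ℝ, 0 ≤ C' ∧ ∀ q : ℝ → ℝ, Continuous q → HasCompactSupport q → ∀ M : ℝ,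
      ∫ t, |q t| ≤ M → (∀ x, |cv K q x| ≤ M) → ∀ x, |cv k q x| ≤ C' * M := by
  unfold Unb at h
  push Not at h
  obtain ⟨η, hη, h⟩ := h
  have hCk := hk.nonneg
  have hCK := hK.nonneg
  have hη1 : (0 : ℝ) ≤ 1 / η := by positivity
  refine ⟨(1 + 1 / η * CK) / η + 1 / η * Ck, by positivity, fun q hq hqc M hM hKM x => ?_⟩
  have hqi : Integrable q := hq.integrable_of_hasCompactSupport hqc
  have hM0 : 0 ≤ M := le_trans (integral_nonneg fun t => abs_nonneg _) hM
  set ψ := tent x η with hψdef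
  have hψ := tent_lip (x := x) hη
  have hψc := continuous_of_lip hψ
  set q₁ : ℝ → ℝ := fun t => ψ t * q t with hq₁
  have hq₁c : Continuous q₁ := hψc.mul hq
  have hq₁M : ∫ t, |q₁ t| ≤ M := by
    refine le_trans (integral_mono ?_ hqi.abs fun t => ?_) hM
    · exact (hq₁c.integrable_of_hasCompactSupport (hqc.mul_left)).abs
    · simp only [hq₁]
      rw [abs_mul, abs_of_nonneg (tent_nonneg x η t)]
      exact mul_le_of_le_one_left (abs_nonneg _) (tent_le_one hη)
  have hM1 : ∀ s, |cv K q₁ s| ≤ (1 + 1 / η * CK) * M := by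
    intro s
    rw [(hK.cvAt_mul hη1 hψ hqi (cvAt_of_continuous hK.integrable hq hqc s)).2]
    have h1 := hK.abs_comm_le hη1 hψ hqi s
    have h2 : |ψ s * cv K q s| ≤ M := by
      rw [abs_mul, abs_of_nonneg (tent_nonneg x η s)]
      exact (mul_le_of_le_one_left (abs_nonneg _) (tent_le_one hη)).trans (hKM s)
    have h3 : 1 / η * CK * ∫ t, |q t| ≤ 1 / η * CK * M :=
      mul_le_mul_of_nonneg_left hM (by positivity)
    calc _ ≤ _ := abs_add_le _ _
      _ ≤ (1 + 1 / η * CK) * M := by linarith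
  have hMM : M ≤ (1 + 1 / η * CK) * M := by
    have : 0 ≤ 1 / η * CK * M := by positivity
    linarith
  have hc : |cv k q₁ x| ≤ (1 + 1 / η * CK) * M / η := by
    by_contra! hlt
    set c := cv k q₁ x with hcdef
    have hc0 : 0 < |c| := lt_of_le_of_lt (by positivity) hlt
    rw [div_lt_iff₀ hη] at hlt
    have hc1 : c ≠ 0 := abs_pos.1 hc0
    have hcM : ∀ v, v ≤ (1 + 1 / η * CK) * M → |c⁻¹| * v ≤ η := by
      intro v hv
      rw [abs_inv, inv_mul_le_iff₀ hc0]
      linarith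
    refine h (fun t => c⁻¹ * q₁ (t + x)) (by fun_prop) ?_ ?_ ?_ ?_
    · intro t ht
      have : ψ (t + x) = 0 := tent_far hη (by simpa using ht)
      simp [hq₁, this]
    · simp_rw [abs_mul, integral_const_mul]
      rw [integral_add_right_eq_self (fun t => |q₁ t|) x]
      exact hcM _ (hq₁M.trans hMM)
    · intro s
      rw [cv_const_mul, cv_translate, abs_mul]
      exact hcM _ (hM1 _)
    · rw [cv_const_mul, cv_translate, zero_add]
      exact inv_mul_cancel₀ hc1
  have e := (hk.cvAt_mul hη1 hψ hqi (cvAt_of_continuous hk.integrable hq hqc x)).2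
  have hx1 : tent x η x = 1 := tent_self
  rw [hx1, one_mul] at e
  have e2 : cv k q x = cv k q₁ x - cvComm k ψ q x := by rw [hq₁, hψdef]; linarith
  have h3 := hk.abs_comm_le hη1 hψ hqi x
  have h4 : 1 / η * Ck * ∫ t, |q t| ≤ 1 / η * Ck * M :=
    mul_le_mul_of_nonneg_left hM (by positivity)
  rw [e2]
  calc _ ≤ _ := abs_sub _ _
    _ ≤ (1 + 1 / η * CK) * M / η + 1 / η * Ck * M := by linarith
    _ = _ := by ring

lemma moll_zero_of_abs {q : ℝ → ℝ} {B r : ℝ} (hr : 0 < r) (h : ∀ t, B ≤ |t| → q t = 0) :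
    ∀ t, B + r ≤ |t| → moll r hr q t = 0 := by
  intro t ht
  by_contra h0
  obtain ⟨s, hs, hqs⟩ := moll_support hr h0
  refine hqs (h s ?_)
  linarith [abs_sub_abs_le_abs_sub t s]

lemma ae_bound_of_bound {k K : ℝ → ℝ} (hk : Integrable k) (hK : Integrable K)
    {C' : ℝ} (h : ∀ q : ℝ → ℝ, Continuous q → HasCompactSupport q → ∀ M : ℝ,
      ∫ t, |q t| ≤ M → (∀ x, |cv K q x| ≤ M) → ∀ x, |cv k q x| ≤ C' * M)
    {q : ℝ → ℝ} (hq : Integrable q) (hqc : HasCompactSupport q) {M : ℝ}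
    (hM : ∫ t, |q t| ≤ M) (hKM : ∀ᵐ x, |cv K q x| ≤ M) :
    ∀ᵐ x, |cv k q x| ≤ C' * M := by
  have hpos : ∀ n : ℕ, (0 : ℝ) < 1 / ((n : ℝ) + 1) := fun n => by positivity
  have hlim := ContDiffBump.ae_convolution_tendsto_right_of_locallyIntegrable
    (μ := (volume : Measure ℝ)) (φ := fun n : ℕ => bump (1 / ((n : ℝ) + 1)) (hpos n))
    (l := Filter.atTop) (K := 2) (g := cv k q)
    (by simpa [bump] using tendsto_one_div_add_atTop_nhds_zero_nat (𝕜 := ℝ))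
    (Filter.Eventually.of_forall fun n => by simp only [bump]; linarith)
    (integrable_cv hk hq).locallyIntegrable
  filter_upwards [hlim] with x hx
  refine le_of_tendsto (hx.abs) (Filter.Eventually.of_forall fun n => ?_)
  rw [← moll_eq_lsmul, ← moll_cv _ hk hq]
  obtain ⟨B, hB⟩ := hqc.exists_abs
  refine h _ (continuous_moll _ hq) (hasCompactSupport_of_abs (moll_zero_of_abs _ hB)) M
    ((integral_abs_moll_le _ hq).trans hM) (fun s => ?_) x
  rw [moll_cv _ hK hq]
  exact abs_moll_le _ hKM s

/-- One-sided averages of `|k|` over `(τ, τ + h)`, with `h` of the sign of `σ`, are dominated by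
`|k τ|`. -/
def AvgDom (σ : ℝ) (k : ℝ → ℝ) (R : ℝ) : Prop :=
  ∃ C, ∀ τ, |τ| ≤ R → ∀ ε ∈ Ioc (0 : ℝ) 1,
    |(∫ u in τ..(τ + σ * ε), |k u|)| ≤ C * ε * |k τ|

lemma abs_cv_le_of_ae {k q : ℝ → ℝ} {C R M σ x : ℝ} (hk : Ker k C) (hσ : |σ| = 1)
    (hdom : AvgDom σ k R) (hq : Integrable q) (hqR : ∀ t, q t ≠ 0 → |x - t| ≤ R)
    (hx : CvAt k q x) (hM : ∀ᵐ u, |cv k q u| ≤ M) : |cv k q x| ≤ M := by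
  obtain ⟨C₁, hC₁⟩ := hdom
  obtain ⟨Z, hZ, hc⟩ := hk.cont
  have hσ0 : σ ≠ 0 := by rintro rfl; simp at hσ
  set e : ℕ → ℝ := fun n => 1 / ((n : ℝ) + 1) with he
  have hpos : ∀ n, 0 < e n := fun n => by simp only [he]; positivity
  have hle : ∀ n, e n ≤ 1 := fun n => by
    simp only [he]; rw [div_le_one (by positivity)]; linarith [n.cast_nonneg (α := ℝ)]
  have he0 : Filter.Tendsto e Filter.atTop (nhds 0) := tendsto_one_div_add_atTop_nhds_zero_nat
  -- the averages of the convolution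
  set A : ℕ → ℝ := fun n => ∫ t, ((σ * e n)⁻¹ * ∫ u in (x - t)..(x - t + σ * e n), k u) * q t
    with hA
  have hkint : ∀ p r : ℝ, IntervalIntegrable k volume p r := fun p r =>
    hk.integrable.intervalIntegrable
  have hprim : Continuous (fun v => ∫ u in (0 : ℝ)..v, k u) :=
    intervalIntegral.continuous_primitive (fun p r => hkint p r) 0
  have hlimA : Filter.Tendsto A Filter.atTop (nhds (cv k q x)) := by
    refine tendsto_integral_of_dominated_convergence (fun t => C₁ * |k (x - t) * q t|)
      (fun n => ?_) (hx.norm.const_mul C₁) (fun n => Filter.Eventually.of_forall fun t => ?_) ?_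
    · refine AEStronglyMeasurable.mul ?_ hq.aestronglyMeasurable
      have : Continuous fun t => (σ * e n)⁻¹ * ∫ u in (x - t)..(x - t + σ * e n), k u := by
        have e1 : ∀ t, ∫ u in (x - t)..(x - t + σ * e n), k u =
            (∫ u in (0 : ℝ)..(x - t + σ * e n), k u) - ∫ u in (0 : ℝ)..(x - t), k u := fun t =>
          (intervalIntegral.integral_interval_sub_left (hkint _ _) (hkint _ _)).symm
        simp_rw [e1]
        exact continuous_const.mul ((hprim.comp (by fun_prop)).sub (hprim.comp (by fun_prop)))
      exact this.aestronglyMeasurable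
    · rw [norm_mul, Real.norm_eq_abs, Real.norm_eq_abs, abs_mul (k _), ← mul_assoc]
      by_cases hq0 : q t = 0
      · simp [hq0]
      refine mul_le_mul_of_nonneg_right ?_ (abs_nonneg _)
      rw [abs_mul, abs_inv, abs_mul, hσ, one_mul, abs_of_pos (hpos n),
        inv_mul_le_iff₀ (hpos n)]
      refine (intervalIntegral.norm_integral_le_abs_integral_norm (f := k) (μ := volume)
        (a := x - t) (b := x - t + σ * e n)).trans ?_
      simp only [Real.norm_eq_abs]
      have := hC₁ (x - t) (hqR t hq0) (e n) ⟨hpos n, hle n⟩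
      linarith
    · have hn : ∀ᵐ t : ℝ, t ∉ (fun s => x - s) ⁻¹' Z :=
        (hZ.preimage (fun a b h => by simpa using h)).ae_notMem volume
      filter_upwards [hn] with t ht
      refine Filter.Tendsto.mul_const _ ?_
      have hd := intervalIntegral.integral_hasDerivAt_right (hkint (x - t) (x - t))
        (hk.meas.stronglyMeasurable.stronglyMeasurableAtFilter) (hc _ ht)
      rw [hasDerivAt_iff_tendsto_slope_zero] at hd
      have hh : Filter.Tendsto (fun n => σ * e n) Filter.atTop (nhdsWithin 0 {0}ᶜ) := by
        refine tendsto_nhdsWithin_iff.2 ⟨?_, Filter.Eventually.of_forall fun n => ?_⟩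
        · simpa using he0.const_mul σ
        · exact mul_ne_zero hσ0 (hpos n).ne'
      have := hd.comp hh
      simpa [Function.comp_def] using this
  refine le_of_tendsto hlimA.abs (Filter.Eventually.of_forall fun n => ?_)
  have hfub : A n = (σ * e n)⁻¹ * ∫ u in x..(x + σ * e n), cv k q u := by
    have h1 : ∀ t, (∫ u in (x - t)..(x - t + σ * e n), k u) =
        ∫ u in x..(x + σ * e n), k (u - t) := by
      intro t
      rw [intervalIntegral.integral_comp_sub_right]
      congr 1; ring
    have h_int : Integrable (fun p : ℝ × ℝ => k (p.1 - p.2) * q p.2)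
        ((volume.restrict (uIoc x (x + σ * e n))).prod volume) := by
      have := hq.convolution_integrand (ContinuousLinearMap.mul ℝ ℝ) hk.integrable
      have h2 : Integrable (fun p : ℝ × ℝ => k (p.1 - p.2) * q p.2) (volume.prod volume) := by
        refine this.congr (Filter.Eventually.of_forall fun p => ?_)
        simp [mul_comm]
      refine h2.mono_measure ?_
      exact Measure.prod_mono Measure.restrict_le_self le_rfl
    have h3 := integral_integral_swap (f := fun u t => k (u - t) * q t) h_int
    simp only [hA]
    rw [intervalIntegral.intervalIntegral_eq_integral_uIoc]
    unfold cv
    rw [h3, smul_eq_mul, ← integral_const_mul, ← integral_const_mul]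
    congr 1; ext t
    rw [h1, intervalIntegral.intervalIntegral_eq_integral_uIoc, integral_mul_const, smul_eq_mul]
    ring
  rw [hfub, abs_mul, abs_inv, abs_mul, hσ, one_mul, abs_of_pos (hpos n), inv_mul_le_iff₀ (hpos n)]
  have := intervalIntegral.norm_integral_le_of_norm_le_const_ae (a := x) (b := x + σ * e n)
    (f := cv k q) (C := M) (hM.mono fun u hu _ => hu)
  rw [add_sub_cancel_left, abs_mul, hσ, one_mul, abs_of_pos (hpos n)] at this
  rw [Real.norm_eq_abs] at this
  linarith

lemma integrable_tsum_of_summable {ι : Type*} [Countable ι] {u : ι → ℝ → ℝ}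
    (hi : ∀ i, Integrable (u i)) (hs : Summable fun i => ∫ t, |u i t|) :
    Integrable (fun t => ∑' i, u i t) ∧ ∫ t, |∑' i, u i t| ≤ ∑' i, ∫ t, |u i t| := by
  have hlin : ∀ i, ∫⁻ t, ‖u i t‖ₑ = ENNReal.ofReal (∫ t, |u i t|) := fun i => by
    rw [← ofReal_integral_norm_eq_lintegral_enorm (hi i)]; rfl
  have hnn : ∀ i, 0 ≤ ∫ t, |u i t| := fun i => integral_nonneg fun t => abs_nonneg _
  have htot : ∫⁻ t, ∑' i, ‖u i t‖ₑ = ENNReal.ofReal (∑' i, ∫ t, |u i t|) := by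
    rw [lintegral_tsum (fun i => (hi i).aestronglyMeasurable.enorm), funext hlin,
      ENNReal.ofReal_tsum_of_nonneg hnn hs]
  have hfin : ∀ᵐ t, ∑' i, ‖u i t‖ₑ < ⊤ := by
    refine ae_lt_top' (AEMeasurable.tsum fun i => (hi i).aestronglyMeasurable.enorm) ?_
    rw [htot]; exact ENNReal.ofReal_ne_top
  have hsum : ∀ᵐ t, Summable fun i => u i t := by
    filter_upwards [hfin] with t ht
    refine Summable.of_norm ?_
    have := (ENNReal.tsum_coe_ne_top_iff_summable (f := fun i => ‖u i t‖₊)).1 ht.ne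
    exact NNReal.summable_coe.2 this
  have hmeas : AEStronglyMeasurable (fun t => ∑' i, u i t) := by
    refine aestronglyMeasurable_of_tendsto_ae (Filter.atTop : Filter (Finset ι))
      (f := fun s t => ∑ i ∈ s, u i t) (fun s => ?_) ?_
    · exact Finset.aestronglyMeasurable_fun_sum s fun i _ => (hi i).aestronglyMeasurable
    · filter_upwards [hsum] with t ht
      exact ht.hasSum
  have hle : ∫⁻ t, ‖∑' i, u i t‖ₑ ≤ ENNReal.ofReal (∑' i, ∫ t, |u i t|) := by
    rw [← htot]
    exact lintegral_mono fun t => enorm_tsum_le_tsum_enorm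
  have h_int : Integrable (fun t => ∑' i, u i t) :=
    ⟨hmeas, hle.trans_lt ENNReal.ofReal_lt_top⟩
  refine ⟨h_int, ?_⟩
  have h2 := ofReal_integral_norm_eq_lintegral_enorm h_int
  rw [← h2] at hle
  exact (ENNReal.ofReal_le_ofReal_iff (tsum_nonneg hnn)).1 hle

lemma cv_tsum {ι : Type*} [Countable ι] {k : ℝ → ℝ} {u : ι → ℝ → ℝ} {x : ℝ}
    (hi : ∀ i, CvAt k (u i) x) (hs : Summable fun i => ∫ t, |k (x - t) * u i t|) :
    CvAt k (fun t => ∑' i, u i t) x ∧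
      HasSum (fun i => cv k (u i) x) (cv k (fun t => ∑' i, u i t) x) := by
  unfold CvAt cv
  simp_rw [← tsum_mul_left]
  exact ⟨(integrable_tsum_of_summable hi hs).1, hasSum_integral_of_summable_integral_norm hi hs⟩

lemma exists_pos_summable {ι : Type*} [Countable ι] {ε : ℝ} (hε : 0 < ε) :
    ∃ e : ι → ℝ, (∀ i, 0 < e i) ∧ Summable e ∧ ∑' i, e i ≤ ε := by
  obtain ⟨e, he, c, hc, hcε⟩ := NNReal.exists_pos_sum_of_countable
    (ε := ⟨ε, hε.le⟩) (fun h => hε.ne' (congrArg NNReal.toReal h)) ι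
  refine ⟨fun i => e i, fun i => he i, NNReal.summable_coe.2 hc.summable, ?_⟩
  have := (NNReal.hasSum_coe.2 hc).tsum_eq
  rw [this]
  exact_mod_cast hcε.le

/-- Approximation of `G` by a continuous function, in mean and in the image under `cv (kp + km)`,
and also under `cv kp` and `cv km` separately when these are controlled by the sum. -/
lemma exists_piece {kp km : ℝ → ℝ} {Cp Cm a b : ℝ} (hp : Ker kp Cp) (hm : Ker km Cm)
    (hap : AvgDom (-1) kp (b - a + 1)) (ham : AvgDom 1 km (b - a + 1))
    {G Φ : ℝ → ℝ} (hG : Integrable G) (hG0 : ∀ t, G t ≠ 0 → t ∈ Ioo a b)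
    (hΦ : Continuous Φ) (hΦc : HasCompactSupport Φ)
    (hGΦ : cv (fun s => kp s + km s) G =ᵐ[volume] Φ) {ε r : ℝ} (hε : 0 < ε) (hr : 0 < r) :
    ∃ g : ℝ → ℝ, Continuous g ∧ (∀ x, g x ≠ 0 → ∃ t, |x - t| < r ∧ G t ≠ 0) ∧
      ∫ t, |g t - G t| ≤ ε ∧ (∀ x, |cv (fun s => kp s + km s) g x - Φ x| ≤ ε) ∧
      (¬ Unb kp (fun s => kp s + km s) → ∀ x ∈ Ioo a b,
        (CvAt kp G x → |cv kp (fun t => g t - G t) x| ≤ ε) ∧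
        (CvAt km G x → |cv km (fun t => g t - G t) x| ≤ ε)) := by
  set K : ℝ → ℝ := fun s => kp s + km s with hKdef
  have hK : Ker K (Cp + Cm) := hp.add hm
  obtain ⟨C', hC'0, hC'⟩ : ∃ C' : ℝ, 0 ≤ C' ∧ (¬ Unb kp K → ∀ q : ℝ → ℝ, Continuous q →
      HasCompactSupport q → ∀ M : ℝ, ∫ t, |q t| ≤ M → (∀ x, |cv K q x| ≤ M) →
      ∀ x, |cv kp q x| ≤ C' * M) := by
    by_cases hU : Unb kp K
    · exact ⟨0, le_rfl, fun h => absurd hU h⟩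
    · obtain ⟨C', h0, h⟩ := exists_bound_of_not_unb hp hK hU
      exact ⟨C', h0, fun _ => h⟩
  set δ := ε / (C' + 1) with hδ
  have hδ0 : 0 < δ := by positivity
  have hδε : (C' + 1) * δ = ε := by rw [hδ]; field_simp
  have hδle : δ ≤ ε := by
    have : 0 ≤ C' * δ := by positivity
    linarith
  obtain ⟨r₁, hr₁, h1⟩ := exists_moll_uniform hΦ hΦc hδ0
  obtain ⟨r₂, hr₂, h2⟩ := exists_moll_integral hG hδ0
  set ρ := min (min r 1) (min r₁ r₂) with hρdef
  have hρ : 0 < ρ := by positivity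
  have hρr : ρ ≤ r := (min_le_left _ _).trans (min_le_left _ _)
  have hρ1 : ρ ≤ 1 := (min_le_left _ _).trans (min_le_right _ _)
  have hρr₁ : ρ ≤ r₁ := (min_le_right _ _).trans (min_le_left _ _)
  have hρr₂ : ρ ≤ r₂ := (min_le_right _ _).trans (min_le_right _ _)
  set g := moll ρ hρ G with hg
  have hgc : Continuous g := continuous_moll hρ hG
  have hcvg : ∀ x, |cv K g x - Φ x| ≤ δ := by
    intro x
    rw [hg, moll_cv hρ hK.integrable hG, moll_congr hρ hGΦ]
    exact h1 ρ hρ hρr₁ x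
  have hgG := h2 ρ hρ hρr₂
  have hgs : ∀ x, g x ≠ 0 → ∃ t, |x - t| < ρ ∧ G t ≠ 0 := fun x hx => moll_support hρ hx
  refine ⟨g, hgc, fun x hx => ?_, hgG.trans hδle, fun x => (hcvg x).trans hδle, ?_⟩
  · obtain ⟨t, ht, h⟩ := hgs x hx
    exact ⟨t, ht.trans_le hρr, h⟩
  intro hU x hx
  set q : ℝ → ℝ := fun t => g t - G t with hq
  have hgB : ∀ t, g t ≠ 0 → t ∈ Ioo (a - 1) (b + 1) := by
    intro t ht
    obtain ⟨s, hs, hGs⟩ := hgs t ht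
    have := hG0 s hGs
    rw [abs_lt] at hs
    exact ⟨by linarith [this.1], by linarith [this.2]⟩
  have hqB : ∀ t, q t ≠ 0 → t ∈ Ioo (a - 1) (b + 1) := by
    intro t ht
    by_cases h0 : g t = 0
    · have : G t ≠ 0 := fun h => ht (by simp [hq, h0, h])
      have := hG0 t this
      exact ⟨by linarith [this.1], by linarith [this.2]⟩
    · exact hgB t h0
  have hcs : ∀ {v : ℝ → ℝ}, (∀ t, v t ≠ 0 → t ∈ Ioo (a - 1) (b + 1)) → HasCompactSupport v := by
    intro v hv
    refine HasCompactSupport.intro (isCompact_Icc (a := a - 1) (b := b + 1)) fun t ht => ?_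
    by_contra h0
    exact ht (Ioo_subset_Icc_self (hv t h0))
  have hgcs : HasCompactSupport g := hcs hgB
  have hgi : Integrable g := hgc.integrable_of_hasCompactSupport hgcs
  have hqi : Integrable q := hgi.sub hG
  have hKq : ∀ᵐ u, |cv K q u| ≤ δ := by
    filter_upwards [cvAt_ae hK.integrable hG, hGΦ] with u hu hu2
    rw [hq, cv_sub (cvAt_of_continuous hK.integrable hgc hgcs u) hu, hu2]
    exact hcvg u
  have hpq := ae_bound_of_bound hp.integrable hK.integrable (hC' hU) hqi (hcs hqB) hgG hKq
  have hmq : ∀ᵐ u, |cv km q u| ≤ (C' + 1) * δ := by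
    filter_upwards [cvAt_ae hp.integrable hqi, cvAt_ae hm.integrable hqi, hKq, hpq]
      with u h1 h2 h3 h4
    have := cv_add_kernel h1 h2
    have e : cv km q u = cv K q u - cv kp q u := by rw [hKdef, this]; ring
    rw [e]
    calc _ ≤ _ := abs_sub _ _
      _ ≤ (C' + 1) * δ := by linarith
  have hqR : ∀ t, q t ≠ 0 → |x - t| ≤ b - a + 1 := by
    intro t ht
    have := hqB t ht
    rw [abs_le]
    exact ⟨by linarith [hx.1, this.2], by linarith [hx.2, this.1]⟩
  constructor
  · intro h
    refine (abs_cv_le_of_ae hp (by simp) hap hqi hqR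
      ((cvAt_of_continuous hp.integrable hgc hgcs x).sub h) hpq).trans ?_
    linarith
  · intro h
    refine (abs_cv_le_of_ae hm (by simp) ham hqi hqR
      ((cvAt_of_continuous hm.integrable hgc hgcs x).sub h) hmq).trans hδε.le

/-- The signed distance to the boundary of `[a, b]`. -/
def bd (a b x : ℝ) : ℝ := min (x - a) (b - x)

section
variable {a b : ℝ}

lemma bd_pos {x : ℝ} : 0 < bd a b x ↔ x ∈ Ioo a b := by
  simp [bd]

lemma abs_bd_sub_le (s t : ℝ) : |bd a b s - bd a b t| ≤ |s - t| := by
  refine (abs_min_sub_min_le_max _ _ _ _).trans (max_le (by simp) ?_)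
  rw [show b - s - (b - t) = -(s - t) by ring, abs_neg]

lemma continuous_bd : Continuous (bd a b) :=
  continuous_of_lip (Λ := 1) fun s t => by simpa using abs_bd_sub_le s t

lemma bd_le_abs_of_notMem {x t : ℝ} (hx : x ∉ Ioo a b) : bd a b t ≤ |x - t| := by
  have h1 : bd a b x ≤ 0 := not_lt.1 fun h => hx (bd_pos.1 h)
  have := (abs_le.1 (abs_bd_sub_le (a := a) (b := b) x t)).1
  linarith

/-- A cutoff function, equal to `1` at distance at least `2 / n` from the boundary. -/
def cut (a b : ℝ) (n : ℕ) (x : ℝ) : ℝ := max 0 (min 1 (n * bd a b x - 1))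

lemma cut_lip (n : ℕ) (s t : ℝ) : |cut a b n s - cut a b n t| ≤ n * |s - t| := by
  have h0 : (0 : ℝ) ≤ n * |s - t| := by positivity
  refine (abs_max_sub_max_le_max _ _ _ _).trans (max_le (by simpa using h0) ?_)
  refine (abs_min_sub_min_le_max _ _ _ _).trans (max_le (by simpa using h0) ?_)
  rw [show (n : ℝ) * bd a b s - 1 - (n * bd a b t - 1) = n * (bd a b s - bd a b t) by ring,
    abs_mul, abs_of_nonneg (Nat.cast_nonneg n)]
  exact mul_le_mul_of_nonneg_left (abs_bd_sub_le s t) (Nat.cast_nonneg n)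

lemma cut_nonneg (n : ℕ) (x : ℝ) : 0 ≤ cut a b n x := le_max_left _ _

lemma cut_le_one (n : ℕ) (x : ℝ) : cut a b n x ≤ 1 :=
  max_le zero_le_one (min_le_left _ _)

lemma cut_eq_zero {n : ℕ} {x : ℝ} (h : n * bd a b x ≤ 1) : cut a b n x = 0 :=
  max_eq_left ((min_le_right _ _).trans (by linarith))

lemma cut_eq_one {n : ℕ} {x : ℝ} (h : 2 ≤ n * bd a b x) : cut a b n x = 1 := by
  unfold cut
  rw [min_eq_left (by linarith), max_eq_right zero_le_one]

/-- The partition of unity of `(a, b)` associated with the cutoff functions. -/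
def pou (a b : ℝ) (n : ℕ) (x : ℝ) : ℝ := cut a b (n + 1) x - cut a b n x

lemma pou_lip (n : ℕ) (s t : ℝ) :
    |pou a b n s - pou a b n t| ≤ (2 * n + 1) * |s - t| := by
  have h1 := cut_lip (a := a) (b := b) (n + 1) s t
  have h2 := cut_lip (a := a) (b := b) n s t
  push_cast at h1
  unfold pou
  rw [show ∀ p q r u : ℝ, p - q - (r - u) = (p - r) - (q - u) by intros; ring]
  refine (abs_sub _ _).trans ?_
  linarith

lemma pou_supp {n : ℕ} {x : ℝ} (h : pou a b n x ≠ 0) :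
    1 / ((n : ℝ) + 1) < bd a b x ∧ n * bd a b x < 2 := by
  have hn : (0 : ℝ) ≤ n := Nat.cast_nonneg n
  constructor
  · rw [div_lt_iff₀ (by positivity)]
    by_contra! hc
    refine h ?_
    unfold pou
    rw [cut_eq_zero (by push_cast; linarith), cut_eq_zero, sub_zero]
    rcases le_total 0 (bd a b x) with h0 | h0
    · nlinarith
    · exact (mul_nonpos_of_nonneg_of_nonpos hn h0).trans zero_le_one
  · by_contra! hc
    refine h ?_
    have h0 : 0 < bd a b x := by
      by_contra! h0
      linarith [mul_nonpos_of_nonneg_of_nonpos hn h0]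
    unfold pou
    rw [cut_eq_one (by push_cast; nlinarith), cut_eq_one hc, sub_self]

lemma pou_nonneg (n : ℕ) (x : ℝ) : 0 ≤ pou a b n x := by
  have hn : (0 : ℝ) ≤ n := Nat.cast_nonneg n
  by_cases h : pou a b n x = 0
  · exact h.ge
  have h1 := (pou_supp h).1
  have h0 : 0 < bd a b x := lt_trans (by positivity) h1
  unfold pou cut
  refine sub_nonneg.2 (max_le_max le_rfl (min_le_min le_rfl ?_))
  push_cast
  nlinarith

lemma sum_pou (N : ℕ) (x : ℝ) : ∑ n ∈ Finset.range N, pou a b n x = cut a b N x := by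
  unfold pou
  rw [Finset.sum_range_sub (fun n => cut a b n x), cut_eq_zero (n := 0) (by simp), sub_zero]

lemma eventually_le_mul_bd {x : ℝ} (hx : x ∈ Ioo a b) (c : ℝ) :
    ∀ᶠ n : ℕ in Filter.atTop, c ≤ n * bd a b x :=
  (tendsto_natCast_atTop_atTop.atTop_mul_const (bd_pos.2 hx)).eventually_ge_atTop c

lemma hasSum_pou {x : ℝ} (hx : x ∈ Ioo a b) : HasSum (fun n => pou a b n x) 1 := by
  rw [hasSum_iff_tendsto_nat_of_nonneg (fun n => pou_nonneg n x)]
  simp_rw [sum_pou]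
  refine tendsto_const_nhds.congr' ?_
  filter_upwards [eventually_le_mul_bd hx 2] with n hn
  exact (cut_eq_one hn).symm

/-- Functions located near the boundary can be summed under a convolution. -/
lemma cv_tsum_near_boundary {k : ℝ → ℝ} {C x : ℝ} (hk : Ker k C) {u : ℕ → ℝ → ℝ}
    (hu : ∀ n, Integrable (u n)) (hs : Summable fun n => ∫ t, |u n t|)
    (hsupp : ∀ n t, u n t ≠ 0 → n * bd a b t < 3) (hx : x ∈ Ioo a b)
    (hc : ∀ n, CvAt k (u n) x) :
    CvAt k (fun t => ∑' n, u n t) x ∧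
      HasSum (fun n => cv k (u n) x) (cv k (fun t => ∑' n, u n t) x) := by
  refine cv_tsum hc ?_
  obtain ⟨N, hN⟩ := Filter.eventually_atTop.1 (eventually_le_mul_bd hx 6)
  have hd : 0 < bd a b x / 2 := half_pos (bd_pos.2 hx)
  rw [← summable_nat_add_iff N]
  rw [← summable_nat_add_iff N] at hs
  refine Summable.of_nonneg_of_le (fun n => integral_nonneg fun t => abs_nonneg _) (fun n => ?_)
    (hs.mul_left (C / (bd a b x / 2)))
  refine (hk.cvAt_of_far (hu _) hd fun t ht => ?_).2
  have h1 := hsupp _ t ht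
  have h2 := hN (n + N) (by omega)
  have h3 := (abs_le.1 (abs_bd_sub_le (a := a) (b := b) x t)).2
  have h4 : (0 : ℝ) ≤ ((n + N : ℕ) : ℝ) := Nat.cast_nonneg _
  have h5 : bd a b t ≤ bd a b x / 2 := by
    by_contra! h
    nlinarith
  linarith

/-- Functions integrable against the inverse distance to the boundary. -/
lemma Ker.cvAt_of_div_bd {k q : ℝ → ℝ} {C x : ℝ} (hk : Ker k C)
    (hq0 : ∀ t, q t ≠ 0 → t ∈ Ioo a b) (hq : Integrable fun t => q t / bd a b t)
    (hx : x ∉ Ioo a b) :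
    CvAt k q x ∧ ∫ t, |k (x - t) * q t| ≤ C * ∫ t, |q t / bd a b t| := by
  have hb : ∀ t, ‖k (x - t) * q t‖ ≤ C * |q t / bd a b t| := by
    intro t
    rw [Real.norm_eq_abs, abs_mul]
    by_cases h0 : q t = 0
    · simp [h0]
    · have h1 := bd_pos.2 (hq0 t h0)
      have := hk.abs_le_div h1 (bd_le_abs_of_notMem hx (t := t))
      rw [abs_div, abs_of_pos h1]
      calc _ ≤ C / bd a b t * |q t| := mul_le_mul_of_nonneg_right this (abs_nonneg _)
        _ = _ := by ring
  have hmq : AEStronglyMeasurable q := by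
    refine (hq.aestronglyMeasurable.mul
      (continuous_bd (a := a) (b := b)).aestronglyMeasurable).congr
      (Filter.Eventually.of_forall fun t => ?_)
    by_cases h0 : q t = 0
    · simp [h0]
    · simp [div_mul_cancel₀ _ (bd_pos.2 (hq0 t h0)).ne']
  have hi : CvAt k q x := Integrable.mono' (hq.abs.const_mul C)
    ((hk.meas.comp (measurable_const.sub measurable_id)).aestronglyMeasurable.mul hmq)
    (Filter.Eventually.of_forall hb)
  refine ⟨hi, ?_⟩
  rw [← integral_const_mul]
  exact integral_mono hi.abs (hq.abs.const_mul C) hb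

lemma tendsto_cvComm_cut {k f : ℝ → ℝ} {C x : ℝ} (hk : Ker k C) (hf : Integrable f)
    (hf0 : ∀ t, f t ≠ 0 → t ∈ Ioo a b) (hx : x ∈ Ioo a b) :
    Filter.Tendsto (fun N : ℕ => cvComm k (cut a b N) f x) Filter.atTop (nhds 0) := by
  have hd : 0 < bd a b x / 2 := half_pos (bd_pos.2 hx)
  have : (0 : ℝ) = ∫ t : ℝ, (0 : ℝ) := by simp
  rw [this]
  refine tendsto_integral_filter_of_dominated_convergence (fun t => C / (bd a b x / 2) * |f t|)
    (Filter.Eventually.of_forall fun N => hk.comm_meas (continuous_of_lip (cut_lip N)) hf x)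
    ?_ (hf.abs.const_mul _) ?_
  · filter_upwards [eventually_le_mul_bd hx 4] with N hN
    refine Filter.Eventually.of_forall fun t => ?_
    rw [norm_mul, Real.norm_eq_abs, Real.norm_eq_abs, abs_mul]
    refine mul_le_mul_of_nonneg_right ?_ (abs_nonneg _)
    have hCd : 0 ≤ C / (bd a b x / 2) := div_nonneg hk.nonneg hd.le
    rw [cut_eq_one (x := x) (by linarith)]
    by_cases h2 : 2 ≤ N * bd a b t
    · simpa [cut_eq_one h2] using hCd
    have h1 : |cut a b N t - 1| ≤ 1 := by
      rw [abs_le]; constructor <;> linarith [cut_nonneg (a := a) (b := b) N t,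
        cut_le_one (a := a) (b := b) N t]
    have h5 : bd a b t ≤ bd a b x / 2 := by
      by_contra! h
      have h4 : (0 : ℝ) ≤ N := Nat.cast_nonneg _
      nlinarith
    have h3 := (abs_le.1 (abs_bd_sub_le (a := a) (b := b) x t)).2
    have := hk.abs_le_div hd (s := x - t) (by linarith)
    calc _ ≤ 1 * |k (x - t)| := mul_le_mul_of_nonneg_right h1 (abs_nonneg _)
      _ ≤ _ := by rwa [one_mul]
  · refine Filter.Eventually.of_forall fun t => tendsto_const_nhds.congr' ?_
    by_cases h0 : f t = 0
    · simp [h0]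
    filter_upwards [eventually_le_mul_bd hx 2, eventually_le_mul_bd (hf0 t h0) 2] with N h1 h2
    rw [cut_eq_one h1, cut_eq_one h2]; simp

lemma sum_cvComm_pou {k f : ℝ → ℝ} {C : ℝ} (hk : Ker k C) (hf : Integrable f) (N : ℕ) (x : ℝ) :
    ∑ n ∈ Finset.range N, cvComm k (pou a b n) f x = cvComm k (cut a b N) f x := by
  unfold cvComm
  rw [← integral_finsetSum _ fun n _ => hk.comm_integrable (by positivity) (pou_lip n) hf x]
  congr 1; ext t
  rw [← sum_pou, ← sum_pou, ← Finset.sum_sub_distrib, Finset.sum_mul, Finset.sum_mul]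

end

lemma summable_integral_pou {a b : ℝ} {f : ℝ → ℝ} (hf : Integrable f) :
    (∀ n, Integrable fun t => pou a b n t * f t) ∧
      Summable fun n => ∫ t, |pou a b n t * f t| := by
  have hi : ∀ n, Integrable fun t => pou a b n t * f t := fun n => by
    refine Integrable.mono' hf.abs ((continuous_of_lip (pou_lip n)).aestronglyMeasurable.mul
      hf.aestronglyMeasurable) (Filter.Eventually.of_forall fun t => ?_)
    rw [Real.norm_eq_abs, abs_mul, abs_of_nonneg (pou_nonneg n t)]
    refine mul_le_of_le_one_left (abs_nonneg _) ?_
    unfold pou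
    linarith [cut_nonneg (a := a) (b := b) n t, cut_le_one (a := a) (b := b) (n + 1) t]
  refine ⟨hi, summable_of_sum_range_le (c := ∫ t, |f t|)
    (fun n => integral_nonneg fun t => abs_nonneg _) fun N => ?_⟩
  rw [← integral_finsetSum _ fun n _ => (hi n).abs]
  refine integral_mono (integrable_finsetSum _ fun n _ => (hi n).abs) hf.abs fun t => ?_
  simp_rw [abs_mul, abs_of_nonneg (pou_nonneg _ t)]
  rw [← Finset.sum_mul, sum_pou]
  exact mul_le_of_le_one_left (abs_nonneg _) (cut_le_one N t)

/-- Correction of `f` by a function which is small against the inverse distance to the boundary,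
making both convolutions with `kp` and `km` exist everywhere. -/
lemma exists_repair {kp km : ℝ → ℝ} {Cp Cm a b : ℝ} (hp : Ker kp Cp) (hm : Ker km Cm)
    (hap : AvgDom (-1) kp (b - a + 1)) (ham : AvgDom 1 km (b - a + 1))
    {f φ : ℝ → ℝ} (hf : Integrable f) (hf0 : ∀ t, f t ≠ 0 → t ∈ Ioo a b) (hφ : Continuous φ)
    (hfφ : ∀ᵐ x, x ∈ Ioo a b → cv (fun s => kp s + km s) f x = φ x) {η : ℝ} (hη : 0 < η) :
    ∃ r Ψ : ℝ → ℝ, (∀ t, r t ≠ 0 → t ∈ Ioo a b) ∧ (Integrable fun t => r t / bd a b t) ∧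
      ∫ t, |r t / bd a b t| ≤ η ∧ Continuous Ψ ∧ (∀ x, |Ψ x| ≤ η) ∧
      (∀ x ∈ Ioo a b, CvAt kp (fun t => f t + r t) x ∧ CvAt km (fun t => f t + r t) x ∧
        cv (fun s => kp s + km s) (fun t => f t + r t) x = φ x + Ψ x) ∧
      (∀ x ∈ ({a, b} : Set ℝ), cv (fun s => kp s + km s) r x = Ψ x) ∧
      (¬ Unb kp (fun s => kp s + km s) → ∀ x ∈ Ioo a b,
        (CvAt kp f x → |cv kp r x| ≤ η) ∧ (CvAt km f x → |cv km r x| ≤ η)) := by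
  set K : ℝ → ℝ := fun s => kp s + km s with hKdef
  have hK : Ker K (Cp + Cm) := hp.add hm
  obtain ⟨e, he0, hes, heη⟩ := exists_pos_summable (ι := ℕ) hη
  obtain ⟨hGi, hGs⟩ := summable_integral_pou (a := a) (b := b) hf
  set G : ℕ → ℝ → ℝ := fun n t => pou a b n t * f t with hG
  set T : ℕ → ℝ → ℝ := fun n x => pou a b n x * φ x + cvComm K (pou a b n) f x with hT
  have hpou0 : ∀ n : ℕ, ∀ x, |a| + |b| ≤ |x| → pou a b n x = 0 := by
    intro n x hx
    by_contra h
    have := bd_pos.1 (lt_trans (by positivity) (pou_supp h).1)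
    have h1 : |x| < |a| + |b| := by
      rw [abs_lt]
      constructor
      · linarith [this.1, neg_abs_le a, abs_nonneg b]
      · linarith [this.2, le_abs_self b, abs_nonneg a]
    linarith
  have hTc : ∀ n, Continuous (T n) := fun n =>
    ((continuous_of_lip (pou_lip n)).mul hφ).add
      (hK.continuous_comm (by positivity) (pou_lip n) hf)
  have hTs : ∀ n, HasCompactSupport (T n) := fun n =>
    ((hasCompactSupport_of_abs (hpou0 n)).mul_right).add (hK.hasCompactSupport_comm (hpou0 n))
  have hGsupp : ∀ n t, G n t ≠ 0 → 1 / ((n : ℝ) + 1) < bd a b t ∧ n * bd a b t < 2 :=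
    fun n t h => pou_supp (left_ne_zero_of_mul h)
  have hGT : ∀ n, cv K (G n) =ᵐ[volume] T n := fun n => by
    refine hK.cv_mul_ae (by positivity) (pou_lip n) hf ?_
    filter_upwards [hfφ] with x hx h
    exact hx (bd_pos.1 (lt_trans (by positivity) (pou_supp h).1))
  have hpiece := fun n : ℕ => exists_piece hp hm hap ham (hGi n)
    (fun t h => hf0 t (right_ne_zero_of_mul h)) (hTc n) (hTs n) (hGT n)
    (ε := e n / (2 * ((n : ℝ) + 1))) (r := 1 / (2 * ((n : ℝ) + 1)))
    (div_pos (he0 n) (by positivity)) (by positivity)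
  choose g hgc hgs hgG hgT hgU using hpiece
  have hele : ∀ n, e n / (2 * ((n : ℝ) + 1)) ≤ e n := fun n =>
    div_le_self (he0 n).le (by linarith [Nat.cast_nonneg (α := ℝ) n])
  set ρ : ℕ → ℝ → ℝ := fun n t => g n t - G n t with hρ
  have hgsupp : ∀ n t, g n t ≠ 0 → 1 / (2 * ((n : ℝ) + 1)) < bd a b t ∧ n * bd a b t < 3 := by
    intro n t h
    obtain ⟨s, hs, hGs⟩ := hgs n t h
    have h1 := hGsupp n s hGs
    have h2 := abs_le.1 (abs_bd_sub_le (a := a) (b := b) t s)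
    have e1 : 1 / ((n : ℝ) + 1) = 1 / (2 * ((n : ℝ) + 1)) + 1 / (2 * ((n : ℝ) + 1)) := by
      field_simp; norm_num
    refine ⟨by linarith, ?_⟩
    have h3 : (n : ℝ) * (1 / (2 * ((n : ℝ) + 1))) ≤ 1 := by
      rw [mul_one_div, div_le_one (by positivity)]
      linarith [Nat.cast_nonneg (α := ℝ) n]
    have h4 : (n : ℝ) * (bd a b t - bd a b s) ≤ n * (1 / (2 * ((n : ℝ) + 1))) :=
      mul_le_mul_of_nonneg_left (by linarith) (Nat.cast_nonneg n)
    linarith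
  have hρsupp : ∀ n t, ρ n t ≠ 0 → 1 / (2 * ((n : ℝ) + 1)) < bd a b t ∧ n * bd a b t < 3 := by
    intro n t h
    by_cases h0 : g n t = 0
    · have := hGsupp n t fun h1 => h (by simp [hρ, h0, h1])
      have h5 : 1 / (2 * ((n : ℝ) + 1)) ≤ 1 / ((n : ℝ) + 1) := by
        refine one_div_le_one_div_of_le (by positivity) ?_
        linarith [Nat.cast_nonneg (α := ℝ) n]
      exact ⟨by linarith, by linarith⟩
    · exact hgsupp n t h0
  have hIoo : ∀ (n : ℕ) (t : ℝ), 1 / (2 * ((n : ℝ) + 1)) < bd a b t → t ∈ Ioo a b := fun n t h =>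
    bd_pos.1 (lt_trans (show (0 : ℝ) < 1 / (2 * ((n : ℝ) + 1)) by positivity) h)
  have hgcs : ∀ n, HasCompactSupport (g n) := fun n => by
    refine HasCompactSupport.intro (isCompact_Icc (a := a) (b := b)) fun t ht => ?_
    by_contra h0
    exact ht (Ioo_subset_Icc_self (hIoo n t (hgsupp n t h0).1))
  have hgi : ∀ n, Integrable (g n) := fun n => (hgc n).integrable_of_hasCompactSupport (hgcs n)
  have hρi : ∀ n, Integrable (ρ n) := fun n => (hgi n).sub (hGi n)
  have hρs : Summable fun n => ∫ t, |ρ n t| := Summable.of_nonneg_of_le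
    (fun n => integral_nonneg fun t => abs_nonneg _) (fun n => (hgG n).trans (hele n)) hes
  have hgsum : Summable fun n => ∫ t, |g n t| := by
    refine Summable.of_nonneg_of_le (fun n => integral_nonneg fun t => abs_nonneg _)
      (fun n => ?_) (hρs.add hGs)
    rw [← integral_add (hρi n).abs (hGi n).abs]
    refine integral_mono (hgi n).abs ((hρi n).abs.add (hGi n).abs) fun t => ?_
    calc |g n t| = |ρ n t + G n t| := by simp [hρ]
      _ ≤ _ := abs_add_le _ _
  set r : ℝ → ℝ := fun t => ∑' n, ρ n t with hr
  have hr0 : ∀ t, r t ≠ 0 → t ∈ Ioo a b := by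
    intro t h
    by_contra hc
    refine h ?_
    have : ∀ n, ρ n t = 0 := fun n => by
      by_contra h0
      exact hc (hIoo n t (hρsupp n t h0).1)
    simp [hr, this]
  have hfr : (fun t => f t + r t) = fun t => ∑' n, g n t := by
    ext t
    by_cases ht : t ∈ Ioo a b
    · have hGsum : HasSum (fun n => G n t) (f t) := by
        simpa using (hasSum_pou ht).mul_right (f t)
      obtain ⟨N, hN⟩ := Filter.eventually_atTop.1 (eventually_le_mul_bd ht 3)
      have hgt : Summable fun n => g n t := by
        refine summable_of_ne_finset_zero (s := Finset.range N) fun n hn => ?_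
        by_contra h0
        linarith [(hgsupp n t h0).2, hN n (by simpa using hn)]
      simp only [hr, hρ]
      rw [hgt.tsum_sub hGsum.summable, hGsum.tsum_eq]
      ring
    · have hf' : f t = 0 := by
        by_contra h; exact ht (hf0 t h)
      have hr' : r t = 0 := by
        by_contra h; exact ht (hr0 t h)
      have : ∀ n, g n t = 0 := fun n => by
        by_contra h0
        exact ht (hIoo n t (hgsupp n t h0).1)
      simp [hf', hr', this]
  -- the error terms
  set Θ : ℕ → ℝ → ℝ := fun n x => cv K (g n) x - T n x with hΘ
  have hΘe : ∀ n x, |Θ n x| ≤ e n := fun n x => (hgT n x).trans (hele n)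
  have hΘc : ∀ n, Continuous (Θ n) := fun n =>
    (continuous_cv hK.integrable (hgc n) (hgcs n)).sub (hTc n)
  have hΘs : ∀ x, Summable fun n => Θ n x := fun x => Summable.of_norm_bounded hes (hΘe · x)
  have hdiv : ∀ n t, |ρ n t / bd a b t| ≤ 2 * ((n : ℝ) + 1) * |ρ n t| := by
    intro n t
    by_cases h0 : ρ n t = 0
    · simp [h0]
    have h1 := (hρsupp n t h0).1
    have h2 : 0 < bd a b t := lt_trans (by positivity) h1
    rw [abs_div, abs_of_pos h2, div_le_iff₀ h2]
    rw [div_lt_iff₀ (by positivity)] at h1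
    nlinarith [abs_nonneg (ρ n t)]
  have hdivi : ∀ n, Integrable fun t => ρ n t / bd a b t := fun n =>
    Integrable.mono' ((hρi n).abs.const_mul (2 * ((n : ℝ) + 1)))
      ((hρi n).aestronglyMeasurable.aemeasurable.div
        continuous_bd.aemeasurable).aestronglyMeasurable
      (Filter.Eventually.of_forall (hdiv n))
  have hdive : ∀ n, ∫ t, |ρ n t / bd a b t| ≤ e n := by
    intro n
    calc _ ≤ ∫ t, 2 * ((n : ℝ) + 1) * |ρ n t| :=
          integral_mono (hdivi n).abs ((hρi n).abs.const_mul _) (hdiv n)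
      _ ≤ 2 * ((n : ℝ) + 1) * (e n / (2 * ((n : ℝ) + 1))) := by
          rw [integral_const_mul]
          exact mul_le_mul_of_nonneg_left (hgG n) (by positivity)
      _ = e n := by field_simp
  have hdivs : Summable fun n => ∫ t, |ρ n t / bd a b t| :=
    Summable.of_nonneg_of_le (fun n => integral_nonneg fun t => abs_nonneg _) hdive hes
  have hrdiv : (fun t => r t / bd a b t) = fun t => ∑' n, ρ n t / bd a b t := by
    ext t; rw [tsum_div_const]
  have hrd := integrable_tsum_of_summable hdivi hdivs
  rw [← hrdiv] at hrd
  refine ⟨r, fun x => ∑' n, Θ n x, hr0, hrd.1, ?_, ?_, ?_, ?_, ?_, ?_⟩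
  · have := hrd.2
    rw [show (fun t => |r t / bd a b t|) = fun t => |∑' n, ρ n t / bd a b t| by
      ext t; rw [← congrFun hrdiv t]]
    exact (this.trans (hdivs.tsum_le_tsum hdive hes)).trans heη
  · exact continuous_tsum hΘc hes hΘe
  · intro x
    exact (tsum_of_norm_bounded (f := fun n => Θ n x) hes.hasSum (hΘe · x)).trans heη
  · intro x hx
    rw [hfr]
    have key : ∀ {k : ℝ → ℝ} {C : ℝ}, Ker k C → CvAt k (fun t => ∑' n, g n t) x ∧
        HasSum (fun n => cv k (g n) x) (cv k (fun t => ∑' n, g n t) x) := fun hk =>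
      cv_tsum_near_boundary hk hgi hgsum (fun n t h => (hgsupp n t h).2) hx
        fun n => cvAt_of_continuous hk.integrable (hgc n) (hgcs n) x
    refine ⟨(key hp).1, (key hm).1, ?_⟩
    have h1 := ((key hK).2.sub (hΘs x).hasSum).tendsto_sum_nat
    have h2 : Filter.Tendsto (fun N => ∑ n ∈ Finset.range N, (cv K (g n) x - Θ n x))
        Filter.atTop (nhds (φ x + 0)) := by
      have : (fun N => ∑ n ∈ Finset.range N, (cv K (g n) x - Θ n x)) =
          fun N => cut a b N x * φ x + cvComm K (cut a b N) f x := by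
        ext N
        simp only [hΘ, hT, sub_sub_cancel]
        rw [Finset.sum_add_distrib, ← Finset.sum_mul, sum_pou, sum_cvComm_pou hK hf]
      rw [this]
      refine Filter.Tendsto.add ?_ (tendsto_cvComm_cut hK hf hf0 hx)
      refine tendsto_const_nhds.congr' ?_
      filter_upwards [eventually_le_mul_bd hx 2] with N hN
      rw [cut_eq_one hN, one_mul]
    have := tendsto_nhds_unique h1 h2
    linarith
  · intro x hx
    have hx' : x ∉ Ioo a b := by
      rcases hx with rfl | rfl
      · simp
      · simp
    have hxpou : ∀ n, pou a b n x = 0 := fun n => by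
      by_contra h
      exact hx' (bd_pos.1 (lt_trans (by positivity) (pou_supp h).1))
    have hρx : ∀ n, CvAt K (ρ n) x ∧ cv K (ρ n) x = Θ n x := by
      intro n
      have h1 := hK.cvAt_mul_of_eq_zero (by positivity) (pou_lip n) hf (hxpou n)
      have h2 := cvAt_of_continuous hK.integrable (hgc n) (hgcs n) x
      refine ⟨h2.sub h1.1, ?_⟩
      rw [hρ, cv_sub h2 h1.1, h1.2]
      simp [hΘ, hT, hxpou n]
    have hsum : Summable fun n => ∫ t, |K (x - t) * ρ n t| := by
      refine Summable.of_nonneg_of_le (fun n => integral_nonneg fun t => abs_nonneg _)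
        (fun n => (hK.cvAt_of_div_bd (fun t h => hIoo n t (hρsupp n t h).1) (hdivi n) hx').2)
        (hdivs.mul_left _)
    have := (cv_tsum (fun n => (hρx n).1) hsum).2
    simp_rw [(hρx _).2] at this
    exact this.tsum_eq.symm
  · intro hU x hx
    have key : ∀ {k : ℝ → ℝ} {C : ℝ}, Ker k C → CvAt k f x →
        (∀ n, CvAt k (G n) x → |cv k (ρ n) x| ≤ e n) → |cv k r x| ≤ η := by
      intro k C hk hkf hb
      have hGx : ∀ n, CvAt k (G n) x := fun n =>
        (hk.cvAt_mul (by positivity) (pou_lip n) hf hkf).1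
      have := (cv_tsum_near_boundary hk hρi hρs (fun n t h => (hρsupp n t h).2) hx
        fun n => (cvAt_of_continuous hk.integrable (hgc n) (hgcs n) x).sub (hGx n)).2
      rw [hr, ← this.tsum_eq]
      exact (tsum_of_norm_bounded (f := fun n => cv k (ρ n) x) hes.hasSum fun n =>
        hb n (hGx n)).trans heη
    exact ⟨fun h => key hp h fun n hn => ((hgU n hU x hx).1 hn).trans (hele n),
      fun h => key hm h fun n hn => ((hgU n hU x hx).2 hn).trans (hele n)⟩

/-- A superposition of well separated bumps, invisible to `cv K` but taking prescribed values
under `cv k` at the centres. -/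
lemma exists_bumps {k K : ℝ → ℝ} {C CK a b : ℝ} (hk : Ker k C) (hK : Ker K CK) (hU : Unb k K)
    {ι : Type*} [Countable ι] {x d : ι → ℝ} (hd : ∀ i, 0 < d i)
    (hsep : ∀ i j, i ≠ j → 4 * d i ≤ |x i - x j|) (hbd : ∀ i, 2 * d i ≤ bd a b (x i))
    (τ : ι → ℝ) {η : ℝ} (hη : 0 < η) :
    ∃ s : ℝ → ℝ, (∀ t, s t ≠ 0 → t ∈ Ioo a b) ∧ (Integrable fun t => s t / bd a b t) ∧
      ∫ t, |s t / bd a b t| ≤ η ∧ Continuous (cv K s) ∧ (∀ u, |cv K s u| ≤ η) ∧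
      (∀ k' C', Ker k' C' → ∀ u, CvAt k' s u) ∧ ∀ i, |cv k s (x i) - τ i| ≤ η := by
  classical
  have hC := hk.nonneg
  obtain ⟨e, he0, hes, heη'⟩ := exists_pos_summable (ι := ι) (ε := η / (C + 1)) (by positivity)
  have heη1 : (C + 1) * ∑' i, e i ≤ η := by
    rw [le_div_iff₀ (by positivity)] at heη'; linarith
  have he0' : 0 ≤ ∑' i, e i := tsum_nonneg fun i => (he0 i).le
  have heη : ∑' i, e i ≤ η := by nlinarith
  have hCeη : C * ∑' i, e i ≤ η := by nlinarith
  have hsmall : ∀ i, ∃ θ : ℝ, 0 < θ ∧ θ ≤ d i ∧ |τ i| * θ ≤ e i ∧ |τ i| * θ ≤ d i * e i := by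
    intro i
    have h1 : 0 < |τ i| + 1 := by positivity
    have h2 := he0 i
    have h3 := hd i
    refine ⟨min (d i) (min (e i / (|τ i| + 1)) (d i * e i / (|τ i| + 1))), by positivity,
      min_le_left _ _, ?_, ?_⟩
    · calc _ ≤ (|τ i| + 1) * (e i / (|τ i| + 1)) := mul_le_mul (by linarith)
            ((min_le_right _ _).trans (min_le_left _ _)) (by positivity) (by positivity)
        _ = _ := by field_simp
    · calc _ ≤ (|τ i| + 1) * (d i * e i / (|τ i| + 1)) := mul_le_mul (by linarith)
            ((min_le_right _ _).trans (min_le_right _ _)) (by positivity) (by positivity)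
        _ = _ := by field_simp
  choose θ hθ0 hθd hθe hθde using hsmall
  choose Q hQc hQ0 hQi hQK hQ1 using fun i => hU (θ i) (hθ0 i)
  set q : ι → ℝ → ℝ := fun i t => τ i * Q i (t + -x i) with hq
  have hqc : ∀ i, Continuous (q i) := fun i =>
    continuous_const.mul ((hQc i).comp (continuous_id.add continuous_const))
  have hqsupp : ∀ i t, q i t ≠ 0 → |t - x i| < d i := by
    intro i t h
    by_contra! hc
    exact right_ne_zero_of_mul h (hQ0 i _ ((hθd i).trans hc))
  have hqbd : ∀ i t, q i t ≠ 0 → d i ≤ bd a b t := by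
    intro i t h
    have h1 := abs_le.1 (abs_bd_sub_le (a := a) (b := b) t (x i))
    linarith [hqsupp i t h, hbd i]
  have hqIoo : ∀ i t, q i t ≠ 0 → t ∈ Ioo a b := fun i t h =>
    bd_pos.1 ((hd i).trans_le (hqbd i t h))
  have hqcs : ∀ i, HasCompactSupport (q i) := fun i => by
    refine HasCompactSupport.intro (isCompact_Icc (a := a) (b := b)) fun t ht => ?_
    by_contra h0
    exact ht (Ioo_subset_Icc_self (hqIoo i t h0))
  have hqi : ∀ i, Integrable (q i) := fun i => (hqc i).integrable_of_hasCompactSupport (hqcs i)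
  have hcv : ∀ k' i u, cv k' (q i) u = τ i * cv k' (Q i) (u - x i) := by
    intro k' i u
    rw [hq, cv_const_mul, cv_translate]; rfl
  have hqint : ∀ i, ∫ t, |q i t| ≤ d i * e i := by
    intro i
    have : ∫ t, |q i t| = |τ i| * ∫ t, |Q i t| := by
      simp only [hq, abs_mul]
      rw [integral_const_mul, integral_add_right_eq_self (fun t => |Q i t|)]
    rw [this]
    exact (mul_le_mul_of_nonneg_left (hQi i) (abs_nonneg _)).trans (hθde i)
  have hqK : ∀ i u, |cv K (q i) u| ≤ e i := by
    intro i u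
    rw [hcv, abs_mul]
    exact (mul_le_mul_of_nonneg_left (hQK i _) (abs_nonneg _)).trans (hθe i)
  have hdiv : ∀ i t, |q i t / bd a b t| ≤ 1 / d i * |q i t| := by
    intro i t
    by_cases h0 : q i t = 0
    · simp [h0]
    have h1 := hqbd i t h0
    rw [abs_div, abs_of_pos ((hd i).trans_le h1), div_eq_inv_mul, ← one_div]
    exact mul_le_mul_of_nonneg_right (one_div_le_one_div_of_le (hd i) h1) (abs_nonneg _)
  have hdivi : ∀ i, Integrable fun t => q i t / bd a b t := fun i =>
    Integrable.mono' ((hqi i).abs.const_mul _)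
      ((hqi i).aestronglyMeasurable.aemeasurable.div
        continuous_bd.aemeasurable).aestronglyMeasurable
      (Filter.Eventually.of_forall (hdiv i))
  have hdive : ∀ i, ∫ t, |q i t / bd a b t| ≤ e i := by
    intro i
    have := hd i
    calc _ ≤ ∫ t, 1 / d i * |q i t| :=
          integral_mono (hdivi i).abs ((hqi i).abs.const_mul _) (hdiv i)
      _ ≤ 1 / d i * (d i * e i) := by
          rw [integral_const_mul]
          exact mul_le_mul_of_nonneg_left (hqint i) (by positivity)
      _ = e i := by field_simp
  have hdivs : Summable fun i => ∫ t, |q i t / bd a b t| :=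
    Summable.of_nonneg_of_le (fun i => integral_nonneg fun t => abs_nonneg _) hdive hes
  have hfar : ∀ {k' C'}, Ker k' C' → ∀ u i, 2 * d i ≤ |u - x i| →
      ∫ t, |k' (u - t) * q i t| ≤ C' * e i := by
    intro k' C' hk' u i h
    have h1 := (hk'.cvAt_of_far (hqi i) (hd i) (x := u) fun t ht => ?_).2
    · refine h1.trans ((mul_le_mul_of_nonneg_left (hqint i)
        (div_nonneg hk'.nonneg (hd i).le)).trans_eq ?_)
      have := (hd i).ne'
      field_simp
    · have h2 := abs_sub_le u t (x i)
      linarith [hqsupp i t ht]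
  have hone : ∀ u, ∃ c : ι → ℝ, Summable c ∧ ∀ k' C', Ker k' C' → ∃ M, ∀ i,
      ∫ t, |k' (u - t) * q i t| ≤ C' * e i + M * c i := by
    intro u
    by_cases h : ∃ i, |u - x i| < 2 * d i
    · obtain ⟨i₀, hi₀⟩ := h
      refine ⟨fun i => if i = i₀ then 1 else 0, (hasSum_ite_eq i₀ 1).summable,
        fun k' C' hk' => ⟨∫ t, |k' (u - t) * q i₀ t|, fun i => ?_⟩⟩
      by_cases hi : i = i₀
      · subst hi
        simp only [if_true, mul_one]
        linarith [mul_nonneg hk'.nonneg (he0 i).le]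
      · simp only [if_neg hi, mul_zero, add_zero]
        refine hfar hk' u i ?_
        have h1 := hsep i i₀ hi
        have h2 := hsep i₀ i (Ne.symm hi)
        rw [abs_sub_comm] at h2
        have h3 := abs_sub_le (x i) u (x i₀)
        rw [abs_sub_comm (x i) u] at h3
        linarith
    · push Not at h
      exact ⟨fun _ => 0, summable_zero, fun k' C' hk' => ⟨0, fun i => by
        simpa using hfar hk' u i (h i)⟩⟩
  set s : ℝ → ℝ := fun t => ∑' i, q i t with hs
  have hcvs : ∀ {k' C'}, Ker k' C' → ∀ u, CvAt k' s u ∧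
      HasSum (fun i => cv k' (q i) u) (cv k' s u) := by
    intro k' C' hk' u
    obtain ⟨c, hc, h⟩ := hone u
    obtain ⟨M, hM⟩ := h k' C' hk'
    exact cv_tsum (fun i => cvAt_of_continuous hk'.integrable (hqc i) (hqcs i) u)
      (Summable.of_nonneg_of_le (fun i => integral_nonneg fun t => abs_nonneg _) hM
        ((hes.mul_left C').add (hc.mul_left M)))
  have hsdiv : (fun t => s t / bd a b t) = fun t => ∑' i, q i t / bd a b t := by
    ext t; rw [tsum_div_const]
  have hsd := integrable_tsum_of_summable hdivi hdivs
  rw [← hsdiv] at hsd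
  have hKs : cv K s = fun u => ∑' i, cv K (q i) u := by
    ext u; exact (hcvs hK u).2.tsum_eq.symm
  refine ⟨s, fun t ht => ?_, hsd.1, ?_, ?_, fun u => ?_, fun k' C' hk' u => (hcvs hk' u).1,
    fun i => ?_⟩
  · by_contra hc
    refine ht ?_
    have : ∀ i, q i t = 0 := fun i => by
      by_contra h0
      exact hc (hqIoo i t h0)
    simp [hs, this]
  · rw [show (fun t => |s t / bd a b t|) = fun t => |∑' i, q i t / bd a b t| by
      ext t; rw [← congrFun hsdiv t]]
    exact (hsd.2.trans (hdivs.tsum_le_tsum hdive hes)).trans heη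
  · rw [hKs]
    exact continuous_tsum (fun i => continuous_cv hK.integrable (hqc i) (hqcs i)) hes hqK
  · rw [hKs]
    exact (tsum_of_norm_bounded (f := fun i => cv K (q i) u) hes.hasSum (hqK · u)).trans heη
  · have hii : cv k (q i) (x i) = τ i := by rw [hcv, sub_self, hQ1, mul_one]
    have h1 := (hcvs hk (x i)).2.sub (hasSum_ite_eq i (τ i))
    refine (h1.norm_le_of_bounded (hes.mul_left C).hasSum fun j => ?_).trans ?_
    · by_cases hj : j = i
      · subst hj
        simp [hii, mul_nonneg hC (he0 j).le]
      · simp only [if_neg hj, sub_zero]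
        refine (abs_integral_le_integral_abs).trans (hfar hk (x i) j ?_)
        have := hsep j i hj
        rw [abs_sub_comm] at this
        linarith [hd j]
    · rw [tsum_mul_left]; exact hCeη

/-- In an infinite set of reals there is a sequence of distinct points, each isolated from the
other ones. -/
lemma exists_seq_separated {S : Set ℝ} (hS : S.Infinite) :
    ∃ x : ℕ → ℝ, (∀ n, x n ∈ S) ∧ ∀ n, ∃ ρ > 0, ∀ m, m ≠ n → ρ ≤ |x n - x m| := by
  have := hS.to_subtype
  obtain ⟨U, hUi, hUo, hUd⟩ := exists_seq_infinite_isOpen_pairwise_disjoint S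
  choose u hu using fun n => (hUi n).nonempty
  refine ⟨fun n => u n, fun n => (u n).2, fun n => ?_⟩
  obtain ⟨ρ, hρ, hb⟩ := Metric.isOpen_iff.1 (hUo n) (u n) (hu n)
  refine ⟨ρ, hρ, fun m hm => ?_⟩
  by_contra! hc
  refine Set.disjoint_left.1 (hUd hm) (hu m) (hb ?_)
  rw [Metric.mem_ball, Subtype.dist_eq, Real.dist_eq, abs_sub_comm]
  exact hc

lemma exists_separated_of_finite {S : Set ℝ} (hS : S.Finite) (i : S) :
    ∃ ρ > 0, ∀ j : S, j ≠ i → ρ ≤ |(i : ℝ) - j| := by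
  have := hS.to_subtype
  obtain ⟨ρ, hρ, hb⟩ := Metric.isOpen_iff.1 (isOpen_discrete ({i} : Set S)) i rfl
  refine ⟨ρ, hρ, fun j hj => ?_⟩
  by_contra! hc
  refine hj (hb ?_)
  rw [Metric.mem_ball, Subtype.dist_eq, Real.dist_eq, abs_sub_comm]
  exact hc

/-- Properties of a small correction `q` of `f` for which both convolutions of `f + q` exist and
the image under `cv (kp + km)` is `φ + Ψ`. -/
structure Correction (kp km f φ : ℝ → ℝ) (a b η : ℝ) (q Ψ : ℝ → ℝ) : Prop where
  supp : ∀ t, q t ≠ 0 → t ∈ Ioo a b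
  integrable_div : Integrable fun t => q t / bd a b t
  integral_div : ∫ t, |q t / bd a b t| ≤ η
  cont : Continuous Ψ
  bound : ∀ x, |Ψ x| ≤ η
  cvAt_left : ∀ x ∈ Ioo a b, CvAt kp (fun t => f t + q t) x
  cvAt_right : ∀ x ∈ Ioo a b, CvAt km (fun t => f t + q t) x
  eq : ∀ x ∈ Ioo a b, cv (fun s => kp s + km s) (fun t => f t + q t) x = φ x + Ψ x
  eq_end : ∀ x ∈ ({a, b} : Set ℝ), cv (fun s => kp s + km s) q x = Ψ x

/-- The points where exactly one of the two convolutions of `f` exists, together with the value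
there of the corresponding convolution of `q`. -/
def OneSided (kp km f : ℝ → ℝ) (a b : ℝ) (q : ℝ → ℝ) (x v : ℝ) : Prop :=
  x ∈ Ioo a b ∧ ((¬ CvAt kp f x ∧ CvAt km f x ∧ v = cv km q x) ∨
    (CvAt kp f x ∧ ¬ CvAt km f x ∧ v = cv kp q x))

section
variable {kp km f φ : ℝ → ℝ} {Cp Cm a b η : ℝ}

lemma exists_correction_bumps (hp : Ker kp Cp) (hm : Ker km Cm)
    (hU : Unb kp (fun s => kp s + km s)) (hη : 0 < η) {r Ψ : ℝ → ℝ}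
    (hr : Correction kp km f φ a b (η / 3) r Ψ) {ι : Type*} [Countable ι] {x : ι → ℝ}
    (hx : ∀ i, x i ∈ Ioo a b) (hsep : ∀ i, ∃ ρ > 0, ∀ j, j ≠ i → ρ ≤ |x i - x j|) (M : ι → ℝ) :
    ∃ q Ψ', Correction kp km f φ a b η q Ψ' ∧
      ∀ i v, OneSided kp km f a b q (x i) v → |(|v| - |M i|)| ≤ η := by
  classical
  set K : ℝ → ℝ := fun s => kp s + km s with hKdef
  have hK : Ker K (Cp + Cm) := hp.add hm
  choose ρ hρ0 hρ using hsep
  set d : ι → ℝ := fun i => min (ρ i / 4) (bd a b (x i) / 2) with hd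
  have hd0 : ∀ i, 0 < d i := fun i =>
    lt_min (by linarith [hρ0 i]) (half_pos (bd_pos.2 (hx i)))
  have hd1 : ∀ i, d i ≤ ρ i / 4 := fun i => min_le_left _ _
  have hd2 : ∀ i, d i ≤ bd a b (x i) / 2 := fun i => min_le_right _ _
  set τ : ι → ℝ := fun i => if CvAt kp f (x i) then -cv kp r (x i) + M i
    else cv km r (x i) + M i with hτ
  obtain ⟨s, hs0, hsi, hsint, hsc, hsb, hscv, hsτ⟩ := exists_bumps (a := a) (b := b) hp hK hU hd0
    (fun i j hij => by linarith [hρ i j (Ne.symm hij), hd1 i]) (fun i => by linarith [hd2 i]) τ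
    (η := η / 3) (by linarith)
  have hadd : (fun t => (r t + s t) / bd a b t) = fun t => r t / bd a b t + s t / bd a b t := by
    ext t; rw [add_div]
  have hassoc : (fun t => f t + (r t + s t)) = fun t => (f t + r t) + s t := by
    ext t; ring
  refine ⟨fun t => r t + s t, fun u => Ψ u + cv K s u,
    ⟨fun t ht => ?_, ?_, ?_, hr.cont.add hsc, fun u => ?_, fun u hu => ?_, fun u hu => ?_,
      fun u hu => ?_, fun u hu => ?_⟩, fun i v hv => ?_⟩
  · by_cases h : r t = 0
    · exact hs0 t fun h' => ht (by simp [h, h'])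
    · exact hr.supp t h
  · rw [hadd]; exact hr.integrable_div.add hsi
  · calc _ ≤ ∫ t, (|r t / bd a b t| + |s t / bd a b t|) := by
          simp only [add_div]
          exact integral_mono (hr.integrable_div.add hsi).abs
            (hr.integrable_div.abs.add hsi.abs) fun t => abs_add_le _ _
      _ = _ := integral_add hr.integrable_div.abs hsi.abs
      _ ≤ η := by linarith [hr.integral_div]
  · exact (abs_add_le _ _).trans (by linarith [hr.bound u, hsb u])
  · rw [hassoc]; exact (hr.cvAt_left u hu).add (hscv _ _ hp u)
  · rw [hassoc]; exact (hr.cvAt_right u hu).add (hscv _ _ hm u)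
  · rw [hassoc, cv_add ((hr.cvAt_left u hu).add_kernel (hr.cvAt_right u hu)) (hscv _ _ hK u),
      hr.eq u hu, add_assoc]
  · have hu' : u ∉ Ioo a b := by
      rcases hu with rfl | rfl
      · simp
      · simp
    rw [cv_add (hK.cvAt_of_div_bd hr.supp hr.integrable_div hu').1 (hscv _ _ hK u), hr.eq_end u hu]
  · have hKs : cv K s (x i) = cv kp s (x i) + cv km s (x i) :=
      cv_add_kernel (hscv _ _ hp _) (hscv _ _ hm _)
    have h1 := hsb (x i)
    have h2 := hsτ i
    obtain ⟨hxi, ⟨hpf, hmf, hv⟩ | ⟨hpf, hmf, hv⟩⟩ := hv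
    · have hrm : CvAt km r (x i) := by
        simpa using (hr.cvAt_right _ hxi).sub hmf
      have hτi : τ i = cv km r (x i) + M i := by simp [hτ, hpf]
      rw [cv_add hrm (hscv _ _ hm _)] at hv
      have : |v + M i| ≤ η := by
        rw [show v + M i = cv K s (x i) - (cv kp s (x i) - τ i) by rw [hv, hKs, hτi]; ring]
        exact (abs_sub _ _).trans (by linarith)
      have h3 := abs_abs_sub_abs_le v (-M i)
      rw [abs_neg, sub_neg_eq_add] at h3
      exact h3.trans this
    · have hrp : CvAt kp r (x i) := by
        simpa using (hr.cvAt_left _ hxi).sub hpf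
      have hτi : τ i = -cv kp r (x i) + M i := by simp [hτ, hpf]
      rw [cv_add hrp (hscv _ _ hp _)] at hv
      refine (abs_abs_sub_abs_le v (M i)).trans ?_
      rw [show v - M i = cv kp s (x i) - τ i by rw [hv, hτi]; ring]
      linarith

lemma Correction.mono {q Ψ : ℝ → ℝ} {η' : ℝ} (h : Correction kp km f φ a b η q Ψ)
    (hη : η ≤ η') : Correction kp km f φ a b η' q Ψ :=
  { h with
    integral_div := h.integral_div.trans hη
    bound := fun x => (h.bound x).trans hη }

lemma exists_correction (hp : Ker kp Cp) (hm : Ker km Cm)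
    (hap : AvgDom (-1) kp (b - a + 1)) (ham : AvgDom 1 km (b - a + 1))
    (hf : Integrable f) (hf0 : ∀ t, f t ≠ 0 → t ∈ Ioo a b) (hφ : Continuous φ)
    (hfφ : ∀ᵐ x, x ∈ Ioo a b → cv (fun s => kp s + km s) f x = φ x) (hη : 0 < η) :
    ∃ q Ψ, Correction kp km f φ a b η q Ψ ∧
      ((∀ M, ∃ x v, OneSided kp km f a b q x v ∧ M < |v|) ∨
        ∀ x v, OneSided kp km f a b q x v → |v| ≤ η) := by
  obtain ⟨r, Ψ, h1, h2, h3, h4, h5, h6, h7, h8⟩ :=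
    exists_repair hp hm hap ham hf hf0 hφ hfφ (η := η / 3) (by linarith)
  have hr : Correction kp km f φ a b (η / 3) r Ψ :=
    ⟨h1, h2, h3, h4, h5, fun x hx => (h6 x hx).1, fun x hx => (h6 x hx).2.1,
      fun x hx => (h6 x hx).2.2, h7⟩
  by_cases hU : Unb kp (fun s => kp s + km s)
  swap
  · refine ⟨r, Ψ, hr.mono (by linarith), Or.inr ?_⟩
    rintro x v ⟨hx, ⟨hpf, hmf, rfl⟩ | ⟨hpf, hmf, rfl⟩⟩
    · exact ((h8 hU x hx).2 hmf).trans (by linarith)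
    · exact ((h8 hU x hx).1 hpf).trans (by linarith)
  set S : Set ℝ := {x | x ∈ Ioo a b ∧
    ((¬ CvAt kp f x ∧ CvAt km f x) ∨ (CvAt kp f x ∧ ¬ CvAt km f x))} with hS
  have hone : ∀ {q : ℝ → ℝ} {x v : ℝ}, OneSided kp km f a b q x v → x ∈ S := by
    rintro q x v ⟨hx, ⟨h, h', -⟩ | ⟨h, h', -⟩⟩
    · exact ⟨hx, Or.inl ⟨h, h'⟩⟩
    · exact ⟨hx, Or.inr ⟨h, h'⟩⟩
  by_cases hSf : S.Finite
  · have : Countable S := hSf.countable.to_subtype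
    obtain ⟨q, Ψ', hq, hv⟩ := exists_correction_bumps hp hm hU hη hr (x := fun i : S => (i : ℝ))
      (fun i => i.2.1) (exists_separated_of_finite hSf) (fun _ => 0)
    refine ⟨q, Ψ', hq, Or.inr fun x v h => ?_⟩
    simpa using hv ⟨x, hone h⟩ v h
  · obtain ⟨x, hxS, hsep⟩ := exists_seq_separated hSf
    obtain ⟨q, Ψ', hq, hv⟩ := exists_correction_bumps hp hm hU hη hr (x := x)
      (fun i => (hxS i).1) hsep (fun n => (n : ℝ))
    refine ⟨q, Ψ', hq, Or.inl fun M => ?_⟩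
    obtain ⟨n, hn⟩ := exists_nat_gt (M + η)
    have hM : ∀ v, OneSided kp km f a b q (x n) v → M < |v| := by
      intro v h
      have := (abs_le.1 (hv n v h)).1
      rw [Nat.abs_cast] at this
      linarith
    obtain ⟨hx, ⟨h, h'⟩ | ⟨h, h'⟩⟩ := hxS n
    · exact ⟨x n, _, ⟨hx, Or.inl ⟨h, h', rfl⟩⟩, hM _ ⟨hx, Or.inl ⟨h, h', rfl⟩⟩⟩
    · exact ⟨x n, _, ⟨hx, Or.inr ⟨h, h', rfl⟩⟩, hM _ ⟨hx, Or.inr ⟨h, h', rfl⟩⟩⟩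

end

/-- The power kernel `s ^ (-e)` truncated to `(0, B)`. -/
def pw (e B : ℝ) : ℝ → ℝ := (Ioo 0 B).indicator fun s => s ^ (-e)

section
variable {e B : ℝ}

lemma pw_nonneg (s : ℝ) : 0 ≤ pw e B s :=
  indicator_nonneg (fun _ hs => rpow_nonneg hs.1.le _) s

lemma pw_of_mem {s : ℝ} (hs : s ∈ Ioo 0 B) : pw e B s = s ^ (-e) := indicator_of_mem hs _

lemma pw_of_notMem {s : ℝ} (hs : s ∉ Ioo 0 B) : pw e B s = 0 := indicator_of_notMem hs _

lemma ker_pw (he : e ∈ Ioo (0 : ℝ) 1) (hB : 0 < B) : Ker (pw e B) (B ^ (1 - e)) where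
  meas := (measurable_id.pow_const _).indicator measurableSet_Ioo
  integrable := by
    have h : IntegrableOn (fun s : ℝ => s ^ (-e)) (Ioc 0 B) :=
      (intervalIntegrable_iff_integrableOn_Ioc_of_le hB.le).1
        (intervalIntegral.intervalIntegrable_rpow' (by linarith [he.2]))
    exact (integrable_indicator_iff measurableSet_Ioo).2 (h.mono_set Ioo_subset_Ioc_self)
  bound s := by
    by_cases hs : s ∈ Ioo 0 B
    · have e1 : s * s ^ (-e) = s ^ (1 - e) := by
        rw [sub_eq_add_neg, rpow_add hs.1, rpow_one]
      rw [pw_of_mem hs, e1, abs_of_nonneg (rpow_nonneg hs.1.le _)]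
      exact rpow_le_rpow hs.1.le hs.2.le (by linarith [he.2])
    · rw [pw_of_notMem hs]; simp; positivity
  cont := by
    refine ⟨{0, B}, (Set.countable_singleton B).insert 0, fun s hs => ?_⟩
    simp only [mem_insert_iff, mem_singleton_iff, not_or] at hs
    by_cases hm : s ∈ Ioo 0 B
    · refine (continuousAt_rpow_const s (-e) (Or.inl hs.1)).congr ?_
      filter_upwards [Ioo_mem_nhds hm.1 hm.2] with u hu
      exact (pw_of_mem hu).symm
    · have : s ∈ (Icc 0 B)ᶜ := by
        intro h
        exact hm ⟨lt_of_le_of_ne h.1 (Ne.symm hs.1), lt_of_le_of_ne h.2 hs.2⟩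
      refine continuousAt_const.congr (f := fun _ => (0 : ℝ)) ?_
      filter_upwards [isClosed_Icc.isOpen_compl.mem_nhds this] with u hu
      exact (pw_of_notMem fun h => hu (Ioo_subset_Icc_self h)).symm
  supp := by
    refine ⟨B, fun s hs => pw_of_notMem fun h => ?_⟩
    rw [abs_of_pos h.1] at hs
    linarith [h.2]

lemma Ker.comp_neg {k : ℝ → ℝ} {C : ℝ} (hk : Ker k C) : Ker (fun s => k (-s)) C where
  meas := hk.meas.comp measurable_neg
  integrable := hk.integrable.comp_neg
  bound s := by
    have := hk.bound (-s)
    rwa [neg_mul, abs_neg] at this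
  cont := by
    obtain ⟨Z, hZ, hc⟩ := hk.cont
    refine ⟨(fun s => -s) '' Z, hZ.image _, fun s hs => ?_⟩
    exact ContinuousAt.comp (g := k) (f := fun s => -s)
      (hc (-s) fun h => hs ⟨-s, h, neg_neg s⟩) continuousAt_neg
  supp := by
    obtain ⟨D, hD⟩ := hk.supp
    exact ⟨D, fun s hs => hD _ (by rwa [abs_neg])⟩

lemma AvgDom.const_mul {σ R : ℝ} {k : ℝ → ℝ} (h : AvgDom σ k R) (c : ℝ) :
    AvgDom σ (fun s => c * k s) R := by
  obtain ⟨C, hC⟩ := h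
  refine ⟨C, fun τ hτ ε hε => ?_⟩
  simp only [abs_mul]
  rw [intervalIntegral.integral_const_mul, abs_mul, abs_abs]
  calc _ ≤ |c| * (C * ε * |k τ|) := mul_le_mul_of_nonneg_left (hC τ hτ ε hε) (abs_nonneg c)
    _ = _ := by ring

lemma AvgDom.comp_neg {σ R : ℝ} {k : ℝ → ℝ} (h : AvgDom σ k R) :
    AvgDom (-σ) (fun s => k (-s)) R := by
  obtain ⟨C, hC⟩ := h
  refine ⟨C, fun τ hτ ε hε => ?_⟩
  rw [intervalIntegral.integral_comp_neg (fun u => |k u|), intervalIntegral.integral_symm, abs_neg]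
  rw [show -(τ + -σ * ε) = -τ + σ * ε by ring]
  exact hC (-τ) (by rwa [abs_neg]) ε hε

lemma avgDom_pw (he : e ∈ Ioo (0 : ℝ) 1) {R : ℝ} (hR : R < B) : AvgDom (-1) (pw e B) R := by
  have he1 : 0 < 1 - e := by linarith [he.2]
  refine ⟨2 / (1 - e), fun τ hτ ε hε => ?_⟩
  have hτR := (abs_le.1 hτ).2
  rw [show τ + -1 * ε = τ - ε by ring, intervalIntegral.integral_symm, abs_neg]
  simp_rw [abs_of_nonneg (pw_nonneg _)]
  have hle : τ - ε ≤ τ := by linarith [hε.1]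
  rcases le_or_gt τ 0 with h0 | h0
  · have : ∫ u in (τ - ε)..τ, pw e B u = 0 := by
      refine intervalIntegral.integral_zero_ae (Filter.Eventually.of_forall fun u hu => ?_)
      rw [uIoc_of_le hle] at hu
      exact pw_of_notMem fun h => by linarith [h.1, hu.2]
    rw [this, abs_zero]
    exact mul_nonneg (mul_nonneg (by positivity) hε.1.le) (pw_nonneg _)
  have hB : 0 < B := by linarith
  have hk := (ker_pw he hB).integrable
  rw [pw_of_mem ⟨h0, by linarith⟩,
    abs_of_nonneg (intervalIntegral.integral_nonneg hle fun u _ => pw_nonneg u)]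
  have hτe : 0 < τ ^ (-e) := rpow_pos_of_pos h0 _
  rcases le_or_gt (τ / 2) ε with hετ | hετ
  · have h1 : ∫ u in (τ - ε)..τ, pw e B u ≤ ∫ u in (-1)..τ, pw e B u :=
      intervalIntegral.integral_mono_interval (by linarith [hε.2]) hle le_rfl
        (Filter.Eventually.of_forall fun u => pw_nonneg u) hk.intervalIntegrable
    have h2 : ∫ u in (-1)..(0 : ℝ), pw e B u = 0 := by
      refine intervalIntegral.integral_zero_ae (Filter.Eventually.of_forall fun u hu => ?_)
      rw [uIoc_of_le (by norm_num)] at hu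
      exact pw_of_notMem fun h => by linarith [h.1, hu.2]
    have h3 : ∫ u in (0 : ℝ)..τ, pw e B u = τ ^ (1 - e) / (1 - e) := by
      have : ∫ u in (0 : ℝ)..τ, pw e B u = ∫ u in (0 : ℝ)..τ, u ^ (-e) := by
        refine intervalIntegral.integral_congr_ae (Filter.Eventually.of_forall fun u hu => ?_)
        rw [uIoc_of_le h0.le] at hu
        exact pw_of_mem ⟨hu.1, by linarith [hu.2]⟩
      rw [this, integral_rpow (Or.inl (by linarith)), show -e + 1 = 1 - e by ring,
        zero_rpow he1.ne', sub_zero]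
    rw [← intervalIntegral.integral_add_adjacent_intervals (a := -1) (b := 0) hk.intervalIntegrable
      hk.intervalIntegrable, h2, h3, zero_add] at h1
    refine h1.trans ?_
    rw [sub_eq_add_neg, rpow_add h0, rpow_one, ← sub_eq_add_neg, div_mul_eq_mul_div,
      div_mul_eq_mul_div]
    exact div_le_div_of_nonneg_right (mul_le_mul_of_nonneg_right (by linarith) hτe.le) he1.le
  · have h1 : ∫ u in (τ - ε)..τ, pw e B u ≤ ∫ _ in (τ - ε)..τ, 2 * τ ^ (-e) := by
      refine intervalIntegral.integral_mono_on hle hk.intervalIntegrable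
        intervalIntegrable_const fun u hu => ?_
      have hu2 : τ / 2 ≤ u := by linarith [hu.1]
      rw [pw_of_mem ⟨by linarith, by linarith [hu.2]⟩]
      calc u ^ (-e) ≤ (τ / 2) ^ (-e) :=
            rpow_le_rpow_of_nonpos (by linarith) hu2 (by linarith [he.1])
        _ = 2 ^ e * τ ^ (-e) := by
            rw [div_rpow h0.le (by norm_num), rpow_neg (by norm_num : (0 : ℝ) ≤ 2)]
            field_simp
        _ ≤ 2 * τ ^ (-e) := by
            refine mul_le_mul_of_nonneg_right ?_ hτe.le
            calc (2 : ℝ) ^ e ≤ 2 ^ (1 : ℝ) :=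
                  rpow_le_rpow_of_exponent_le (by norm_num) he.2.le
              _ = 2 := rpow_one 2
    rw [intervalIntegral.integral_const, smul_eq_mul, show τ - (τ - ε) = ε by ring] at h1
    refine h1.trans ?_
    have h2 : 2 ≤ 2 / (1 - e) := by
      rw [le_div_iff₀ he1]; linarith [he.1]
    nlinarith [mul_pos hε.1 hτe]

end

/-- The kernel of the left part of the combined Caputo derivative. -/
def kerL (a b α γ : ℝ) (s : ℝ) : ℝ := γ / Gamma (1 - α) * pw α (b - a + 3) s

/-- The kernel of the right part of the combined Caputo derivative. -/
def kerR (a b β γ : ℝ) (s : ℝ) : ℝ := -((1 - γ) / Gamma (1 - β)) * pw β (b - a + 3) (-s)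

section
variable {a b α β γ : ℝ}

lemma ker_kerL (hab : a < b) (hα : α ∈ Ioo (0 : ℝ) 1) : ∃ C, Ker (kerL a b α γ) C :=
  ⟨_, (ker_pw hα (by linarith)).const_mul _⟩

lemma ker_kerR (hab : a < b) (hβ : β ∈ Ioo (0 : ℝ) 1) : ∃ C, Ker (kerR a b β γ) C :=
  ⟨_, (ker_pw hβ (by linarith)).comp_neg.const_mul _⟩

lemma avgDom_kerL (hα : α ∈ Ioo (0 : ℝ) 1) : AvgDom (-1) (kerL a b α γ) (b - a + 1) :=
  (avgDom_pw hα (by linarith)).const_mul _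

lemma avgDom_kerR (hβ : β ∈ Ioo (0 : ℝ) 1) : AvgDom 1 (kerR a b β γ) (b - a + 1) := by
  have := ((avgDom_pw (B := b - a + 3) (R := b - a + 1) hβ (by linarith)).comp_neg).const_mul
    (-((1 - γ) / Gamma (1 - β)))
  rwa [neg_neg] at this

/-- The combined Caputo derivative of a primitive of `F`. -/
def capJ (a b α β γ : ℝ) (F : ℝ → ℝ) (x : ℝ) : ℝ :=
  cv (kerL a b α γ) F x + cv (kerR a b β γ) F x

lemma cv_kerL {F : ℝ → ℝ} {x : ℝ} (hx : x ∈ Icc a b) :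
    cv (kerL a b α γ) ((Ioo a b).indicator F) x =
      γ * (1 / Gamma (1 - α) * ∫ t in a..x, (x - t) ^ (-α) * F t) := by
  have : cv (kerL a b α γ) ((Ioo a b).indicator F) x =
      γ / Gamma (1 - α) * cv (pw α (b - a + 3)) ((Ioo a b).indicator F) x := by
    unfold cv kerL
    rw [← integral_const_mul]; simp_rw [mul_assoc]
  rw [this, intervalIntegral.integral_of_le hx.1, integral_Ioc_eq_integral_Ioo,
    ← integral_indicator measurableSet_Ioo]
  have : cv (pw α (b - a + 3)) ((Ioo a b).indicator F) x =
      ∫ t, (Ioo a x).indicator (fun t => (x - t) ^ (-α) * F t) t := by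
    refine integral_congr_ae (Filter.Eventually.of_forall fun t => ?_)
    by_cases ht : t ∈ Ioo a x
    · simp only [indicator_of_mem ht]
      rw [indicator_of_mem (show t ∈ Ioo a b from ⟨ht.1, ht.2.trans_le hx.2⟩),
        pw_of_mem ⟨by linarith [ht.2], by linarith [ht.1, hx.2]⟩]
    · simp only [indicator_of_notMem ht]
      by_cases h2 : t ∈ Ioo a b
      · rw [pw_of_notMem, zero_mul]
        exact fun h => ht ⟨h2.1, by linarith [h.1]⟩
      · rw [indicator_of_notMem h2, mul_zero]
  rw [this]; ring

lemma cv_kerR {F : ℝ → ℝ} {x : ℝ} (hx : x ∈ Icc a b) :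
    cv (kerR a b β γ) ((Ioo a b).indicator F) x =
      (1 - γ) * (-(1 / Gamma (1 - β)) * ∫ t in x..b, (t - x) ^ (-β) * F t) := by
  have : cv (kerR a b β γ) ((Ioo a b).indicator F) x = -((1 - γ) / Gamma (1 - β)) *
      cv (fun s => pw β (b - a + 3) (-s)) ((Ioo a b).indicator F) x := by
    unfold cv kerR
    rw [← integral_const_mul]; simp_rw [mul_assoc]
  rw [this, intervalIntegral.integral_of_le hx.2, integral_Ioc_eq_integral_Ioo,
    ← integral_indicator measurableSet_Ioo]
  have : cv (fun s => pw β (b - a + 3) (-s)) ((Ioo a b).indicator F) x =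
      ∫ t, (Ioo x b).indicator (fun t => (t - x) ^ (-β) * F t) t := by
    refine integral_congr_ae (Filter.Eventually.of_forall fun t => ?_)
    by_cases ht : t ∈ Ioo x b
    · simp only [indicator_of_mem ht]
      rw [indicator_of_mem (show t ∈ Ioo a b from ⟨hx.1.trans_lt ht.1, ht.2⟩),
        neg_sub, pw_of_mem ⟨by linarith [ht.1], by linarith [ht.2, hx.1]⟩]
    · simp only [indicator_of_notMem ht, neg_sub]
      by_cases h2 : t ∈ Ioo a b
      · rw [pw_of_notMem, zero_mul]
        exact fun h => ht ⟨by linarith [h.1], h2.2⟩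
      · rw [indicator_of_notMem h2, mul_zero]
  rw [this]; ring

lemma combCaputo_eq_capJ {Y : ℝ → ℝ} {x : ℝ} (hx : x ∈ Icc a b) :
    combCaputo a b α β γ Y x = capJ a b α β γ ((Ioo a b).indicator (deriv Y)) x := by
  unfold combCaputo capJ caputoLeft caputoRight
  rw [cv_kerL hx, cv_kerR hx]

end

/-- Continuous functions compactly supported in `(a, b)`. -/
def testFn (a b : ℝ) : Submodule ℝ (ℝ → ℝ) where
  carrier := {p | Continuous p ∧ tsupport p ⊆ Ioo a b}
  add_mem' := fun {p q} hp hq => ⟨hp.1.add hq.1,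
    (tsupport_add p q).trans (union_subset hp.2 hq.2)⟩
  zero_mem' := ⟨continuous_zero, by simp [tsupport]⟩
  smul_mem' := fun c p hp => ⟨hp.1.const_smul c,
    (closure_mono (Function.support_const_smul_subset c p)).trans hp.2⟩

section
variable {a b : ℝ}

lemma hasCompactSupport_of_mem_testFn {p : ℝ → ℝ} (hp : p ∈ testFn a b) : HasCompactSupport p :=
  isCompact_Icc.of_isClosed_subset (isClosed_tsupport p) (hp.2.trans Ioo_subset_Icc_self)

lemma continuous_mul_testFn {w p : ℝ → ℝ} (hw : ContinuousOn w (Ioo a b)) (hp : p ∈ testFn a b) :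
    Continuous fun t => w t * p t := by
  refine ContinuousOn.continuous_of_tsupport_subset (s := Ioo a b) (hw.mul hp.1.continuousOn)
    isOpen_Ioo ?_
  exact (tsupport_mul_subset_right (f := w) (g := p)).trans hp.2

lemma integrable_mul_testFn {w p : ℝ → ℝ} (hw : ContinuousOn w (Ioo a b)) (hp : p ∈ testFn a b) :
    Integrable fun t => w t * p t :=
  (continuous_mul_testFn hw hp).integrable_of_hasCompactSupport
    ((hasCompactSupport_of_mem_testFn hp).mul_left (f := w))

/-- Integration against `w` as a linear form on test functions. -/
def pairing (w : ℝ → ℝ) (hw : ContinuousOn w (Ioo a b)) : testFn a b →ₗ[ℝ] ℝ where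
  toFun p := ∫ t, w t * p.1 t
  map_add' p q := by
    simp only [Submodule.coe_add, Pi.add_apply, mul_add]
    exact integral_add (integrable_mul_testFn hw p.2) (integrable_mul_testFn hw q.2)
  map_smul' c p := by
    simp only [Submodule.coe_smul, Pi.smul_apply, smul_eq_mul, RingHom.id_apply]
    rw [← integral_const_mul]
    congr 1; ext t; ring

lemma eq_zero_of_pairing {w : ℝ → ℝ} (hw : ContinuousOn w (Ioo a b))
    (h : ∀ p ∈ testFn a b, ∫ t, w t * p t = 0) : ∀ t ∈ Ioo a b, w t = 0 := by
  have h1 := isOpen_Ioo.ae_eq_zero_of_integral_contDiff_smul_eq_zero (U := Ioo a b) (f := w)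
    (μ := volume) (hw.locallyIntegrableOn measurableSet_Ioo) fun g hg _ hgs => by
      simpa [mul_comm] using h g ⟨hg.continuous, hgs⟩
  have h2 : w =ᵐ[volume.restrict (Ioo a b)] fun _ => 0 :=
    (ae_restrict_iff' measurableSet_Ioo).2 h1
  exact Measure.eqOn_open_of_ae_eq h2 isOpen_Ioo hw continuousOn_const

section
variable {ι : Type*} [Fintype ι] {ω : ι → ℝ → ℝ}

lemma exists_multiplier (hω : ∀ j, ContinuousOn (ω j) (Ioo a b))
    {w : ℝ → ℝ} (hw : ContinuousOn w (Ioo a b))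
    (h : ∀ p ∈ testFn a b, (∀ j, ∫ t, ω j t * p t = 0) → ∫ t, w t * p t = 0) :
    ∃ c : ι → ℝ, ∀ t ∈ Ioo a b, w t = ∑ j, c j * ω j t := by
  have hmem : pairing w hw ∈ Submodule.span ℝ (range fun j => pairing (ω j) (hω j)) := by
    refine mem_span_of_iInf_ker_le_ker fun p hp => ?_
    simp only [Submodule.mem_iInf, LinearMap.mem_ker] at hp
    exact h p.1 p.2 hp
  obtain ⟨c, hc⟩ := (Submodule.mem_span_range_iff_exists_fun ℝ).1 hmem
  refine ⟨c, fun t ht => ?_⟩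
  have hsum : ContinuousOn (fun t => ∑ j, c j * ω j t) (Ioo a b) :=
    continuousOn_finsetSum _ fun j _ => continuousOn_const.mul (hω j)
  have := eq_zero_of_pairing (hw.sub hsum) (fun p hp => ?_) t ht
  · simpa [sub_eq_zero] using this
  · have h1 : ∑ j, c j * ∫ t, ω j t * p t = ∫ t, w t * p t := by
      have h2 := congrArg (fun F : testFn a b →ₗ[ℝ] ℝ => F ⟨p, hp⟩) hc
      simp only [LinearMap.sum_apply, LinearMap.smul_apply, smul_eq_mul] at h2
      exact h2
    simp only [Pi.sub_apply, sub_mul]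
    have hi : ∀ j, Integrable fun t => c j * ω j t * p t := fun j => by
      simpa [mul_assoc] using (integrable_mul_testFn (hω j) hp).const_mul (c j)
    rw [integral_sub (integrable_mul_testFn hw hp) (integrable_mul_testFn hsum hp), ← h1]
    simp_rw [Finset.sum_mul]
    rw [integral_finsetSum _ fun j _ => hi j]
    simp_rw [mul_assoc, integral_const_mul]
    simp

lemma exists_dual (hω : ∀ j, ContinuousOn (ω j) (Ioo a b)) [DecidableEq ι]
    (hind : ∀ c : ι → ℝ, (∀ t ∈ Ioo a b, ∑ j, c j * ω j t = 0) → c = 0) :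
    ∃ e : ι → ℝ → ℝ, (∀ j, e j ∈ testFn a b) ∧
      ∀ i j, ∫ t, ω i t * e j t = if i = j then 1 else 0 := by
  set Λ : testFn a b →ₗ[ℝ] (ι → ℝ) := LinearMap.pi fun j => pairing (ω j) (hω j) with hΛ
  have hsurj : LinearMap.range Λ = ⊤ := by
    by_contra hne
    obtain ⟨F, hF0, hF⟩ := Submodule.exists_le_ker_of_lt_top _ (lt_top_iff_ne_top.2 hne)
    refine hF0 ?_
    have hsum : ContinuousOn (fun t => ∑ j, F (Pi.single j 1) * ω j t) (Ioo a b) :=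
      continuousOn_finsetSum _ fun j _ => continuousOn_const.mul (hω j)
    have hFv : ∀ v : ι → ℝ, F v = ∑ j, F (Pi.single j 1) * v j := fun v => by
      conv_lhs => rw [← Finset.univ_sum_single v]
      rw [map_sum]
      refine Finset.sum_congr rfl fun j _ => ?_
      rw [show Pi.single j (v j) = v j • (Pi.single j (1 : ℝ) : ι → ℝ) by
        rw [← Pi.single_smul]; simp, map_smul, smul_eq_mul, mul_comm]
    have hc := hind (fun j => F (Pi.single j 1)) (eq_zero_of_pairing hsum fun p hp => by
      have h0 : F (Λ ⟨p, hp⟩) = 0 := hF ⟨_, rfl⟩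
      rw [hFv] at h0
      have hi : ∀ j, Integrable fun t => F (Pi.single j 1) * ω j t * p t := fun j => by
        simpa [mul_assoc] using (integrable_mul_testFn (hω j) hp).const_mul (F (Pi.single j 1))
      simp_rw [Finset.sum_mul]
      rw [integral_finsetSum _ fun j _ => hi j]
      simp_rw [mul_assoc, integral_const_mul]
      exact h0)
    ext j
    simpa using congrFun hc j
  choose e he using fun j => LinearMap.range_eq_top.1 hsurj (Pi.single j 1)
  refine ⟨fun j => e j, fun j => (e j).2, fun i j => ?_⟩
  have := congrFun (he j) i
  rw [Pi.single_apply] at this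
  exact this

end

lemma blowup_left {v : ℝ → ℝ} {c₁ c₂ α β : ℝ} (hab : a < b) (hβ : 0 < β)
    (hv : ContinuousWithinAt v (Icc a b) a)
    (h : ∀ t ∈ Ioo a b, v t = c₁ * (t - a) ^ (-β) + c₂ * (b - t) ^ (-α)) : c₁ = 0 := by
  have hne : (nhdsWithin a (Ioo a b)).NeBot := by
    rw [nhdsWithin_Ioo_eq_nhdsGT hab]; infer_instance
  have hpow : Filter.Tendsto (fun t => (t - a) ^ β) (nhdsWithin a (Ioo a b)) (nhds 0) := by
    have : ContinuousAt (fun t : ℝ => (t - a) ^ β) a :=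
      ContinuousAt.rpow_const (by fun_prop) (Or.inr hβ.le)
    have h2 := this.tendsto
    simp only [sub_self, zero_rpow hβ.ne'] at h2
    exact h2.mono_left nhdsWithin_le_nhds
  have hR : Filter.Tendsto (fun t => (b - t) ^ (-α)) (nhdsWithin a (Ioo a b))
      (nhds ((b - a) ^ (-α))) := by
    have : ContinuousAt (fun t : ℝ => (b - t) ^ (-α)) a :=
      ContinuousAt.rpow_const (by fun_prop) (Or.inl (by linarith))
    exact this.tendsto.mono_left nhdsWithin_le_nhds
  have h1 := hpow.mul (hv.tendsto.mono_left (nhdsWithin_mono a Ioo_subset_Icc_self))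
  have h2 := (tendsto_const_nhds (x := c₁) (f := nhdsWithin a (Ioo a b))).add
    (hpow.mul (hR.const_mul c₂))
  have h3 := tendsto_nhds_unique (h1.congr' ?_) h2
  · simpa using h3.symm
  · filter_upwards [self_mem_nhdsWithin] with t ht
    have ht0 : 0 < t - a := by linarith [ht.1]
    have : (t - a) ^ β * (t - a) ^ (-β) = 1 := by
      rw [← rpow_add ht0, add_neg_cancel, rpow_zero]
    rw [h t ht]
    linear_combination c₁ * this

lemma blowup_both {v : ℝ → ℝ} {c₁ c₂ α β : ℝ} (hab : a < b) (hα : 0 < α) (hβ : 0 < β)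
    (hv : ContinuousOn v (Icc a b))
    (h : ∀ t ∈ Ioo a b, v t = c₁ * (t - a) ^ (-β) + c₂ * (b - t) ^ (-α)) : c₁ = 0 ∧ c₂ = 0 := by
  refine ⟨blowup_left hab hβ (hv a (left_mem_Icc.2 hab.le)) h, ?_⟩
  have hmaps : MapsTo (fun t => a + b - t) (Icc a b) (Icc a b) := fun t ht =>
    ⟨by linarith [ht.2], by linarith [ht.1]⟩
  refine blowup_left (v := fun t => v (a + b - t)) (c₂ := c₁) (α := β) hab hα
    ((hv.comp (by fun_prop) hmaps) a (left_mem_Icc.2 hab.le)) fun t ht => ?_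
  rw [h (a + b - t) ⟨by linarith [ht.2], by linarith [ht.1]⟩]
  rw [show a + b - t - a = b - t by ring, show b - (a + b - t) = t - a by ring, add_comm]

/-- The weights of the linear constraints on corrections. -/
def wt (a b α β : ℝ) : Fin 3 → ℝ → ℝ :=
  ![fun _ => 1, fun t => (t - a) ^ (-β), fun t => (b - t) ^ (-α)]

variable {α β : ℝ}

lemma continuousOn_wt (j : Fin 3) : ContinuousOn (wt a b α β j) (Ioo a b) := by
  fin_cases j
  · exact continuousOn_const
  · exact ContinuousOn.rpow_const (by fun_prop) fun t ht => Or.inl (by linarith [ht.1])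
  · exact ContinuousOn.rpow_const (by fun_prop) fun t ht => Or.inl (by linarith [ht.2])

lemma wt_multiplier (hab : a < b) (hα : 0 < α) (hβ : 0 < β) {w : ℝ → ℝ}
    (hw : ContinuousOn w (Icc a b)) {c : Fin 3 → ℝ}
    (h : ∀ t ∈ Ioo a b, w t = ∑ j, c j * wt a b α β j t) : c 1 = 0 ∧ c 2 = 0 := by
  refine blowup_both (v := fun t => w t - c 0) hab hα hβ (hw.sub continuousOn_const) fun t ht => ?_
  rw [h t ht, Fin.sum_univ_three]
  simp [wt]; ring

lemma wt_independent (hab : a < b) (hα : 0 < α) (hβ : 0 < β) (c : Fin 3 → ℝ)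
    (h : ∀ t ∈ Ioo a b, ∑ j, c j * wt a b α β j t = 0) : c = 0 := by
  obtain ⟨h1, h2⟩ := wt_multiplier (w := fun _ => 0) hab hα hβ continuousOn_const
    fun t ht => (h t ht).symm
  have h0 := h ((a + b) / 2) ⟨by linarith, by linarith⟩
  rw [Fin.sum_univ_three, h1, h2] at h0
  simp [wt] at h0
  ext j
  fin_cases j <;> simp [h0, h1, h2]

lemma exists_abs_wt_mul_bd_le (hα : α ∈ Ioo (0 : ℝ) 1) (hβ : β ∈ Ioo (0 : ℝ) 1) :
    ∃ C, 0 ≤ C ∧ ∀ j, ∀ t ∈ Ioo a b, |wt a b α β j t| * bd a b t ≤ C := by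
  have hpow : ∀ {e s : ℝ}, e ∈ Ioo (0 : ℝ) 1 → 0 < s → s ≤ |b - a| →
      |s ^ (-e)| * s ≤ |b - a| ^ (1 - e) := by
    intro e s he hs hsb
    rw [abs_of_nonneg (rpow_nonneg hs.le _)]
    have : s ^ (-e) * s = s ^ (1 - e) := by
      rw [sub_eq_add_neg, rpow_add hs, rpow_one, mul_comm]
    rw [this]
    exact rpow_le_rpow hs.le hsb (by linarith [he.2])
  refine ⟨|b - a| + |b - a| ^ (1 - β) + |b - a| ^ (1 - α), by positivity, fun j t ht => ?_⟩
  have h1 : bd a b t ≤ t - a := min_le_left _ _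
  have h2 : bd a b t ≤ b - t := min_le_right _ _
  have h3 := le_abs_self (b - a)
  have p1 : 0 ≤ |b - a| ^ (1 - β) := by positivity
  have p2 : 0 ≤ |b - a| ^ (1 - α) := by positivity
  fin_cases j
  · simp only [wt, Fin.zero_eta, Matrix.cons_val_zero, abs_one, one_mul]
    linarith [ht.1, ht.2]
  · have := (mul_le_mul_of_nonneg_left h1 (abs_nonneg ((t - a) ^ (-β)))).trans
      (hpow hβ (by linarith [ht.1]) (by linarith [ht.2]))
    simp only [wt, Fin.mk_one, Matrix.cons_val_one, Matrix.cons_val_zero]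
    linarith [abs_nonneg (b - a)]
  · have := (mul_le_mul_of_nonneg_left h2 (abs_nonneg ((b - t) ^ (-α)))).trans
      (hpow hα (by linarith [ht.2]) (by linarith [ht.1]))
    simp only [wt, Fin.reduceFinMk, Matrix.cons_val]
    linarith [abs_nonneg (b - a)]

end

section
variable {k kp km f φ q r Ψ : ℝ → ℝ} {Cp Cm a b η : ℝ}

lemma cv_add_of_eq_zero {x : ℝ} (h : CvAt k q x) (h0 : cv k q x = 0) :
    cv k (fun t => f t + q t) x = cv k f x := by
  by_cases hf : CvAt k f x
  · rw [cv_add hf h, h0, add_zero]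
  · have hn : ¬ CvAt k (fun t => f t + q t) x := fun h' => hf <| by
      simpa using h'.sub h
    unfold cv
    rw [integral_undef hf, integral_undef hn]

lemma cv_eq_zero_of_not_cvAt {x : ℝ} (h : CvAt k (fun t => f t + q t) x) (hr : CvAt k r x)
    (hf : ¬ CvAt k f x) : cv k (fun t => q t + r t) x = 0 := by
  refine integral_undef fun h' => hf ?_
  refine ((h.add hr).sub h').congr (Filter.Eventually.of_forall fun t => ?_)
  simp only; ring

lemma Correction.integrable (hq : Correction kp km f φ a b η q Ψ) : Integrable q := by
  have h := hq.integrable_div.mul_bdd (g := fun t => max 0 (min (bd a b t) (b - a)))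
    (c := |b - a|)
    (continuous_const.max (continuous_bd.min continuous_const)).aestronglyMeasurable
    (Filter.Eventually.of_forall fun t => by
      rw [norm_eq_abs, abs_of_nonneg (le_max_left _ _)]
      exact max_le (abs_nonneg _) ((min_le_right _ _).trans (le_abs_self _)))
  refine h.congr (Filter.Eventually.of_forall fun t => ?_)
  by_cases ht : q t = 0
  · simp [ht]
  have hm := hq.supp t ht
  have hb := bd_pos.2 hm
  have hb2 : bd a b t ≤ b - a := (min_le_left _ _).trans (by linarith [hm.2])
  simp only [min_eq_left hb2, max_eq_right hb.le]
  field_simp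

lemma Correction.cvAt_of_notMem (hq : Correction kp km f φ a b η q Ψ) {C x : ℝ} (hk : Ker k C)
    (hx : x ∉ Ioo a b) : CvAt k q x :=
  (hk.cvAt_of_div_bd hq.supp hq.integrable_div hx).1

lemma cvAt_testFn {p : ℝ → ℝ} {C : ℝ} (hk : Ker k C) (hp : p ∈ testFn a b) (x : ℝ) : CvAt k p x :=
  cvAt_of_continuous hk.integrable hp.1 (hasCompactSupport_of_mem_testFn hp) x

lemma Correction.add_eq (hq : Correction kp km f φ a b η q Ψ) (hp : Ker kp Cp) (hm : Ker km Cm)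
    (hr : r ∈ testFn a b) (hφ : ∀ x ∈ Icc a b, cv kp f x + cv km f x = φ x)
    (hend : ∀ x ∈ ({a, b} : Set ℝ), cv kp (fun t => q t + r t) x = 0 ∧
      cv km (fun t => q t + r t) x = 0) {x : ℝ} (hx : x ∈ Icc a b) :
    cv kp (fun t => f t + (q t + r t)) x + cv km (fun t => f t + (q t + r t)) x =
      φ x + Ψ x + cv (fun s => kp s + km s) r x := by
  have hpr := cvAt_testFn hp hr x
  have hmr := cvAt_testFn hm hr x
  by_cases hxo : x ∈ Ioo a b
  · have e := hq.eq x hxo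
    rw [cv_add_kernel (hq.cvAt_left x hxo) (hq.cvAt_right x hxo)] at e
    simp only [← add_assoc]
    rw [cv_add (hq.cvAt_left x hxo) hpr, cv_add (hq.cvAt_right x hxo) hmr, ← e,
      cv_add_kernel hpr hmr]
    ring
  · have hxe : x ∈ ({a, b} : Set ℝ) := by
      rcases hx.1.eq_or_lt with h | h
      · exact Or.inl h.symm
      · exact Or.inr (le_antisymm hx.2 (not_lt.1 fun h' => hxo ⟨h, h'⟩))
    have hpq := hq.cvAt_of_notMem hp hxo
    have hmq := hq.cvAt_of_notMem hm hxo
    obtain ⟨h1, h2⟩ := hend x hxe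
    rw [cv_add_of_eq_zero (hpq.add hpr) h1, cv_add_of_eq_zero (hmq.add hmr) h2, hφ x hx,
      ← hq.eq_end x hxe, cv_add_kernel hpq hmq, cv_add_kernel hpr hmr]
    rw [cv_add hpq hpr] at h1
    rw [cv_add hmq hmr] at h2
    linarith

lemma Correction.le_or_oneSided (hq : Correction kp km f φ a b η q Ψ) (hp : Ker kp Cp)
    (hm : Ker km Cm) (hr : r ∈ testFn a b) (hφ : ∀ x ∈ Icc a b, cv kp f x + cv km f x = φ x)
    (hend : ∀ x ∈ ({a, b} : Set ℝ), cv kp (fun t => q t + r t) x = 0 ∧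
      cv km (fun t => q t + r t) x = 0) {M : ℝ} (hMp : ∀ x, |cv kp r x| ≤ M)
    (hMm : ∀ x, |cv km r x| ≤ M) {x : ℝ} (hx : x ∈ Icc a b) :
    |cv kp (fun t => q t + r t) x + cv km (fun t => q t + r t) x| ≤ 2 * M + η ∨
      ∃ v, OneSided kp km f a b q x v := by
  have hM : 0 ≤ M := (abs_nonneg _).trans (hMp x)
  have hη : 0 ≤ η := (abs_nonneg _).trans (hq.bound x)
  by_cases hxo : x ∈ Ioo a b
  swap
  · have hxe : x ∈ ({a, b} : Set ℝ) := by
      rcases hx.1.eq_or_lt with h | h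
      · exact Or.inl h.symm
      · exact Or.inr (le_antisymm hx.2 (not_lt.1 fun h' => hxo ⟨h, h'⟩))
    obtain ⟨h1, h2⟩ := hend x hxe
    left
    rw [h1, h2, add_zero, abs_zero]
    positivity
  have hpr := cvAt_testFn hp hr x
  have hmr := cvAt_testFn hm hr x
  have hpf := hq.cvAt_left x hxo
  have hmf := hq.cvAt_right x hxo
  by_cases h1 : CvAt kp f x <;> by_cases h2 : CvAt km f x
  · left
    have hpq : CvAt kp q x := by simpa using hpf.sub h1
    have hmq : CvAt km q x := by simpa using hmf.sub h2
    have e := hq.eq x hxo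
    rw [cv_add_kernel hpf hmf, cv_add h1 hpq, cv_add h2 hmq, ← hφ x hx] at e
    rw [cv_add hpq hpr, cv_add hmq hmr]
    have e2 : cv kp q x + cv kp r x + (cv km q x + cv km r x) = Ψ x + cv kp r x + cv km r x := by
      linarith
    rw [e2]
    have := abs_add_three (Ψ x) (cv kp r x) (cv km r x)
    linarith [hq.bound x, hMp x, hMm x]
  · exact Or.inr ⟨_, hxo, Or.inr ⟨h1, h2, rfl⟩⟩
  · exact Or.inr ⟨_, hxo, Or.inl ⟨h1, h2, rfl⟩⟩
  · left
    rw [cv_eq_zero_of_not_cvAt hpf hpr h1, cv_eq_zero_of_not_cvAt hmf hmr h2, add_zero, abs_zero]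
    positivity

lemma Correction.abs_sub_le_of_oneSided (hq : Correction kp km f φ a b η q Ψ) (hp : Ker kp Cp)
    (hm : Ker km Cm) (hr : r ∈ testFn a b) {M : ℝ} (hMp : ∀ x, |cv kp r x| ≤ M)
    (hMm : ∀ x, |cv km r x| ≤ M) {x v : ℝ} (h : OneSided kp km f a b q x v) :
    |cv kp (fun t => q t + r t) x + cv km (fun t => q t + r t) x - v| ≤ M := by
  obtain ⟨hxo, h⟩ := h
  have hpr := cvAt_testFn hp hr x
  have hmr := cvAt_testFn hm hr x
  have hpf := hq.cvAt_left x hxo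
  have hmf := hq.cvAt_right x hxo
  rcases h with ⟨h1, h2, rfl⟩ | ⟨h1, h2, rfl⟩
  · have hmq : CvAt km q x := by simpa using hmf.sub h2
    rw [cv_eq_zero_of_not_cvAt hpf hpr h1, cv_add hmq hmr]
    simpa using hMm x
  · have hpq : CvAt kp q x := by simpa using hpf.sub h1
    rw [cv_eq_zero_of_not_cvAt hmf hmr h2, cv_add hpq hpr]
    simpa using hMp x

end

section
variable {a b α β γ : ℝ}

lemma cv_kerL_left {G : ℝ → ℝ} (hG : ∀ t, G t ≠ 0 → t ∈ Ioo a b) : cv (kerL a b α γ) G a = 0 := by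
  unfold cv
  refine integral_eq_zero_of_ae (Filter.Eventually.of_forall fun t => ?_)
  by_cases ht : G t = 0
  · simp [ht]
  · simp [kerL, pw_of_notMem fun h : a - t ∈ Ioo 0 (b - a + 3) => by linarith [h.1, (hG t ht).1]]

lemma cv_kerR_right {G : ℝ → ℝ} (hG : ∀ t, G t ≠ 0 → t ∈ Ioo a b) :
    cv (kerR a b β γ) G b = 0 := by
  unfold cv
  refine integral_eq_zero_of_ae (Filter.Eventually.of_forall fun t => ?_)
  by_cases ht : G t = 0
  · simp [ht]
  · simp [kerR,
      pw_of_notMem fun h : t - b ∈ Ioo 0 (b - a + 3) => by linarith [h.1, (hG t ht).2]]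

lemma cv_kerL_right {G : ℝ → ℝ} (hG : ∀ t, G t ≠ 0 → t ∈ Ioo a b) :
    cv (kerL a b α γ) G b = γ / Gamma (1 - α) * ∫ t, wt a b α β 2 t * G t := by
  unfold cv
  rw [← integral_const_mul]
  congr 1; ext t
  by_cases ht : G t = 0
  · simp [ht]
  · have h := hG t ht
    rw [kerL, pw_of_mem ⟨by linarith [h.2], by linarith [h.1]⟩]
    simp [wt, mul_assoc]

lemma cv_kerR_left {G : ℝ → ℝ} (hG : ∀ t, G t ≠ 0 → t ∈ Ioo a b) :
    cv (kerR a b β γ) G a = -((1 - γ) / Gamma (1 - β)) * ∫ t, wt a b α β 1 t * G t := by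
  unfold cv
  rw [← integral_const_mul]
  congr 1; ext t
  by_cases ht : G t = 0
  · simp [ht]
  · have h := hG t ht
    rw [kerR, pw_of_mem ⟨by linarith [h.1], by linarith [h.2]⟩]
    simp [wt, mul_assoc]

lemma mem_Ioo_of_testFn {p : ℝ → ℝ} (hp : p ∈ testFn a b) (t : ℝ) (ht : p t ≠ 0) : t ∈ Ioo a b :=
  hp.2 (subset_tsupport p ht)

lemma integrable_testFn {p : ℝ → ℝ} (hp : p ∈ testFn a b) : Integrable p :=
  hp.1.integrable_of_hasCompactSupport (hasCompactSupport_of_mem_testFn hp)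

lemma exists_abs_cv_testFn_le {k p : ℝ → ℝ} {C : ℝ} (hk : Ker k C) (hp : p ∈ testFn a b) :
    ∃ M, 0 ≤ M ∧ ∀ x, |cv k p x| ≤ M := by
  obtain ⟨P, hP⟩ := hp.1.bounded_above_of_compact_support (hasCompactSupport_of_mem_testFn hp)
  have hP0 : 0 ≤ P := (norm_nonneg _).trans (hP 0)
  refine ⟨(∫ s, |k s|) * P, mul_nonneg (integral_nonneg fun s => abs_nonneg _) hP0, fun x => ?_⟩
  refine (abs_cv_le k p x).trans ?_
  unfold cv
  rw [← integral_sub_left_eq_self (fun s => |k s|) volume x, ← integral_mul_const]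
  refine integral_mono_of_nonneg (Filter.Eventually.of_forall fun t => by positivity)
    ((hk.integrable.abs.comp_sub_left x).mul_const P) (Filter.Eventually.of_forall fun t => ?_)
  exact mul_le_mul_of_nonneg_left (hP t) (abs_nonneg _)

lemma abs_integral_wt_mul_le {j : Fin 3} {C : ℝ} {q : ℝ → ℝ}
    (hC : ∀ j, ∀ t ∈ Ioo a b, |wt a b α β j t| * bd a b t ≤ C)
    (hq : ∀ t, q t ≠ 0 → t ∈ Ioo a b) (hi : Integrable fun t => q t / bd a b t) :
    Integrable (fun t => wt a b α β j t * q t) ∧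
      |(∫ t, wt a b α β j t * q t)| ≤ C * ∫ t, |q t / bd a b t| := by
  have hle : ∀ t, |wt a b α β j t * q t| ≤ C * |q t / bd a b t| := fun t => by
    by_cases ht : q t = 0
    · simp [ht]
    have hb := bd_pos.2 (hq t ht)
    have h := mul_le_mul_of_nonneg_right (hC j t (hq t ht)) (abs_nonneg (q t / bd a b t))
    refine le_trans (le_of_eq ?_) h
    rw [abs_mul, abs_div, abs_of_pos hb]
    field_simp
  have hmeas : AEStronglyMeasurable (fun t => wt a b α β j t * q t) := by
    have h1 : (fun t => wt a b α β j t * q t) =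
        fun t => (Ioo a b).indicator (fun t => wt a b α β j t * bd a b t) t * (q t / bd a b t) := by
      ext t
      by_cases ht : q t = 0
      · simp [ht]
      have hb := bd_pos.2 (hq t ht)
      rw [indicator_of_mem (hq t ht)]
      field_simp
    rw [h1]
    refine AEStronglyMeasurable.mul ?_ hi.aestronglyMeasurable
    rw [aestronglyMeasurable_indicator_iff measurableSet_Ioo]
    exact ((continuousOn_wt j).mul continuous_bd.continuousOn).aestronglyMeasurable
      measurableSet_Ioo
  refine ⟨(hi.abs.const_mul C).mono' hmeas (Filter.Eventually.of_forall hle), ?_⟩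
  rw [← integral_const_mul]
  exact abs_integral_le_integral_abs.trans (integral_mono_of_nonneg
    (Filter.Eventually.of_forall fun t => abs_nonneg _) (hi.abs.const_mul C)
    (Filter.Eventually.of_forall hle))

end

section
variable {a b α β γ : ℝ}

lemma integral_mul_sub_sum {ι : Type*} [Fintype ι] {w p : ℝ → ℝ} {e : ι → ℝ → ℝ} (c : ι → ℝ)
    (hp : Integrable fun t => w t * p t) (he : ∀ j, Integrable fun t => w t * e j t) :
    ∫ t, w t * (p t - ∑ j, c j * e j t) = (∫ t, w t * p t) - ∑ j, c j * ∫ t, w t * e j t := by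
  have hi : ∀ j ∈ Finset.univ, Integrable fun t => c j * (w t * e j t) :=
    fun j _ => (he j).const_mul (c j)
  have e1 : (fun t => w t * (p t - ∑ j, c j * e j t)) =
      fun t => w t * p t - ∑ j, c j * (w t * e j t) := by
    ext t
    rw [mul_sub, Finset.mul_sum]
    congr 1
    exact Finset.sum_congr rfl fun j _ => by ring
  rw [e1, integral_sub hp (integrable_finsetSum _ hi), integral_finsetSum _ hi]
  simp only [integral_const_mul]

lemma sub_sum_mem_testFn {ι : Type*} [Fintype ι] {p : ℝ → ℝ} {e : ι → ℝ → ℝ} (c : ι → ℝ)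
    (hp : p ∈ testFn a b) (he : ∀ j, e j ∈ testFn a b) :
    (fun t => p t - ∑ j, c j * e j t) ∈ testFn a b := by
  have h := Submodule.sub_mem _ hp
    (Submodule.sum_mem _ fun j (_ : j ∈ Finset.univ) => Submodule.smul_mem _ (c j) (he j))
  convert h using 1
  ext t
  simp [Finset.sum_apply]

lemma abs_sum_mul_le {ι : Type*} [Fintype ι] {c x M : ι → ℝ} {D : ℝ} (hc : ∀ j, |c j| ≤ D)
    (hx : ∀ j, |x j| ≤ M j) : |∑ j, c j * x j| ≤ D * ∑ j, M j := by
  rw [Finset.mul_sum]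
  refine (Finset.abs_sum_le_sum_abs _ _).trans (Finset.sum_le_sum fun j _ => ?_)
  rw [abs_mul]
  exact mul_le_mul (hc j) (hx j) (abs_nonneg _) ((abs_nonneg _).trans (hc j))

lemma integrable_add_testFn {q r : ℝ → ℝ} (hq : Integrable q) (hr : r ∈ testFn a b) :
    Integrable fun t => q t + r t := hq.add (integrable_testFn hr)

/-- A variation `p` satisfying the two endpoint constraints can be corrected so that the perturbed
derivative has a continuous combined Caputo image, uniformly close to the expected one. -/
lemma exists_perturbation (hab : a < b) (hα : α ∈ Ioo (0 : ℝ) 1) (hβ : β ∈ Ioo (0 : ℝ) 1)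
    {f φ p : ℝ → ℝ} {M η : ℝ} (hf : Integrable f) (hf0 : ∀ t, f t ≠ 0 → t ∈ Ioo a b)
    (hφ : Continuous φ) (hfφ : ∀ x ∈ Icc a b, capJ a b α β γ f x = φ x) (hp : p ∈ testFn a b)
    (hp1 : ∫ t, wt a b α β 1 t * p t = 0) (hp2 : ∫ t, wt a b α β 2 t * p t = 0)
    (hML : ∀ x, |cv (kerL a b α γ) p x| ≤ M) (hMR : ∀ x, |cv (kerR a b β γ) p x| ≤ M)
    (hη : 0 < η) :
    ∃ h : ℝ → ℝ, Integrable h ∧ (∀ t, h t ≠ 0 → t ∈ Ioo a b) ∧ ∫ t, |h t - p t| ≤ η ∧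
      ∫ t, h t = ∫ t, p t ∧
      ContinuousOn (capJ a b α β γ fun t => f t + h t) (Icc a b) ∧
      (∀ x ∈ Icc a b, |capJ a b α β γ (fun t => f t + h t) x - φ x - capJ a b α β γ p x| ≤ η) ∧
      (¬ BddAbove ((fun x => |capJ a b α β γ h x|) '' Icc a b) ∨
        ∀ x ∈ Icc a b, |capJ a b α β γ h x| ≤ 2 * M + η) := by
  obtain ⟨CL, hkL⟩ := ker_kerL (γ := γ) hab hα
  obtain ⟨CR, hkR⟩ := ker_kerR (γ := γ) hab hβ
  obtain ⟨C, hC0, hC⟩ := exists_abs_wt_mul_bd_le (a := a) (b := b) hα hβ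
  obtain ⟨e, he, hdual⟩ := exists_dual (a := a) (b := b) (ω := wt a b α β) continuousOn_wt
    (wt_independent hab hα.1 hβ.1)
  choose ML hML0 hMLe using fun j => exists_abs_cv_testFn_le hkL (he j)
  choose MR hMR0 hMRe using fun j => exists_abs_cv_testFn_le hkR (he j)
  have hMe0 : 0 ≤ ∑ j, (ML j + MR j) := Finset.sum_nonneg fun j _ => add_nonneg (hML0 j) (hMR0 j)
  have hA0 : 0 ≤ ∑ j, ∫ t, |e j t| :=
    Finset.sum_nonneg fun j _ => integral_nonneg fun t => abs_nonneg _
  set T : ℝ := 1 + C + C * ∑ j, (∫ t, |e j t|) + 2 * (C * ∑ j, (ML j + MR j)) with hT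
  have hT0 : 0 < T := by positivity
  have hη' : 0 < η / T := by positivity
  have hηT : η / T * T = η := div_mul_cancel₀ _ hT0.ne'
  set ε := η / T
  have hae : ∀ᵐ x, x ∈ Ioo a b → cv (fun s => kerL a b α γ s + kerR a b β γ s) f x = φ x := by
    filter_upwards [cvAt_ae hkL.integrable hf, cvAt_ae hkR.integrable hf] with x h1 h2 hx
    rw [cv_add_kernel h1 h2]
    exact hfφ x (Ioo_subset_Icc_self hx)
  obtain ⟨q, Ψ, hq, hone⟩ := exists_correction hkL hkR (avgDom_kerL hα) (avgDom_kerR hβ) hf hf0 hφ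
    hae hη'
  set c : Fin 3 → ℝ := fun j => ∫ t, wt a b α β j t * q t with hc
  have hcle : ∀ j, |c j| ≤ C * ε := fun j =>
    (abs_integral_wt_mul_le hC hq.supp hq.integrable_div).2.trans
      (mul_le_mul_of_nonneg_left hq.integral_div hC0)
  have hqi : ∀ j, Integrable fun t => wt a b α β j t * q t := fun j =>
    (abs_integral_wt_mul_le hC hq.supp hq.integrable_div).1
  set r : ℝ → ℝ := fun t => p t - ∑ j, c j * e j t with hr
  have hrt : r ∈ testFn a b := sub_sum_mem_testFn c hp he
  have hwt : ∀ i, ∫ t, wt a b α β i t * (q t + r t) = ∫ t, wt a b α β i t * p t := fun i => by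
    simp only [mul_add]
    rw [integral_add (hqi i) (integrable_mul_testFn (continuousOn_wt i) hrt),
      integral_mul_sub_sum c (integrable_mul_testFn (continuousOn_wt i) hp) fun j =>
        integrable_mul_testFn (continuousOn_wt i) (he j)]
    simp [hdual, hc]
  have hcvr : ∀ {k : ℝ → ℝ} {D : ℝ}, Ker k D → ∀ x,
      cv k r x = cv k p x - ∑ j, c j * cv k (e j) x := fun hk x =>
    integral_mul_sub_sum c (cvAt_testFn hk hp x) fun j => cvAt_testFn hk (he j) x
  have hsumL : ∀ x, |∑ j, c j * cv (kerL a b α γ) (e j) x| ≤ C * ε * ∑ j, (ML j + MR j) :=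
    fun x => abs_sum_mul_le hcle fun j => (hMLe j x).trans (by linarith [hMR0 j])
  have hsumR : ∀ x, |∑ j, c j * cv (kerR a b β γ) (e j) x| ≤ C * ε * ∑ j, (ML j + MR j) :=
    fun x => abs_sum_mul_le hcle fun j => (hMRe j x).trans (by linarith [hML0 j])
  have hsmall : ε + 2 * (C * ε * ∑ j, (ML j + MR j)) ≤ η := by
    have : 0 ≤ ε * (C + C * ∑ j, ∫ t, |e j t|) := by positivity
    rw [← hηT, hT]; nlinarith
  have hsmall' : C * ε + C * ε * ∑ j, (∫ t, |e j t|) ≤ η := by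
    have : 0 ≤ ε * (1 + 2 * (C * ∑ j, (ML j + MR j))) := by positivity
    rw [← hηT, hT]; nlinarith
  have hsupp : ∀ t, q t + r t ≠ 0 → t ∈ Ioo a b := fun t ht => by
    by_cases h0 : q t = 0
    · exact mem_Ioo_of_testFn hrt t fun h => ht (by rw [h0, h, add_zero])
    · exact hq.supp t h0
  have hend : ∀ x ∈ ({a, b} : Set ℝ), cv (kerL a b α γ) (fun t => q t + r t) x = 0 ∧
      cv (kerR a b β γ) (fun t => q t + r t) x = 0 := by
    rintro x (rfl | rfl)
    · exact ⟨cv_kerL_left hsupp, by rw [cv_kerR_left (α := α) hsupp, hwt, hp1, mul_zero]⟩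
    · exact ⟨by rw [cv_kerL_right (β := β) hsupp, hwt, hp2, mul_zero], cv_kerR_right hsupp⟩
  have heq : ∀ x ∈ Icc a b, capJ a b α β γ (fun t => f t + (q t + r t)) x =
      φ x + Ψ x + cv (fun s => kerL a b α γ s + kerR a b β γ s) r x := fun x hx =>
    hq.add_eq hkL hkR hrt hfφ hend hx
  have hrL : ∀ x, |cv (kerL a b α γ) r x| ≤ M + C * ε * ∑ j, (ML j + MR j) := fun x => by
    rw [hcvr hkL]
    exact (abs_sub _ _).trans (add_le_add (hML x) (hsumL x))
  have hrR : ∀ x, |cv (kerR a b β γ) r x| ≤ M + C * ε * ∑ j, (ML j + MR j) := fun x => by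
    rw [hcvr hkR]
    exact (abs_sub _ _).trans (add_le_add (hMR x) (hsumR x))
  have hM0 : 0 ≤ M := (abs_nonneg _).trans (hML 0)
  have hprod0 : 0 ≤ C * ε * ∑ j, (ML j + MR j) := by positivity
  refine ⟨fun t => q t + r t, integrable_add_testFn hq.integrable hrt, hsupp, ?_, ?_, ?_, ?_, ?_⟩
  · have hle : ∀ t, |q t + r t - p t| ≤ |q t| + ∑ j, C * ε * |e j t| := fun t => by
      have e1 : q t + r t - p t = q t - ∑ j, c j * e j t := by rw [hr]; ring
      rw [e1]
      refine (abs_sub _ _).trans (add_le_add le_rfl ?_)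
      rw [← Finset.mul_sum]
      exact abs_sum_mul_le hcle fun j => le_rfl
    have hei : ∀ j ∈ Finset.univ, Integrable fun t => C * ε * |e j t| := fun j _ =>
      (integrable_testFn (he j)).abs.const_mul _
    have hq1 : ∫ t, |q t| ≤ C * ε := by
      refine le_trans ?_ (mul_le_mul_of_nonneg_left hq.integral_div hC0)
      rw [← integral_const_mul]
      refine integral_mono hq.integrable.abs (hq.integrable_div.abs.const_mul C) fun t => ?_
      by_cases ht : q t = 0
      · simp [ht]
      have hb := bd_pos.2 (hq.supp t ht)
      have h1 := hC 0 t (hq.supp t ht)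
      simp only [wt, Matrix.cons_val_zero, abs_one, one_mul] at h1
      simp only [abs_div, abs_of_pos hb]
      rw [mul_div_assoc', le_div_iff₀ hb, mul_comm]
      exact mul_le_mul_of_nonneg_right h1 (abs_nonneg _)
    refine (integral_mono_of_nonneg (Filter.Eventually.of_forall fun t => abs_nonneg _)
      (hq.integrable.abs.add (integrable_finsetSum _ hei))
      (Filter.Eventually.of_forall hle)).trans ?_
    simp only [Pi.add_apply]
    rw [integral_add hq.integrable.abs (integrable_finsetSum _ hei), integral_finsetSum _ hei]
    simp only [integral_const_mul]
    rw [← Finset.mul_sum]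
    linarith
  · simpa [wt] using hwt 0
  · refine ContinuousOn.congr ?_ heq
    exact ((hφ.add hq.cont).add (continuous_cv (hkL.add hkR).integrable hrt.1
      (hasCompactSupport_of_mem_testFn hrt))).continuousOn
  · intro x hx
    rw [heq x hx, cv_add_kernel (cvAt_testFn hkL hrt x) (cvAt_testFn hkR hrt x), hcvr hkL, hcvr hkR,
      capJ]
    have h1 := abs_le.1 (hq.bound x)
    have h2 := abs_le.1 (hsumL x)
    have h3 := abs_le.1 (hsumR x)
    rw [abs_le]
    constructor <;> linarith [h1.1, h1.2, h2.1, h2.2, h3.1, h3.2]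
  · rcases hone with hone | hone
    · left
      rintro ⟨B, hB⟩
      obtain ⟨x, v, hxv, hv⟩ := hone (B + (M + C * ε * ∑ j, (ML j + MR j)))
      have h1 := hB ⟨x, Ioo_subset_Icc_self hxv.1, rfl⟩
      have h2 := hq.abs_sub_le_of_oneSided hkL hkR hrt hrL hrR hxv
      have h3 := abs_sub_abs_le_abs_sub v (capJ a b α β γ (fun t => q t + r t) x)
      rw [abs_sub_comm] at h3
      simp only [capJ] at h1 h3
      linarith
    · right
      intro x hx
      rcases hq.le_or_oneSided hkL hkR hrt hfφ hend hrL hrR hx with h | ⟨v, hv⟩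
      · exact h.trans (by linarith)
      · have h2 := hq.abs_sub_le_of_oneSided hkL hkR hrt hrL hrR hv
        have h3 := abs_sub_abs_le_abs_sub (capJ a b α β γ (fun t => q t + r t) x) v
        simp only [capJ] at h3 ⊢
        linarith [hone x v hv]

end

section
variable {a b : ℝ} {N : ℕ} {L : ℝ → (Fin N → ℝ) → (Fin N → ℝ) → ℝ} {u v : ℝ → Fin N → ℝ}

lemma exists_norm_le_of_continuousOn_Icc {E : Type*} [SeminormedAddCommGroup E] {f : ℝ → E}
    (hf : ContinuousOn f (Icc a b)) : ∃ R, ∀ x ∈ Icc a b, ‖f x‖ ≤ R := by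
  obtain ⟨R, hR⟩ := (isCompact_Icc.image_of_continuousOn hf).isBounded.exists_norm_le
  exact ⟨R, fun x hx => hR _ ⟨x, hx, rfl⟩⟩

lemma tendsto_integral_lagrangian (hab : a ≤ b)
    (hL : Continuous fun p : ℝ × (Fin N → ℝ) × (Fin N → ℝ) => L p.1 p.2.1 p.2.2)
    (hu : ContinuousOn u (Icc a b)) (hv : ContinuousOn v (Icc a b))
    {un vn : ℕ → ℝ → Fin N → ℝ} (hun : ∀ n, ContinuousOn (un n) (Icc a b))
    (hvn : ∀ n, ContinuousOn (vn n) (Icc a b)) {ε : ℕ → ℝ}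
    (hε : Filter.Tendsto ε Filter.atTop (nhds 0))
    (hu' : ∀ n, ∀ x ∈ Icc a b, ‖un n x - u x‖ ≤ ε n)
    (hv' : ∀ n, ∀ x ∈ Icc a b, ‖vn n x - v x‖ ≤ ε n) :
    Filter.Tendsto (fun n => ∫ x in a..b, L x (un n x) (vn n x)) Filter.atTop
      (nhds (∫ x in a..b, L x (u x) (v x))) := by
  obtain ⟨Ru, hRu⟩ := exists_norm_le_of_continuousOn_Icc hu
  obtain ⟨Rv, hRv⟩ := exists_norm_le_of_continuousOn_Icc hv
  obtain ⟨E, hE⟩ := hε.bddAbove_range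
  have hEn : ∀ n, ε n ≤ E := fun n => hE ⟨n, rfl⟩
  obtain ⟨B, hB⟩ := ((isCompact_Icc (a := a) (b := b)).prod
    ((isCompact_closedBall (0 : Fin N → ℝ) (Ru + E)).prod
      (isCompact_closedBall (0 : Fin N → ℝ) (Rv + E)))).exists_bound_of_continuousOn hL.continuousOn
  have hsub : uIoc a b ⊆ Icc a b := by
    rw [uIoc_of_le hab]; exact Ioc_subset_Icc_self
  have hnorm : ∀ {w w' : Fin N → ℝ} {R n}, ‖w'‖ ≤ R → ‖w - w'‖ ≤ ε n → ‖w‖ ≤ R + E := by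
    intro w w' R n h1 h2
    have := norm_le_norm_add_norm_sub w' w
    rw [norm_sub_rev] at this
    linarith [hEn n]
  refine intervalIntegral.tendsto_integral_filter_of_dominated_convergence (fun _ => B)
    (Filter.Eventually.of_forall fun n => ?_)
    (Filter.Eventually.of_forall fun n => Filter.Eventually.of_forall fun x hx => ?_)
    intervalIntegrable_const (Filter.Eventually.of_forall fun x hx => ?_)
  · have hc : ContinuousOn (fun x => L x (un n x) (vn n x)) (Icc a b) :=
      hL.comp_continuousOn (continuousOn_id.prodMk ((hun n).prodMk (hvn n)))
    exact (hc.mono hsub).aestronglyMeasurable measurableSet_uIoc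
  · refine hB (x, un n x, vn n x) ⟨hsub hx, ?_, ?_⟩
    · exact mem_closedBall_zero_iff.2 (hnorm (hRu x (hsub hx)) (hu' n x (hsub hx)))
    · exact mem_closedBall_zero_iff.2 (hnorm (hRv x (hsub hx)) (hv' n x (hsub hx)))
  · have h1 : Filter.Tendsto (fun n => un n x) Filter.atTop (nhds (u x)) :=
      tendsto_iff_norm_sub_tendsto_zero.2
        (squeeze_zero (fun n => norm_nonneg _) (fun n => hu' n x (hsub hx)) hε)
    have h2 : Filter.Tendsto (fun n => vn n x) Filter.atTop (nhds (v x)) :=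
      tendsto_iff_norm_sub_tendsto_zero.2
        (squeeze_zero (fun n => norm_nonneg _) (fun n => hv' n x (hsub hx)) hε)
    exact (hL.tendsto (x, u x, v x)).comp (tendsto_const_nhds.prodMk_nhds (h1.prodMk_nhds h2))

lemma pdY_eq_fderiv (hL : ContDiff ℝ 1
      (fun p : ℝ × (Fin N → ℝ) × (Fin N → ℝ) => L p.1 p.2.1 p.2.2))
    (i : Fin N) (x : ℝ) (u v : Fin N → ℝ) :
    pdY L i x u v = fderiv ℝ (fun p : ℝ × (Fin N → ℝ) × (Fin N → ℝ) => L p.1 p.2.1 p.2.2)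
      (x, u, v) (0, Pi.single i 1, 0) := by
  have h1 : HasDerivAt (fun s => ((x, Function.update u i s, v) : ℝ × (Fin N → ℝ) × (Fin N → ℝ)))
      (0, Pi.single i 1, 0) (u i) :=
    (hasDerivAt_const _ _).prodMk ((hasDerivAt_update u i (u i)).prodMk (hasDerivAt_const _ _))
  have h2 := (hL.differentiable one_ne_zero (x, u, v)).hasFDerivAt
  rw [← Function.update_eq_self i u] at h2
  have h3 := (h2.comp_hasDerivAt (u i) (f := fun s => (x, Function.update u i s, v)) h1).deriv
  rw [Function.update_eq_self] at h3
  exact h3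

lemma pdV_eq_fderiv (hL : ContDiff ℝ 1
      (fun p : ℝ × (Fin N → ℝ) × (Fin N → ℝ) => L p.1 p.2.1 p.2.2))
    (i : Fin N) (x : ℝ) (u v : Fin N → ℝ) :
    pdV L i x u v = fderiv ℝ (fun p : ℝ × (Fin N → ℝ) × (Fin N → ℝ) => L p.1 p.2.1 p.2.2)
      (x, u, v) (0, 0, Pi.single i 1) := by
  have h1 : HasDerivAt (fun s => ((x, u, Function.update v i s) : ℝ × (Fin N → ℝ) × (Fin N → ℝ)))
      (0, 0, Pi.single i 1) (v i) :=
    (hasDerivAt_const _ _).prodMk ((hasDerivAt_const _ _).prodMk (hasDerivAt_update v i (v i)))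
  have h2 := (hL.differentiable one_ne_zero (x, u, v)).hasFDerivAt
  rw [← Function.update_eq_self i v] at h2
  have h3 := (h2.comp_hasDerivAt (v i) (f := fun s => (x, u, Function.update v i s)) h1).deriv
  rw [Function.update_eq_self] at h3
  exact h3

lemma hasDerivAt_integral_lagrangian (hab : a ≤ b)
    (hL : ContDiff ℝ 1 (fun p : ℝ × (Fin N → ℝ) × (Fin N → ℝ) => L p.1 p.2.1 p.2.2))
    (hu : ContinuousOn u (Icc a b)) (hv : ContinuousOn v (Icc a b)) (i : Fin N) {P W : ℝ → ℝ}
    (hP : ContinuousOn P (Icc a b)) (hW : ContinuousOn W (Icc a b)) :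
    HasDerivAt (fun s : ℝ => ∫ x in a..b,
        L x (u x + Pi.single i (s * P x)) (v x + Pi.single i (s * W x)))
      (∫ x in a..b, (pdY L i x (u x) (v x) * P x + pdV L i x (u x) (v x) * W x)) 0 := by
  set Lf : ℝ × (Fin N → ℝ) × (Fin N → ℝ) → ℝ := fun p => L p.1 p.2.1 p.2.2 with hLf
  have hsub : uIoc a b ⊆ Icc a b := by
    rw [uIoc_of_le hab]; exact Ioc_subset_Icc_self
  set c : ℝ → ℝ → ℝ × (Fin N → ℝ) × (Fin N → ℝ) := fun s x =>
    (x, u x + Pi.single i (s * P x), v x + Pi.single i (s * W x)) with hc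
  set d : ℝ → ℝ × (Fin N → ℝ) × (Fin N → ℝ) := fun x =>
    (0, Pi.single i (P x), Pi.single i (W x)) with hd
  have hsing : ∀ {X : Type} [TopologicalSpace X] {f : X → ℝ} {S : Set X}, ContinuousOn f S →
      ContinuousOn (fun x => (Pi.single i (f x) : Fin N → ℝ)) S := fun hf =>
    (continuous_single i).comp_continuousOn hf
  have hcc : ContinuousOn (fun q : ℝ × ℝ => c q.1 q.2) (Icc (-1) 1 ×ˢ Icc a b) := by
    have m : MapsTo (fun q : ℝ × ℝ => q.2) (Icc (-1) 1 ×ˢ Icc a b) (Icc a b) := fun q hq => hq.2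
    have s2 : ContinuousOn (fun q : ℝ × ℝ => q.2) (Icc (-1) 1 ×ˢ Icc a b) := by fun_prop
    have s1 : ContinuousOn (fun q : ℝ × ℝ => q.1) (Icc (-1) 1 ×ˢ Icc a b) := by fun_prop
    exact s2.prodMk (((hu.comp s2 m).add (hsing (s1.mul (hP.comp s2 m)))).prodMk
      ((hv.comp s2 m).add (hsing (s1.mul (hW.comp s2 m)))))
  have hdc : ContinuousOn d (Icc a b) := continuousOn_const.prodMk ((hsing hP).prodMk (hsing hW))
  have hF' : ContinuousOn (fun q : ℝ × ℝ => fderiv ℝ Lf (c q.1 q.2) (d q.2))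
      (Icc (-1) 1 ×ˢ Icc a b) :=
    ((hL.continuous_fderiv one_ne_zero).comp_continuousOn hcc).clm_apply
      (hdc.comp (by fun_prop) fun q hq => hq.2)
  obtain ⟨B, hB⟩ := (isCompact_Icc.prod isCompact_Icc).exists_bound_of_continuousOn hF'
  have hslice : ∀ {s : ℝ}, s ∈ Icc (-1 : ℝ) 1 → ContinuousOn (c s) (Icc a b) := fun {s} hs =>
    hcc.comp (f := fun x => (s, x)) (by fun_prop) fun x hx => ⟨hs, hx⟩
  have hmeas : ∀ {s : ℝ}, s ∈ Icc (-1 : ℝ) 1 →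
      ContinuousOn (fun x => L x (u x + Pi.single i (s * P x)) (v x + Pi.single i (s * W x)))
        (Icc a b) := fun hs => hL.continuous.comp_continuousOn (hslice hs)
  have h0 : (0 : ℝ) ∈ Icc (-1 : ℝ) 1 := by norm_num
  have hval : ∫ x in a..b, (pdY L i x (u x) (v x) * P x + pdV L i x (u x) (v x) * W x) =
      ∫ x in a..b, fderiv ℝ Lf (c 0 x) (d x) := by
    refine intervalIntegral.integral_congr fun x _ => ?_
    have e0 : c 0 x = (x, u x, v x) := by simp [hc]
    have e1 : d x = P x • ((0, Pi.single i 1, 0) : ℝ × (Fin N → ℝ) × (Fin N → ℝ)) +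
        W x • ((0, 0, Pi.single i 1) : ℝ × (Fin N → ℝ) × (Fin N → ℝ)) := by
      simp [hd, ← Pi.single_smul]
    rw [e0, e1, map_add, map_smul, map_smul, pdY_eq_fderiv hL, pdV_eq_fderiv hL, smul_eq_mul,
      smul_eq_mul]
    ring
  rw [hval]
  refine (intervalIntegral.hasDerivAt_integral_of_dominated_loc_of_deriv_le (μ := volume)
    (a := a) (b := b) (x₀ := (0 : ℝ)) (s := Ioo (-1) 1) (bound := fun _ => B)
    (F := fun s x => L x (u x + Pi.single i (s * P x)) (v x + Pi.single i (s * W x)))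
    (F' := fun s x => fderiv ℝ Lf (c s x) (d x)) (Ioo_mem_nhds (by norm_num) (by norm_num))
    ?_ ?_ ?_ ?_ ?_ ?_).2
  · filter_upwards [Ioo_mem_nhds (show (-1 : ℝ) < 0 by norm_num) (show (0 : ℝ) < 1 by norm_num)]
      with s hs
    exact ((hmeas (Ioo_subset_Icc_self hs)).mono hsub).aestronglyMeasurable measurableSet_uIoc
  · exact ContinuousOn.intervalIntegrable (by rw [uIcc_of_le hab]; exact hmeas h0)
  · refine ContinuousOn.aestronglyMeasurable ?_ measurableSet_uIoc
    exact (hF'.comp (f := fun x => ((0 : ℝ), x)) (by fun_prop) fun x hx => ⟨h0, hx⟩).mono hsub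
  · exact Filter.Eventually.of_forall fun x hx s hs =>
      hB (s, x) ⟨Ioo_subset_Icc_self hs, hsub hx⟩
  · exact intervalIntegrable_const
  · refine Filter.Eventually.of_forall fun x hx s hs => ?_
    have hs1 : ∀ r : ℝ, HasDerivAt (fun s => (Pi.single i (s * r) : Fin N → ℝ))
        (Pi.single i r) s := fun r => by
      rw [hasDerivAt_pi]
      intro j
      by_cases hj : j = i
      · subst hj
        simpa using (hasDerivAt_id s).mul_const r
      · simpa [Pi.single_apply, hj] using hasDerivAt_const s (0 : ℝ)
    have h1 : HasDerivAt (fun s => c s x) (d x) s :=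
      (hasDerivAt_const _ _).prodMk (((hs1 _).const_add _).prodMk ((hs1 _).const_add _))
    exact (hL.differentiable one_ne_zero (c s x)).hasFDerivAt.comp_hasDerivAt s h1

end

section
variable {a b α β γ : ℝ} {Y F : ℝ → ℝ}

lemma deriv_ae_of_primitive (hF : Integrable F)
    (hY : ∀ x ∈ Icc a b, Y x = Y a + ∫ t in a..x, F t) :
    ∀ᵐ t, t ∈ Ioo a b → deriv Y t = F t := by
  filter_upwards [(hF.intervalIntegrable (a := a) (b := b)).ae_hasDerivAt_integral] with t ht hto
  have hab : a ≤ b := (hto.1.trans hto.2).le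
  rw [uIcc_of_le hab] at ht
  have h1 := (ht (Ioo_subset_Icc_self hto) a (left_mem_Icc.2 hab)).const_add (Y a)
  refine (h1.congr_of_eventuallyEq ?_).deriv
  filter_upwards [Icc_mem_nhds hto.1 hto.2] with x hx using hY x hx

lemma absolutelyContinuousOn_of_primitive (hab : a ≤ b) (hF : Integrable F)
    (hY : ∀ x ∈ Icc a b, Y x = Y a + ∫ t in a..x, F t) : AbsolutelyContinuousOn Y a b := by
  have hae : ∀ᵐ t, t ∈ Ioc a b → F t = deriv Y t := by
    filter_upwards [deriv_ae_of_primitive hF hY, compl_mem_ae_iff.2 (measure_singleton b)]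
      with t ht htb hto
    exact (ht ⟨hto.1, lt_of_le_of_ne hto.2 htb⟩).symm
  refine ⟨(hF.intervalIntegrable (a := a) (b := b)).congr_ae ?_, fun x hx => ?_⟩
  · rw [uIoc_of_le hab]
    exact (ae_restrict_iff' measurableSet_Ioc).2 hae
  · rw [hY x hx]
    congr 1
    refine intervalIntegral.integral_congr_ae ?_
    filter_upwards [hae] with t ht hto
    rw [uIoc_of_le hx.1] at hto
    exact ht ⟨hto.1, hto.2.trans hx.2⟩

lemma combCaputo_of_primitive (hF : Integrable F) (hF0 : ∀ t, F t ≠ 0 → t ∈ Ioo a b)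
    (hY : ∀ x ∈ Icc a b, Y x = Y a + ∫ t in a..x, F t) {x : ℝ} (hx : x ∈ Icc a b) :
    combCaputo a b α β γ Y x = capJ a b α β γ F x := by
  have hae : (Ioo a b).indicator (deriv Y) =ᵐ[volume] F := by
    filter_upwards [deriv_ae_of_primitive hF hY] with t ht
    by_cases hto : t ∈ Ioo a b
    · rw [indicator_of_mem hto, ht hto]
    · rw [indicator_of_notMem hto]
      by_contra h
      exact hto (hF0 t (Ne.symm h))
  rw [combCaputo_eq_capJ hx, capJ, capJ, cv_congr_ae hae, cv_congr_ae hae]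

lemma AbsolutelyContinuousOn.integrable_indicator (hab : a ≤ b)
    (hY : AbsolutelyContinuousOn Y a b) : Integrable ((Ioo a b).indicator (deriv Y)) :=
  (integrable_indicator_iff measurableSet_Ioo).2
    (((intervalIntegrable_iff_integrableOn_Ioc_of_le hab).1 hY.1).mono_set Ioo_subset_Ioc_self)

lemma AbsolutelyContinuousOn.eq_primitive (hY : AbsolutelyContinuousOn Y a b) :
    ∀ x ∈ Icc a b, Y x = Y a + ∫ t in a..x, (Ioo a b).indicator (deriv Y) t := by
  intro x hx
  rw [hY.2 x hx]
  congr 1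
  refine intervalIntegral.integral_congr_ae ?_
  filter_upwards [compl_mem_ae_iff.2 (measure_singleton b)] with t htb hto
  rw [uIoc_of_le hx.1] at hto
  rw [indicator_of_mem]
  exact ⟨hto.1, lt_of_le_of_ne (hto.2.trans hx.2) htb⟩

lemma AbsolutelyContinuousOn.continuousOn (hab : a ≤ b) (hY : AbsolutelyContinuousOn Y a b) :
    ContinuousOn Y (Icc a b) :=
  (continuous_const.add (intervalIntegral.continuous_primitive
    (fun _ _ => (hY.integrable_indicator hab).intervalIntegrable) a)).continuousOn.congr
    hY.eq_primitive

variable {N : ℕ} {y : ℝ → Fin N → ℝ}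

/-- The effect of perturbing the `i`-th component of a trajectory by the primitive of `h`. -/
lemma memD_add_single (hab : a < b) (hy : memD a b α β γ y) (i : Fin N) {h : ℝ → ℝ}
    (hh : Integrable h) (hh0 : ∀ t, h t ≠ 0 → t ∈ Ioo a b)
    (hc : ContinuousOn (capJ a b α β γ fun t =>
      (Ioo a b).indicator (deriv fun t => y t i) t + h t) (Icc a b)) :
    memD a b α β γ (fun x => y x + Pi.single i (∫ t in a..x, h t)) ∧
      ∀ x ∈ Icc a b, combCaputoVec a b α β γ (fun x => y x + Pi.single i (∫ t in a..x, h t)) x =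
        combCaputoVec a b α β γ y x + Pi.single i (capJ a b α β γ (fun t =>
          (Ioo a b).indicator (deriv fun t => y t i) t + h t) x -
            combCaputo a b α β γ (fun t => y t i) x) := by
  set f := (Ioo a b).indicator (deriv fun t => y t i) with hf
  have hfi : Integrable f := (hy.1 i).integrable_indicator hab.le
  have hj : ∀ j, j ≠ i → (fun t => (y t + Pi.single i (∫ t in a..t, h t) : Fin N → ℝ) j) =
      fun t => y t j := fun j hj => by
    ext t; simp [hj]
  have hi : ∀ x ∈ Icc a b, (y x + Pi.single i (∫ t in a..x, h t) : Fin N → ℝ) i =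
      (y a + Pi.single i (∫ t in a..a, h t) : Fin N → ℝ) i + ∫ t in a..x, (f t + h t) := by
    intro x hx
    have e := (hy.1 i).eq_primitive x hx
    rw [intervalIntegral.integral_add hfi.intervalIntegrable hh.intervalIntegrable]
    simp only [Pi.add_apply, Pi.single_eq_same, intervalIntegral.integral_same, add_zero]
    rw [e, add_assoc]
  have hsupp : ∀ t, f t + h t ≠ 0 → t ∈ Ioo a b := fun t ht => by
    by_contra hto
    refine ht ?_
    rw [hf, indicator_of_notMem hto, zero_add]
    by_contra h'
    exact hto (hh0 t h')
  have hcap : ∀ x ∈ Icc a b, combCaputo a b α β γ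
      (fun t => (y t + Pi.single i (∫ t in a..t, h t) : Fin N → ℝ) i) x =
        capJ a b α β γ (fun t => f t + h t) x := fun x hx =>
    combCaputo_of_primitive (hfi.add hh) hsupp hi hx
  refine ⟨⟨fun j => ?_, fun j => ?_⟩, fun x hx => ?_⟩
  · by_cases hji : j = i
    · subst hji
      exact absolutelyContinuousOn_of_primitive hab.le (hfi.add hh) hi
    · rw [hj j hji]; exact hy.1 j
  · by_cases hji : j = i
    · subst hji
      exact hc.congr hcap
    · simp only [hj j hji]; exact hy.2 j
  · ext j
    by_cases hji : j = i
    · subst hji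
      simp only [combCaputoVec, Pi.add_apply, Pi.single_eq_same]
      rw [← hcap x hx]
      simp
    · simp only [combCaputoVec, hj j hji]
      simp [hji, combCaputoVec]

lemma norm1inf_single_le (i : Fin N) {h : ℝ → ℝ} {A B : ℝ}
    (hh : Integrable h) (hh0 : ∀ t, h t ≠ 0 → t ∈ Ioo a b) (hA : ∫ t, |h t| ≤ A) (hB0 : 0 ≤ B)
    (hB : ¬ BddAbove ((fun x => |capJ a b α β γ h x|) '' Icc a b) ∨
      ∀ x ∈ Icc a b, |capJ a b α β γ h x| ≤ B) :
    norm1inf a b α β γ (fun x => (Pi.single i (∫ t in a..x, h t) : Fin N → ℝ)) ≤ A + B := by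
  have hA0 : 0 ≤ A := (integral_nonneg fun t => abs_nonneg _).trans hA
  have hcap : ∀ x ∈ Icc a b, combCaputoVec a b α β γ
      (fun x => (Pi.single i (∫ t in a..x, h t) : Fin N → ℝ)) x =
        Pi.single i (capJ a b α β γ h x) := by
    intro x hx
    ext j
    by_cases hji : j = i
    · subst hji
      simp only [combCaputoVec, Pi.single_eq_same]
      exact combCaputo_of_primitive hh hh0 (by simp) hx
    · simp [combCaputoVec, hji, combCaputo, caputoLeft, caputoRight]
  have himg : (fun x => ‖combCaputoVec a b α β γ
      (fun x => (Pi.single i (∫ t in a..x, h t) : Fin N → ℝ)) x‖) '' Icc a b =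
        (fun x => |capJ a b α β γ h x|) '' Icc a b :=
    image_congr fun x hx => by rw [hcap x hx, Pi.norm_single, norm_eq_abs]
  unfold norm1inf
  rw [himg]
  refine add_le_add (Real.sSup_le ?_ hA0) ?_
  · rintro _ ⟨x, hx, rfl⟩
    simp only [Pi.norm_single, norm_eq_abs]
    refine le_trans ?_ hA
    rw [intervalIntegral.integral_of_le hx.1]
    exact abs_integral_le_integral_abs.trans (setIntegral_le_integral hh.abs
      (Filter.Eventually.of_forall fun t => abs_nonneg _))
  · rcases hB with hB | hB
    · rw [Real.sSup_of_not_bddAbove hB]; exact hB0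
    · refine Real.sSup_le ?_ hB0
      rintro _ ⟨x, hx, rfl⟩
      exact hB x hx

end

section
variable {a b α β γ : ℝ} {N : ℕ} {L : ℝ → (Fin N → ℝ) → (Fin N → ℝ) → ℝ} {y : ℝ → Fin N → ℝ}

lemma continuous_capJ_testFn (hab : a < b) (hα : α ∈ Ioo (0 : ℝ) 1) (hβ : β ∈ Ioo (0 : ℝ) 1)
    {p : ℝ → ℝ} (hp : p ∈ testFn a b) : Continuous (capJ a b α β γ p) := by
  obtain ⟨CL, hkL⟩ := ker_kerL (γ := γ) hab hα
  obtain ⟨CR, hkR⟩ := ker_kerR (γ := γ) hab hβ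
  exact (continuous_cv hkL.integrable hp.1 (hasCompactSupport_of_mem_testFn hp)).add
    (continuous_cv hkR.integrable hp.1 (hasCompactSupport_of_mem_testFn hp))

lemma memD.continuousOn (hab : a ≤ b) (hy : memD a b α β γ y) : ContinuousOn y (Icc a b) :=
  continuousOn_pi.2 fun i => (hy.1 i).continuousOn hab

lemma memD.continuousOn_combCaputoVec (hy : memD a b α β γ y) :
    ContinuousOn (combCaputoVec a b α β γ y) (Icc a b) :=
  continuousOn_pi.2 fun i => hy.2 i

/-- A local minimizer does not exceed the values of the functional along any small variation with
test-function derivative subject to the endpoint constraints. -/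
lemma le_integral_variation (hab : a < b) (hα : α ∈ Ioo (0 : ℝ) 1) (hβ : β ∈ Ioo (0 : ℝ) 1)
    (hL : Continuous fun p : ℝ × (Fin N → ℝ) × (Fin N → ℝ) => L p.1 p.2.1 p.2.2)
    {l : Fin N} (hy : memD a b α β γ y) {δ : ℝ} (hδ : 0 < δ)
    (hmin : ∀ z : ℝ → Fin N → ℝ, memD a b α β γ z → z a = y a → (∀ i, i ≠ l → z b i = y b i) →
      norm1inf a b α β γ (z - y) < δ →
      (∫ x in a..b, L x (y x) (combCaputoVec a b α β γ y x)) ≤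
        ∫ x in a..b, L x (z x) (combCaputoVec a b α β γ z x))
    {i : Fin N} {p : ℝ → ℝ} (hp : p ∈ testFn a b) (hp0 : i ≠ l → ∫ t, p t = 0)
    (hp1 : ∫ t, wt a b α β 1 t * p t = 0) (hp2 : ∫ t, wt a b α β 2 t * p t = 0) {M : ℝ}
    (hML : ∀ x, |cv (kerL a b α γ) p x| ≤ M) (hMR : ∀ x, |cv (kerR a b β γ) p x| ≤ M)
    (hsmall : (∫ t, |p t|) + 2 * M < δ / 2) :
    (∫ x in a..b, L x (y x) (combCaputoVec a b α β γ y x)) ≤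
      ∫ x in a..b, L x (y x + Pi.single i (∫ t in a..x, p t))
        (combCaputoVec a b α β γ y x + Pi.single i (capJ a b α β γ p x)) := by
  set f := (Ioo a b).indicator (deriv fun t => y t i) with hf
  have hfi : Integrable f := (hy.1 i).integrable_indicator hab.le
  have hf0 : ∀ t, f t ≠ 0 → t ∈ Ioo a b := fun t ht => mem_of_indicator_ne_zero ht
  set φ : ℝ → ℝ := IccExtend hab.le ((Icc a b).domRestrict
    fun x => combCaputo a b α β γ (fun t => y t i) x) with hφdef
  have hφ : Continuous φ := continuous_IccExtend_iff.2
    (continuousOn_iff_continuous_domRestrict.1 (hy.2 i))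
  have hφe : ∀ x ∈ Icc a b, φ x = combCaputo a b α β γ (fun t => y t i) x := fun x hx =>
    IccExtend_of_mem hab.le _ hx
  have hfφ : ∀ x ∈ Icc a b, capJ a b α β γ f x = φ x := fun x hx => by
    rw [hφe x hx, combCaputo_eq_capJ hx]
  set η : ℕ → ℝ := fun n => δ / 4 * (1 / ((n : ℝ) + 1)) with hη
  have hη0 : ∀ n, 0 < η n := fun n => by positivity
  have hη1 : ∀ n, η n ≤ δ / 4 := fun n => by
    have : 1 / ((n : ℝ) + 1) ≤ 1 := by
      rw [div_le_one (by positivity)]; linarith [(Nat.cast_nonneg n : (0 : ℝ) ≤ n)]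
    calc δ / 4 * (1 / ((n : ℝ) + 1)) ≤ δ / 4 * 1 := by gcongr
      _ = δ / 4 := mul_one _
  have hηt : Filter.Tendsto η Filter.atTop (nhds 0) := by
    simpa [hη] using (tendsto_one_div_add_atTop_nhds_zero_nat (𝕜 := ℝ)).const_mul (δ / 4)
  choose h hhi hh0 hhp h_int hcont hclose hbd using fun n =>
    exists_perturbation hab hα hβ hfi hf0 hφ hfφ hp hp1 hp2 hML hMR (hη0 n)
  have hpi := integrable_testFn hp
  have hM0 : 0 ≤ M := (abs_nonneg _).trans (hML 0)
  set z : ℕ → ℝ → Fin N → ℝ := fun n x => y x + Pi.single i (∫ t in a..x, h n t) with hz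
  have hzD := fun n => memD_add_single hab hy i (hhi n) (hh0 n) (hcont n)
  have hle : ∀ n, (∫ x in a..b, L x (y x) (combCaputoVec a b α β γ y x)) ≤
      ∫ x in a..b, L x (z n x) (combCaputoVec a b α β γ (z n) x) := fun n => by
    refine hmin (z n) (hzD n).1 (by simp [hz]) (fun j hj => ?_) ?_
    · by_cases hji : j = i
      · subst hji
        have e1 : ∫ t in a..b, h n t = 0 := by
          rw [intervalIntegral.integral_of_le hab.le, integral_Ioc_eq_integral_Ioo,
            setIntegral_eq_integral_of_forall_compl_eq_zero, h_int n, hp0 hj]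
          intro t ht
          by_contra h'
          exact ht (hh0 n t h')
        simp [hz, e1]
      · simp [hz, hji]
    · have e1 : z n - y = fun x => (Pi.single i (∫ t in a..x, h n t) : Fin N → ℝ) := by
        ext x j; simp [hz]
      rw [e1]
      have hA : ∫ t, |h n t| ≤ (∫ t, |p t|) + η n := by
        have h1 : ∫ t, |h n t| ≤ ∫ t, (|p t| + |h n t - p t|) :=
          integral_mono (hhi n).abs (hpi.abs.add ((hhi n).sub hpi).abs) fun t => by
            have := abs_add_le (p t) (h n t - p t)
            rw [add_sub_cancel] at this
            exact this
        refine h1.trans ((integral_add hpi.abs ((hhi n).sub hpi).abs).trans_le ?_)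
        exact add_le_add le_rfl (hhp n)
      have h2 := norm1inf_single_le i (hhi n) (hh0 n) hA
        (by linarith [hη0 n] : (0 : ℝ) ≤ 2 * M + η n) (hbd n)
      linarith [hη1 n]
  refine ge_of_tendsto' (tendsto_integral_lagrangian hab.le hL ?_ ?_
    (fun n => (hzD n).1.continuousOn hab.le) (fun n => (hzD n).1.continuousOn_combCaputoVec) hηt
    (fun n x hx => ?_) (fun n x hx => ?_)) hle
  · exact (hy.continuousOn hab.le).add ((continuous_single i).comp
      (intervalIntegral.continuous_primitive (fun _ _ => hpi.intervalIntegrable) a)).continuousOn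
  · exact hy.continuousOn_combCaputoVec.add ((continuous_single i).comp
      (continuous_capJ_testFn hab hα hβ hp)).continuousOn
  · rw [add_sub_add_left_eq_sub, ← Pi.single_sub, Pi.norm_single, norm_eq_abs,
      ← intervalIntegral.integral_sub (hhi n).intervalIntegrable hpi.intervalIntegrable]
    refine le_trans ?_ (hhp n)
    rw [intervalIntegral.integral_of_le hx.1]
    exact abs_integral_le_integral_abs.trans (setIntegral_le_integral ((hhi n).sub hpi).abs
      (Filter.Eventually.of_forall fun t => abs_nonneg _))
  · rw [(hzD n).2 x hx, add_sub_add_left_eq_sub, ← Pi.single_sub, Pi.norm_single, norm_eq_abs,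
      ← hφe x hx]
    exact hclose n x hx

lemma first_variation (hab : a < b) (hα : α ∈ Ioo (0 : ℝ) 1) (hβ : β ∈ Ioo (0 : ℝ) 1)
    (hL : ContDiff ℝ 1 fun p : ℝ × (Fin N → ℝ) × (Fin N → ℝ) => L p.1 p.2.1 p.2.2)
    {l : Fin N} (hy : memD a b α β γ y) {δ : ℝ} (hδ : 0 < δ)
    (hmin : ∀ z : ℝ → Fin N → ℝ, memD a b α β γ z → z a = y a → (∀ i, i ≠ l → z b i = y b i) →
      norm1inf a b α β γ (z - y) < δ →
      (∫ x in a..b, L x (y x) (combCaputoVec a b α β γ y x)) ≤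
        ∫ x in a..b, L x (z x) (combCaputoVec a b α β γ z x))
    {i : Fin N} {p : ℝ → ℝ} (hp : p ∈ testFn a b) (hp0 : i ≠ l → ∫ t, p t = 0)
    (hp1 : ∫ t, wt a b α β 1 t * p t = 0) (hp2 : ∫ t, wt a b α β 2 t * p t = 0) :
    ∫ x in a..b, (pdY L i x (y x) (combCaputoVec a b α β γ y x) * (∫ t in a..x, p t) +
      pdV L i x (y x) (combCaputoVec a b α β γ y x) * capJ a b α β γ p x) = 0 := by
  obtain ⟨CL, hkL⟩ := ker_kerL (γ := γ) hab hα
  obtain ⟨CR, hkR⟩ := ker_kerR (γ := γ) hab hβ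
  obtain ⟨ML, hML0, hML⟩ := exists_abs_cv_testFn_le hkL hp
  obtain ⟨MR, hMR0, hMR⟩ := exists_abs_cv_testFn_le hkR hp
  have hder := hasDerivAt_integral_lagrangian hab.le hL (hy.continuousOn hab.le)
    hy.continuousOn_combCaputoVec i
    (intervalIntegral.continuous_primitive
      (fun _ _ => (integrable_testFn hp).intervalIntegrable) a).continuousOn
    (continuous_capJ_testFn hab hα hβ (γ := γ) hp).continuousOn
  refine IsLocalMin.hasDerivAt_eq_zero ?_ hder
  have hev : ∀ᶠ s : ℝ in nhds 0, |s| * ((∫ t, |p t|) + 2 * (ML + MR)) < δ / 2 := by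
    have hc : ContinuousAt (fun s : ℝ => |s| * ((∫ t, |p t|) + 2 * (ML + MR))) 0 := by fun_prop
    refine hc.eventually_lt_const ?_
    simp [hδ]
  filter_upwards [hev] with s hs
  have hsp : (fun t => s * p t) ∈ testFn a b := Submodule.smul_mem _ s hp
  have hconst : ∀ w : ℝ → ℝ, ∫ t, w t * p t = 0 → ∫ t, w t * (s * p t) = 0 := fun w hw => by
    simp only [mul_left_comm _ s]
    rw [integral_const_mul, hw, mul_zero]
  have habs : ∀ {k : ℝ → ℝ} {M' : ℝ}, (∀ x, |cv k p x| ≤ M') → M' ≤ ML + MR →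
      ∀ x, |cv k (fun t => s * p t) x| ≤ |s| * (ML + MR) := fun h h' x => by
    rw [cv_const_mul, abs_mul]
    exact mul_le_mul_of_nonneg_left ((h x).trans h') (abs_nonneg s)
  have key := le_integral_variation hab hα hβ hL.continuous hy hδ hmin (i := i) hsp
    (fun hi => by rw [integral_const_mul, hp0 hi, mul_zero]) (hconst _ hp1) (hconst _ hp2)
    (habs hML (by linarith)) (habs hMR (by linarith)) (by
      simp only [abs_mul]
      rw [integral_const_mul]
      linarith)
  simp only [zero_mul, Pi.single_zero, add_zero]
  refine key.trans_eq ?_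
  congr 1; ext x
  rw [intervalIntegral.integral_const_mul, capJ, cv_const_mul, cv_const_mul, ← mul_add, capJ]

end

section
variable {a b α β γ : ℝ}

lemma integral_mul_cv {k G p : ℝ → ℝ} {B : ℝ} (hk : Integrable k) (hp : Integrable p)
    (hG : AEStronglyMeasurable G) (hB : ∀ x, |G x| ≤ B) :
    ∫ x, G x * cv k p x = ∫ t, cv (fun s => k (-s)) G t * p t := by
  have h_int : Integrable (fun z : ℝ × ℝ => G z.1 * (k (z.1 - z.2) * p z.2))
      (volume.prod volume) := by
    have h1 := hp.convolution_integrand (ContinuousLinearMap.mul ℝ ℝ) hk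
    have h2 := h1.bdd_mul (c := B) hG.comp_fst
      (Filter.Eventually.of_forall fun z : ℝ × ℝ => hB z.1)
    refine h2.congr (Filter.Eventually.of_forall fun z => ?_)
    simp only [ContinuousLinearMap.mul_apply']
    ring
  have e1 : ∀ x, G x * cv k p x = ∫ t, G x * (k (x - t) * p t) := fun x =>
    (integral_const_mul _ _).symm
  have e2 : ∀ t, cv (fun s => k (-s)) G t * p t = ∫ x, G x * (k (x - t) * p t) := fun t => by
    unfold cv
    rw [← integral_mul_const]
    congr 1; ext x
    simp only [neg_sub]
    ring
  simp only [e1, e2]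
  exact integral_integral_swap h_int

lemma continuous_cv_of_bounded {k G : ℝ → ℝ} {B : ℝ} {Z : Set ℝ} (hk : Integrable k)
    (hG : AEStronglyMeasurable G) (hB : ∀ x, |G x| ≤ B) (hZ : Z.Countable)
    (hcont : ∀ x ∉ Z, ContinuousAt G x) : Continuous (cv k G) := by
  rw [cv_comm, continuous_iff_continuousAt]
  intro x
  refine continuousAt_of_dominated (bound := fun t => B * |k t|)
    (Filter.Eventually.of_forall fun x => ?_)
    (Filter.Eventually.of_forall fun x => Filter.Eventually.of_forall fun t => ?_)
    (hk.abs.const_mul B) ?_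
  · exact (hG.comp_quasiMeasurePreserving
      (quasiMeasurePreserving_sub_left volume x)).mul hk.aestronglyMeasurable
  · rw [norm_mul]
    exact mul_le_mul_of_nonneg_right (hB _) (abs_nonneg _)
  · have hnull : volume ((fun t => x - t) '' Z) = 0 := (hZ.image _).measure_zero _
    filter_upwards [compl_mem_ae_iff.2 hnull] with t ht
    have hxt : x - t ∉ Z := fun h => ht ⟨x - t, h, by ring⟩
    have h1 : ContinuousAt (fun x => G (x - t)) x :=
      ContinuousAt.comp (g := G) (f := fun x => x - t) (hcont _ hxt) (by fun_prop)
    exact h1.mul continuousAt_const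

section
variable {g : ℝ → ℝ}

lemma aestronglyMeasurable_indicator_Ioo (hg : ContinuousOn g (Icc a b)) :
    AEStronglyMeasurable ((Ioo a b).indicator g) :=
  ((aestronglyMeasurable_indicator_iff measurableSet_Ioo).2
    ((hg.mono Ioo_subset_Icc_self).aestronglyMeasurable measurableSet_Ioo))

lemma exists_abs_indicator_Ioo_le (hg : ContinuousOn g (Icc a b)) :
    ∃ B, ∀ x, |(Ioo a b).indicator g x| ≤ B := by
  obtain ⟨R, hR⟩ := exists_norm_le_of_continuousOn_Icc hg
  refine ⟨max R 0, fun x => ?_⟩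
  by_cases hx : x ∈ Ioo a b
  · rw [indicator_of_mem hx]
    exact (hR x (Ioo_subset_Icc_self hx)).trans (le_max_left _ _)
  · rw [indicator_of_notMem hx, abs_zero]
    exact le_max_right _ _

lemma continuous_cv_indicator (hg : ContinuousOn g (Icc a b)) {k : ℝ → ℝ}
    (hk : Integrable k) :
    Continuous (cv k ((Ioo a b).indicator g)) := by
  obtain ⟨B, hB⟩ := exists_abs_indicator_Ioo_le hg
  refine continuous_cv_of_bounded (Z := {a, b}) hk (aestronglyMeasurable_indicator_Ioo hg) hB
    (by simp) fun x hx => ?_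
  simp only [mem_insert_iff, mem_singleton_iff, not_or] at hx
  by_cases hxo : x ∈ Ioo a b
  · refine ((hg.mono Ioo_subset_Icc_self).continuousAt (Ioo_mem_nhds hxo.1 hxo.2)).congr ?_
    filter_upwards [Ioo_mem_nhds hxo.1 hxo.2] with t ht
    rw [indicator_of_mem ht]
  · have hxc : x ∈ (Icc a b)ᶜ := fun h =>
      hxo ⟨lt_of_le_of_ne h.1 (Ne.symm hx.1), lt_of_le_of_ne h.2 hx.2⟩
    refine (continuousAt_const (y := (0 : ℝ))).congr ?_
    filter_upwards [isClosed_Icc.isOpen_compl.mem_nhds hxc] with t ht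
    rw [indicator_of_notMem fun h => ht (Ioo_subset_Icc_self h)]

lemma integral_mul_cv_eq (hg : ContinuousOn g (Icc a b)) (hab : a ≤ b)
    {k p : ℝ → ℝ} (hk : Integrable k) (hp : Integrable p) :
    ∫ x in a..b, g x * cv k p x =
      ∫ t, cv (fun s => k (-s)) ((Ioo a b).indicator g) t * p t := by
  obtain ⟨B, hB⟩ := exists_abs_indicator_Ioo_le hg
  rw [← integral_mul_cv hk hp (aestronglyMeasurable_indicator_Ioo hg) hB,
    intervalIntegral.integral_of_le hab, integral_Ioc_eq_integral_Ioo,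
    ← integral_indicator measurableSet_Ioo]
  congr 1; ext x
  by_cases hx : x ∈ Ioo a b
  · simp [indicator_of_mem hx]
  · simp [indicator_of_notMem hx]

end

lemma kerL_neg (s : ℝ) : kerL a b α γ (-s) = -kerR a b α (1 - γ) s := by
  unfold kerL kerR; ring

lemma kerR_neg (s : ℝ) : kerR a b β γ (-s) = -kerL a b β (1 - γ) s := by
  unfold kerL kerR; rw [neg_neg]; ring

lemma cv_neg_kernel (k q : ℝ → ℝ) (x : ℝ) : cv (fun s => -k s) q x = -cv k q x := by
  unfold cv
  simp [integral_neg]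

lemma cv_kerL_neg {g : ℝ → ℝ} {t : ℝ} (ht : t ∈ Icc a b) :
    cv (fun s => kerL a b α γ (-s)) ((Ioo a b).indicator g) t = γ * rightRLI b (1 - α) g t := by
  simp only [kerL_neg]
  rw [cv_neg_kernel, cv_kerR ht, rightRLI, show 1 - α - 1 = -α by ring]
  ring

lemma cv_kerR_neg {g : ℝ → ℝ} {t : ℝ} (ht : t ∈ Icc a b) :
    cv (fun s => kerR a b β γ (-s)) ((Ioo a b).indicator g) t =
      -((1 - γ) * leftRLI a (1 - β) g t) := by
  simp only [kerR_neg]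
  rw [cv_neg_kernel, cv_kerL ht, leftRLI, show 1 - β - 1 = -β by ring]

lemma integrable_kerL_zero : Integrable (kerL a b 0 1) := by
  refine Integrable.const_mul ?_ _
  refine (integrable_indicator_iff measurableSet_Ioo).2 ?_
  simp

/-- The function against which the derivative of a variation is integrated in the first
variation of the functional. -/
def momentum (a b α β γ : ℝ) (Q g : ℝ → ℝ) (t : ℝ) : ℝ :=
  (∫ x in t..b, Q x) + γ * rightRLI b (1 - α) g t - (1 - γ) * leftRLI a (1 - β) g t

lemma momentum_eq {Q g : ℝ → ℝ} {t : ℝ} (ht : t ∈ Icc a b) : momentum a b α β γ Q g t =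
    cv (fun s => kerL a b 0 1 (-s)) ((Ioo a b).indicator Q) t +
      cv (fun s => kerL a b α γ (-s)) ((Ioo a b).indicator g) t +
      cv (fun s => kerR a b β γ (-s)) ((Ioo a b).indicator g) t := by
  rw [cv_kerL_neg ht, cv_kerL_neg ht, cv_kerR_neg ht, momentum]
  simp [sub_eq_add_neg, show rightRLI b 1 Q t = ∫ x in t..b, Q x by simp [rightRLI]]

lemma continuousOn_momentum (hab : a < b) (hα : α ∈ Ioo (0 : ℝ) 1) (hβ : β ∈ Ioo (0 : ℝ) 1)
    {Q g : ℝ → ℝ} (hQ : ContinuousOn Q (Icc a b)) (hg : ContinuousOn g (Icc a b)) :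
    ContinuousOn (momentum a b α β γ Q g) (Icc a b) := by
  obtain ⟨CL, hkL⟩ := ker_kerL (γ := γ) hab hα
  obtain ⟨CR, hkR⟩ := ker_kerR (γ := γ) hab hβ
  refine ContinuousOn.congr ?_ fun t ht => momentum_eq ht
  exact (((continuous_cv_indicator hQ integrable_kerL_zero.comp_neg).add
    (continuous_cv_indicator hg hkL.integrable.comp_neg)).add
    (continuous_cv_indicator hg hkR.integrable.comp_neg)).continuousOn

lemma integral_variation_eq (hab : a < b) (hα : α ∈ Ioo (0 : ℝ) 1) (hβ : β ∈ Ioo (0 : ℝ) 1)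
    {Q g p : ℝ → ℝ} (hQ : ContinuousOn Q (Icc a b)) (hg : ContinuousOn g (Icc a b))
    (hp : p ∈ testFn a b) :
    ∫ x in a..b, (Q x * (∫ t in a..x, p t) + g x * capJ a b α β γ p x) =
      ∫ t, momentum a b α β γ Q g t * p t := by
  obtain ⟨CL, hkL⟩ := ker_kerL (γ := γ) hab hα
  obtain ⟨CR, hkR⟩ := ker_kerR (γ := γ) hab hβ
  have hpi := integrable_testFn hp
  have hpc := hasCompactSupport_of_mem_testFn hp
  have hprim : ∀ x ∈ Icc a b, ∫ t in a..x, p t = cv (kerL a b 0 1) p x := fun x hx => by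
    have e : (Ioo a b).indicator p = p := indicator_eq_self.2 fun t => mem_Ioo_of_testFn hp t
    have := cv_kerL (a := a) (b := b) (α := 0) (γ := 1) (F := p) hx
    rw [e] at this
    simp [this]
  have hsplit : ∫ x in a..b, (Q x * (∫ t in a..x, p t) + g x * capJ a b α β γ p x) =
      ∫ x in a..b, (Q x * cv (kerL a b 0 1) p x + g x * cv (kerL a b α γ) p x +
        g x * cv (kerR a b β γ) p x) := by
    refine intervalIntegral.integral_congr fun x hx => ?_
    rw [uIcc_of_le hab.le] at hx
    simp only [hprim x hx, capJ]
    ring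
  have hii : ∀ {G k : ℝ → ℝ}, ContinuousOn G (Icc a b) → Integrable k →
      IntervalIntegrable (fun x => G x * cv k p x) volume a b := fun hG hk =>
    ContinuousOn.intervalIntegrable (by
      rw [uIcc_of_le hab.le]
      exact hG.mul (continuous_cv hk hp.1 hpc).continuousOn)
  have hcp : ∀ {G k : ℝ → ℝ}, ContinuousOn G (Icc a b) → Integrable k →
      Integrable fun t => cv (fun s => k (-s)) ((Ioo a b).indicator G) t * p t := fun hG hk =>
    integrable_mul_testFn (continuous_cv_indicator hG hk.comp_neg).continuousOn hp
  rw [hsplit, intervalIntegral.integral_add ((hii hQ integrable_kerL_zero).add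
      (hii hg hkL.integrable)) (hii hg hkR.integrable),
    intervalIntegral.integral_add (hii hQ integrable_kerL_zero) (hii hg hkL.integrable),
    integral_mul_cv_eq hQ hab.le integrable_kerL_zero hpi,
    integral_mul_cv_eq hg hab.le hkL.integrable hpi,
    integral_mul_cv_eq hg hab.le hkR.integrable hpi,
    ← integral_add (hcp hQ integrable_kerL_zero) (hcp hg hkL.integrable)]
  have hQL := (hcp hQ (integrable_kerL_zero (a := a) (b := b))).add (hcp hg hkL.integrable)
  refine (integral_add hQL (hcp hg hkR.integrable)).symm.trans ?_
  congr 1; ext t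
  simp only [Pi.add_apply]
  by_cases ht : p t = 0
  · simp [ht]
  · rw [momentum_eq (Ioo_subset_Icc_self (mem_Ioo_of_testFn hp t ht))]
    ring

end

section
variable {a b α β γ : ℝ} {N : ℕ} {L : ℝ → (Fin N → ℝ) → (Fin N → ℝ) → ℝ}
  {y : ℝ → Fin N → ℝ}

lemma continuousOn_fderiv_lagrangian
    (hL : ContDiff ℝ 1 (fun p : ℝ × (Fin N → ℝ) × (Fin N → ℝ) => L p.1 p.2.1 p.2.2))
    {u v : ℝ → Fin N → ℝ} {s : Set ℝ} (hu : ContinuousOn u s) (hv : ContinuousOn v s)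
    (w : ℝ × (Fin N → ℝ) × (Fin N → ℝ)) :
    ContinuousOn (fun x => fderiv ℝ (fun p : ℝ × (Fin N → ℝ) × (Fin N → ℝ) =>
      L p.1 p.2.1 p.2.2) (x, u x, v x) w) s :=
  ((hL.continuous_fderiv one_ne_zero).comp_continuousOn
    (continuousOn_id.prodMk (hu.prodMk hv))).clm_apply continuousOn_const

lemma continuousOn_pdY (hab : a ≤ b)
    (hL : ContDiff ℝ 1 (fun p : ℝ × (Fin N → ℝ) × (Fin N → ℝ) => L p.1 p.2.1 p.2.2))
    (hy : memD a b α β γ y) (i : Fin N) :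
    ContinuousOn (fun x => pdY L i x (y x) (combCaputoVec a b α β γ y x)) (Icc a b) := by
  simp only [pdY_eq_fderiv hL]
  exact continuousOn_fderiv_lagrangian hL (hy.continuousOn hab) hy.continuousOn_combCaputoVec _

lemma continuousOn_pdV (hab : a ≤ b)
    (hL : ContDiff ℝ 1 (fun p : ℝ × (Fin N → ℝ) × (Fin N → ℝ) => L p.1 p.2.1 p.2.2))
    (hy : memD a b α β γ y) (i : Fin N) :
    ContinuousOn (fun x => pdV L i x (y x) (combCaputoVec a b α β γ y x)) (Icc a b) := by
  simp only [pdV_eq_fderiv hL]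
  exact continuousOn_fderiv_lagrangian hL (hy.continuousOn hab) hy.continuousOn_combCaputoVec _

/-- If the momentum is orthogonal to every test function annihilated by the two singular weights
and, unless `free` holds, by the constants, then it is constant; the constant vanishes in the
free case. -/
lemma exists_momentum_eq (hab : a < b) (hα : α ∈ Ioo (0 : ℝ) 1) (hβ : β ∈ Ioo (0 : ℝ) 1)
    {Q g : ℝ → ℝ} (hQ : ContinuousOn Q (Icc a b)) (hg : ContinuousOn g (Icc a b)) {free : Prop}
    (h : ∀ p ∈ testFn a b, (¬free → ∫ t, p t = 0) → ∫ t, wt a b α β 1 t * p t = 0 →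
      ∫ t, wt a b α β 2 t * p t = 0 → ∫ t, momentum a b α β γ Q g t * p t = 0) :
    ∃ c, (free → c = 0) ∧ ∀ t ∈ Icc a b, momentum a b α β γ Q g t = c := by
  have hm := continuousOn_momentum (γ := γ) hab hα hβ hQ hg
  obtain ⟨c, hc⟩ := exists_multiplier (continuousOn_wt (a := a) (b := b) (α := α) (β := β))
    (hm.mono Ioo_subset_Icc_self) fun p hp hj =>
      h p hp (fun _ => by simpa [wt] using hj 0) (hj 1) (hj 2)
  obtain ⟨h1, h2⟩ := wt_multiplier hab hα.1 hβ.1 hm hc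
  have hconst : ∀ t ∈ Ioo a b, momentum a b α β γ Q g t = c 0 := fun t ht => by
    rw [hc t ht, Fin.sum_univ_three, h1, h2]
    simp [wt]
  refine ⟨c 0, fun hf => ?_, ?_⟩
  · obtain ⟨e, he, hd⟩ := exists_dual (continuousOn_wt (a := a) (b := b) (α := α) (β := β))
      (wt_independent hab hα.1 hβ.1)
    have h0 := h (e 0) (he 0) (fun hn => absurd hf hn) (by simp [hd]) (by simp [hd])
    have h3 : ∫ t, momentum a b α β γ Q g t * e 0 t = ∫ t, c 0 * (wt a b α β 0 t * e 0 t) := by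
      congr 1; ext t
      by_cases ht : e 0 t = 0
      · simp [ht]
      · rw [hconst t (mem_Ioo_of_testFn (he 0) t ht)]
        simp [wt]
    rw [h3, integral_const_mul, hd] at h0
    simpa using h0
  · have hcl : EqOn (momentum a b α β γ Q g) (fun _ => c 0) (closure (Ioo a b)) := by
      refine EqOn.of_subset_closure (s := Ioo a b) hconst ?_ continuousOn_const subset_closure
        subset_rfl
      rwa [closure_Ioo hab.ne]
    rw [closure_Ioo hab.ne] at hcl
    exact hcl

end

section
variable {a b μ : ℝ}

lemma intervalIntegrable_rpow_mul (hμ : 0 < μ) {u : ℝ → ℝ} (hu : Continuous u) (c d : ℝ) :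
    IntervalIntegrable (fun s => s ^ (μ - 1) * u s) volume c d :=
  (intervalIntegral.intervalIntegrable_rpow' (by linarith)).mul_continuousOn hu.continuousOn

lemma leftRLI_eq (u : ℝ → ℝ) (x : ℝ) :
    leftRLI a μ u x = (1 / Real.Gamma μ) * ∫ s in (0)..(x - a), s ^ (μ - 1) * u (x - s) := by
  have h := intervalIntegral.integral_comp_sub_left (a := a) (b := x)
    (fun s => s ^ (μ - 1) * u (x - s)) x
  simp only [sub_sub_cancel, sub_self] at h
  rw [leftRLI, h]

lemma monotoneOn_leftRLI (hμ : 0 < μ) {u : ℝ → ℝ} (hu : Continuous u) (hm : Monotone u)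
    (h0 : 0 ≤ u a) : MonotoneOn (leftRLI a μ u) (Ici a) := by
  intro x hx x' hx' hxx
  have hii : ∀ z c d, IntervalIntegrable (fun s => s ^ (μ - 1) * u (z - s)) volume c d :=
    fun z c d => intervalIntegrable_rpow_mul hμ (hu.comp (by fun_prop)) c d
  simp only [mem_Ici] at hx hx'
  rw [leftRLI_eq, leftRLI_eq]
  refine mul_le_mul_of_nonneg_left ?_ (one_div_pos.2 (Real.Gamma_pos_of_pos hμ)).le
  calc ∫ s in (0)..(x - a), s ^ (μ - 1) * u (x - s)
      ≤ ∫ s in (0)..(x - a), s ^ (μ - 1) * u (x' - s) :=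
        intervalIntegral.integral_mono_on (by linarith) (hii _ _ _) (hii _ _ _) fun s hs =>
          mul_le_mul_of_nonneg_left (hm (by linarith)) (rpow_nonneg hs.1 _)
    _ ≤ ∫ s in (0)..(x' - a), s ^ (μ - 1) * u (x' - s) := by
        refine intervalIntegral.integral_mono_interval le_rfl (by linarith) (by linarith) ?_
          (hii _ _ _)
        filter_upwards [ae_restrict_mem measurableSet_Ioc] with s hs
        exact mul_nonneg (rpow_nonneg hs.1.le _) (h0.trans (hm (by linarith [hs.2])))

lemma ae_differentiableAt_leftRLI_of_monotone (hμ : 0 < μ) {u : ℝ → ℝ} (hu : Continuous u)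
    (hm : Monotone u) (h0 : 0 ≤ u a) :
    ∀ᵐ x, x ∈ Ioi a → DifferentiableAt ℝ (leftRLI a μ u) x := by
  filter_upwards [(monotoneOn_leftRLI hμ hu hm h0).ae_differentiableWithinAt_of_mem] with x hx hxa
  exact (hx (mem_Ioi.1 hxa).le).differentiableAt (Ici_mem_nhds hxa)

lemma ae_differentiableAt_leftRLI (hμ : 0 < μ) {g u v : ℝ → ℝ} (hu : Continuous u)
    (hv : Continuous v) (hum : Monotone u) (hvm : Monotone v) (hu0 : 0 ≤ u a) (hv0 : 0 ≤ v a)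
    (hg : ∀ x ∈ Icc a b, g x = u x - v x) :
    ∀ᵐ x, x ∈ Ioo a b → DifferentiableAt ℝ (leftRLI a μ g) x := by
  filter_upwards [ae_differentiableAt_leftRLI_of_monotone hμ hu hum hu0,
    ae_differentiableAt_leftRLI_of_monotone hμ hv hvm hv0] with x hxu hxv hx
  refine ((hxu hx.1).sub (hxv hx.1)).congr_of_eventuallyEq ?_
  filter_upwards [Ioo_mem_nhds hx.1 hx.2] with z hz
  have hii : ∀ {w : ℝ → ℝ}, Continuous w →
      IntervalIntegrable (fun t => (z - t) ^ (μ - 1) * w t) volume a z := fun {w} hw => by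
    have h := (intervalIntegrable_rpow_mul hμ (u := fun s => w (z - s)) (hw.comp (by fun_prop))
      (z - a) 0).comp_sub_left z
    simpa using h
  have e : ∫ t in a..z, (z - t) ^ (μ - 1) * g t =
      ∫ t in a..z, ((z - t) ^ (μ - 1) * u t - (z - t) ^ (μ - 1) * v t) := by
    refine intervalIntegral.integral_congr fun t ht => ?_
    rw [uIcc_of_le hz.1.le] at ht
    simp only [hg t ⟨ht.1, ht.2.trans hz.2.le⟩]
    ring
  simp only [Pi.sub_apply, leftRLI]
  rw [e, intervalIntegral.integral_sub (hii hu) (hii hv)]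
  ring

lemma rightRLI_eq_leftRLI_neg (g : ℝ → ℝ) (x : ℝ) :
    rightRLI b μ g x = leftRLI (-b) μ (fun t => g (-t)) (-x) := by
  have h := intervalIntegral.integral_comp_neg (a := -b) (b := -x)
    (fun t => (t - x) ^ (μ - 1) * g t)
  simp only [neg_neg] at h
  rw [rightRLI, leftRLI, ← h]
  simp only [neg_sub_left, add_comm]

lemma AbsolutelyContinuousOn.exists_monotone_sub (hab : a ≤ b) {g : ℝ → ℝ}
    (hg : AbsolutelyContinuousOn g a b) :
    ∃ u v : ℝ → ℝ, Continuous u ∧ Continuous v ∧ Monotone u ∧ Monotone v ∧ 0 ≤ u a ∧ 0 ≤ v a ∧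
      ∀ x ∈ Icc a b, g x = u x - v x := by
  have hi := hg.integrable_indicator hab
  have hmono : ∀ {h : ℝ → ℝ} (c : ℝ), Integrable h → (∀ t, 0 ≤ h t) →
      Continuous (fun x => c + ∫ t in a..x, h t) ∧ Monotone (fun x => c + ∫ t in a..x, h t) := by
    intro h c hh h0
    refine ⟨continuous_const.add (intervalIntegral.continuous_primitive
      (fun _ _ => hh.intervalIntegrable) a), fun x x' hx => ?_⟩
    have := intervalIntegral.integral_interval_sub_left (hh.intervalIntegrable (a := a) (b := x'))
      (hh.intervalIntegrable (a := a) (b := x))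
    have := intervalIntegral.integral_nonneg (μ := volume) hx fun t _ => h0 t
    simp only
    linarith
  obtain ⟨hu, hum⟩ := hmono (max (g a) 0) hi.pos_part fun t => le_max_right _ _
  obtain ⟨hv, hvm⟩ := hmono (max (-g a) 0) hi.neg_part fun t => le_max_right _ _
  refine ⟨_, _, hu, hv, hum, hvm, by simp, by simp, fun x hx => ?_⟩
  have e := intervalIntegral.integral_sub (hi.pos_part.intervalIntegrable (a := a) (b := x))
    (hi.neg_part.intervalIntegrable (a := a) (b := x))
  have hpm : ∀ r : ℝ, max r 0 - max (-r) 0 = r := fun r => by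
    rcases le_total r 0 with h | h
    · rw [max_eq_right h, max_eq_left (by linarith)]; ring
    · rw [max_eq_left h, max_eq_right (by linarith)]; ring
  simp only [hpm] at e
  rw [hg.eq_primitive x hx, e]
  linarith [hpm (g a)]

lemma AbsolutelyContinuousOn.ae_differentiableAt_leftRLI (hab : a ≤ b) (hμ : 0 < μ) {g : ℝ → ℝ}
    (hg : AbsolutelyContinuousOn g a b) :
    ∀ᵐ x, x ∈ Ioo a b → DifferentiableAt ℝ (leftRLI a μ g) x := by
  obtain ⟨u, v, hu, hv, hum, hvm, hu0, hv0, h⟩ := hg.exists_monotone_sub hab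
  exact _root_.ae_differentiableAt_leftRLI hμ hu hv hum hvm hu0 hv0 h

lemma AbsolutelyContinuousOn.ae_differentiableAt_rightRLI (hab : a ≤ b) (hμ : 0 < μ) {g : ℝ → ℝ}
    (hg : AbsolutelyContinuousOn g a b) :
    ∀ᵐ x, x ∈ Ioo a b → DifferentiableAt ℝ (rightRLI b μ g) x := by
  obtain ⟨u, v, hu, hv, hum, hvm, hu0, hv0, h⟩ := hg.exists_monotone_sub hab
  have hleft := _root_.ae_differentiableAt_leftRLI (a := -b) (b := -a) hμ
    (g := fun t => g (-t)) (u := fun t => u b + v b - v (-t)) (v := fun t => u b + v b - u (-t))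
    (by fun_prop) (by fun_prop)
    (fun s t hst => sub_le_sub_left (hvm (neg_le_neg hst)) _)
    (fun s t hst => sub_le_sub_left (hum (neg_le_neg hst)) _)
    (by simpa using hu0.trans (hum hab)) (by simpa using hv0.trans (hvm hab))
    (fun t ht => by rw [h (-t) ⟨by linarith [ht.2], by linarith [ht.1]⟩]; ring)
  filter_upwards [(Measure.measurePreserving_neg volume).quasiMeasurePreserving.ae hleft]
    with x hx hxo
  have hd := hx ⟨neg_lt_neg hxo.2, neg_lt_neg hxo.1⟩
  rw [show rightRLI b μ g = fun x => leftRLI (-b) μ (fun t => g (-t)) (-x) from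
    funext fun x => rightRLI_eq_leftRLI_neg g x]
  exact DifferentiableAt.comp (g := leftRLI (-b) μ fun t => g (-t)) (f := fun x : ℝ => -x) x hd
    (by fun_prop)

/-- A function whose momentum is constant satisfies the Euler–Lagrange equation. -/
lemma add_combRL_eq_zero {α β γ c : ℝ} (hab : a < b) (hα : α ∈ Ioo (0 : ℝ) 1)
    (hβ : β ∈ Ioo (0 : ℝ) 1) {Q g : ℝ → ℝ} (hQ : ContinuousOn Q (Icc a b))
    (hg : AbsolutelyContinuousOn g a b) (hD : ContinuousOn (combRL a b α β γ g) (Icc a b))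
    (hc : ∀ t ∈ Icc a b, momentum a b α β γ Q g t = c) :
    ∀ x ∈ Icc a b, Q x + combRL a b α β γ g x = 0 := by
  have hQD := hQ.add hD
  have hae : (fun x => Q x + combRL a b α β γ g x) =ᵐ[volume.restrict (Ioo a b)] fun _ => 0 := by
    refine (ae_restrict_iff' measurableSet_Ioo).2 ?_
    filter_upwards [hg.ae_differentiableAt_leftRLI hab.le (sub_pos.2 hβ.2),
      hg.ae_differentiableAt_rightRLI hab.le (sub_pos.2 hα.2)] with x hxl hxr hx
    have hnhds : Icc a b ∈ nhds x := Icc_mem_nhds hx.1 hx.2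
    have hdQ : HasDerivAt (fun t => ∫ s in t..b, Q s) (-Q x) x :=
      intervalIntegral.integral_hasDerivAt_left
        (hQ.mono (by rw [uIcc_of_le hx.2.le]; exact Icc_subset_Icc_left hx.1.le)).intervalIntegrable
        (hQ.stronglyMeasurableAtFilter_nhdsWithin measurableSet_Icc x |>.filter_mono
          (by rw [nhdsWithin_eq_nhds.2 hnhds]))
        (hQ.continuousAt hnhds)
    have hd := (hdQ.add ((hxr hx).hasDerivAt.const_mul γ)).sub
      ((hxl hx).hasDerivAt.const_mul (1 - γ))
    have h0 : HasDerivAt (momentum a b α β γ Q g) 0 x :=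
      (hasDerivAt_const x c).congr_of_eventuallyEq (Filter.mem_of_superset hnhds hc)
    have := hd.unique h0
    simp only [combRL, rlLeftD, rlRightD]
    linarith
  have hIoo := Measure.eqOn_open_of_ae_eq hae isOpen_Ioo (hQD.mono Ioo_subset_Icc_self)
    continuousOn_const
  have hcl : EqOn (fun x => Q x + combRL a b α β γ g x) (fun _ => 0) (closure (Ioo a b)) := by
    refine EqOn.of_subset_closure (s := Ioo a b) hIoo ?_ continuousOn_const subset_closure
      subset_rfl
    rwa [closure_Ioo hab.ne]
  rw [closure_Ioo hab.ne] at hcl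
  exact hcl

end

/-- Transversality: if `y ∈ 𝐃` with `y(a) = yᵃ`, `yᵢ(b) = yᵢᵇ` for `i ≠ l` (and `y_l(b)` free)
is a local minimizer of `J`, then `y` satisfies the Euler–Lagrange equations together with the
natural boundary condition
`[γ (ₓI_b^{1-α} ∂L/∂v_l) - (1-γ) (ₐIₓ^{1-β} ∂L/∂v_l)]|_{x=b} = 0`. -/
theorem fractional_transversality_free_endpoint
    (a b α β γ : ℝ) (N : ℕ) (hab : a < b)
    (hα : α ∈ Ioo (0 : ℝ) 1) (hβ : β ∈ Ioo (0 : ℝ) 1) (hγ : γ ∈ Icc (0 : ℝ) 1)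
    (L : ℝ → (Fin N → ℝ) → (Fin N → ℝ) → ℝ)
    (hL : ContDiff ℝ 1 (fun p : ℝ × (Fin N → ℝ) × (Fin N → ℝ) => L p.1 p.2.1 p.2.2))
    (l : Fin N) (ya : Fin N → ℝ) (yb : Fin N → ℝ)
    (y : ℝ → Fin N → ℝ) (hy : memD a b α β γ y)
    (hya : y a = ya) (hyb : ∀ i : Fin N, i ≠ l → y b i = yb i)
    (hmin : ∃ δ > (0 : ℝ), ∀ z : ℝ → Fin N → ℝ, memD a b α β γ z → z a = ya →
      (∀ i : Fin N, i ≠ l → z b i = yb i) →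
      norm1inf a b α β γ (z - y) < δ →
      (∫ x in a..b, L x (y x) (combCaputoVec a b α β γ y x)) ≤
        ∫ x in a..b, L x (z x) (combCaputoVec a b α β γ z x))
    (hreg : ∀ i : Fin N,
      AbsolutelyContinuousOn
        (fun x => pdV L i x (y x) (combCaputoVec a b α β γ y x)) a b ∧
      ContinuousOn
        (fun x => combRL a b α β γ
          (fun t => pdV L i t (y t) (combCaputoVec a b α β γ y t)) x) (Icc a b)) :
    (∀ i : Fin N, ∀ x ∈ Icc a b,
      pdY L i x (y x) (combCaputoVec a b α β γ y x) +
        combRL a b α β γ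
          (fun t => pdV L i t (y t) (combCaputoVec a b α β γ y t)) x = 0) ∧
    γ * rightRLI b (1 - α)
        (fun t => pdV L l t (y t) (combCaputoVec a b α β γ y t)) b -
      (1 - γ) * leftRLI a (1 - β)
        (fun t => pdV L l t (y t) (combCaputoVec a b α β γ y t)) b = 0 := by
  subst hya
  obtain ⟨δ, hδ, hmin⟩ := hmin
  have hQ := continuousOn_pdY hab.le hL hy
  have hg := continuousOn_pdV hab.le hL hy
  have hmin' : ∀ z : ℝ → Fin N → ℝ, memD a b α β γ z → z a = y a →
      (∀ i : Fin N, i ≠ l → z b i = y b i) → norm1inf a b α β γ (z - y) < δ →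
      (∫ x in a..b, L x (y x) (combCaputoVec a b α β γ y x)) ≤
        ∫ x in a..b, L x (z x) (combCaputoVec a b α β γ z x) := fun z hz hza hzb =>
    hmin z hz hza fun i hi => (hzb i hi).trans (hyb i hi)
  have hmom := fun i => exists_momentum_eq (γ := γ) (free := i = l) hab hα hβ (hQ i) (hg i)
    fun p hp hp0 hp1 hp2 => by
      rw [← integral_variation_eq hab hα hβ (hQ i) (hg i) hp]
      exact first_variation hab hα hβ hL hy hδ hmin' hp hp0 hp1 hp2
  refine ⟨fun i => ?_, ?_⟩
  · obtain ⟨c, -, hc⟩ := hmom i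
    exact add_combRL_eq_zero hab hα hβ (hQ i) (hreg i).1 (hreg i).2 hc
  · obtain ⟨c, hc0, hc⟩ := hmom l
    have h := hc b (right_mem_Icc.2 hab.le)
    rw [hc0 rfl, momentum, intervalIntegral.integral_same, zero_add] at h
    exact h
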